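/- arXiv:1509.04551 — 4 statements merged into one kernel-verified Lean document; each statement's English description precedes it below -/
import Mathlib

section
/- Let E be a real normed vector space, U ⊆ E an open set, and κ : U × U → ℝ a C² positive semi-definite kernel. Then for every x ∈ U and every vector v ∈ E, the mixed second derivative of κ on the diagonal is nonnegative: D²κ(x,x)[(v,0),(0,v)] ≥ 0, where D²κ(x,x) denotes the second (Fréchet) derivative of κ at the point (x,x) ∈ U × U. (Positive semi-definiteness part of Theorem 1: the symmetric tensor α_κ associated to a smooth reproducing kernel is positive semi-definite as a bilinear form.) -/
/-!
Applied to the points `x + 2hv`, `x + hv` with weights `1`, `-1`, positive semi-definiteness says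
that the alternating sum of `κ` over the four vertices of a square of side `h` close to the diagonal
is nonnegative. Divided by `h ^ 2`, this sum converges to the mixed second derivative as `h → 0⁺`.
-/

open Filter Set Asymptotics
open scoped Topology

theorem tendsto_add_smul_nhdsGT_zero {E : Type*} [AddCommGroup E] [Module ℝ E]
    [TopologicalSpace E] [ContinuousAdd E] [ContinuousSMul ℝ E] (x u : E) :
    Tendsto (fun h : ℝ ↦ x + h • u) (𝓝[>] 0) (𝓝 x) := by
  have hcont : Continuous fun h : ℝ ↦ x + h • u := by fun_prop
  exact (hcont.tendsto' 0 x (by simp)).mono_left nhdsWithin_le_nhds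

theorem isLittleO_pow_comp_div_const {F : Type*} [Norm F] {g : ℝ → F} {n : ℕ} {δ : ℝ}
    (hg : g =o[𝓝[>] 0] fun h ↦ h ^ n) (hδ : 0 < δ) :
    (fun h ↦ g (h / δ)) =o[𝓝[>] 0] fun h ↦ h ^ n := by
  have hdiv : Tendsto (fun h : ℝ ↦ h / δ) (𝓝[>] 0) (𝓝[>] 0) :=
    tendsto_nhdsWithin_iff.2
      ⟨((continuous_id.div_const δ).tendsto' 0 0 (by simp)).mono_left nhdsWithin_le_nhds,
        eventually_mem_nhdsWithin.mono fun _ hh ↦ div_pos hh hδ⟩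
  have hpow : (fun h : ℝ ↦ (h / δ) ^ n) =O[𝓝[>] 0] fun h ↦ h ^ n := by
    simpa only [div_pow, div_eq_inv_mul _ (δ ^ n)] using
      (isBigO_refl (fun h : ℝ ↦ h ^ n) (𝓝[>] 0)).const_mul_left (δ ^ n)⁻¹
  exact (hg.comp_tendsto hdiv).trans_isBigO hpow

section AlternateSum

variable {E F : Type*} [NormedAddCommGroup E] [NormedSpace ℝ E]
  [NormedAddCommGroup F] [NormedSpace ℝ F]
  {f : E → F} {f' : E → E →L[ℝ] F} {f'' : E →L[ℝ] E →L[ℝ] F} {x : E}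

theorem isLittleO_alternate_sum_square_of_eventually
    (hf : ∀ᶠ y in 𝓝 x, HasFDerivAt f (f' y) y) (hf' : HasFDerivAt f' f'' x) (v w : E) :
    (fun h : ℝ ↦ f (x + h • (2 • v + 2 • w)) + f (x + h • (v + w))
        - f (x + h • (2 • v + w)) - f (x + h • (v + 2 • w)) - h ^ 2 • f'' v w)
      =o[𝓝[>] 0] fun h ↦ h ^ 2 := by
  obtain ⟨ε, hε, hball⟩ := Metric.eventually_nhds_iff_ball.1 hf
  -- Mathlib's expansion needs `x + 4v` and `x + 4w` inside the convex set, so it is applied to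
  -- `δ • v` and `δ • w` for a small `δ`, and the factor `δ` is then absorbed into `h`.
  have hsmall (u : E) : ∀ᶠ δ : ℝ in 𝓝[>] 0, x + (4 : ℝ) • δ • u ∈ Metric.ball x ε := by
    simpa only [smul_comm (4 : ℝ)] using
      (tendsto_add_smul_nhdsGT_zero x ((4 : ℝ) • u)).eventually_mem (Metric.ball_mem_nhds x hε)
  obtain ⟨δ, ⟨hv, hw⟩, hδ : 0 < δ⟩ :=
    (((hsmall v).and (hsmall w)).and self_mem_nhdsWithin).exists
  have hint : interior (Metric.ball x ε) = Metric.ball x ε := Metric.isOpen_ball.interior_eq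
  have hscaled := (convex_ball x ε).isLittleO_alternate_sum_square (hint.symm ▸ hball)
    (Metric.mem_ball_self hε) hf'.hasFDerivWithinAt (hint.symm ▸ hv) (hint.symm ▸ hw)
  refine (isLittleO_pow_comp_div_const hscaled hδ).congr_left fun h ↦ ?_
  have hunscale (u : E) : (h / δ) • δ • u = h • u := by
    rw [smul_smul, div_mul_cancel₀ h hδ.ne']
  have hbilin : (h / δ) ^ 2 • f'' (δ • v) (δ • w) = h ^ 2 • f'' v w := by
    simp only [map_smul, smul_apply, smul_smul]
    congr 1
    field
  simp only [hbilin, smul_comm (2 : ℕ) δ, ← smul_add, hunscale]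

theorem tendsto_alternate_sum_div_square
    (hf : ∀ᶠ y in 𝓝 x, HasFDerivAt f (f' y) y) (hf' : HasFDerivAt f' f'' x) (v w : E) :
    Tendsto (fun h : ℝ ↦ (h ^ 2)⁻¹ • (f (x + h • (2 • v + 2 • w)) + f (x + h • (v + w))
        - f (x + h • (2 • v + w)) - f (x + h • (v + 2 • w))))
      (𝓝[>] 0) (𝓝 (f'' v w)) := by
  rw [← tendsto_sub_nhds_zero_iff]
  refine (isLittleO_alternate_sum_square_of_eventually hf hf' v w).tendsto_inv_smul_nhds_zero.congr'
    ?_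
  filter_upwards [eventually_mem_nhdsWithin] with h hh
  rw [smul_sub, inv_smul_smul₀ (pow_ne_zero 2 (ne_of_gt hh))]

end AlternateSum

theorem add_swap_le_add_diag_of_posSemidef {S : Type*} {U : Set S} {κ : S × S → ℝ}
    (hpsd : ∀ (N : ℕ) (p : Fin N → S), (∀ i, p i ∈ U) →
      ∀ a : Fin N → ℝ, 0 ≤ ∑ i, ∑ j, a i * a j * κ (p i, p j))
    {y z : S} (hy : y ∈ U) (hz : z ∈ U) :
    κ (y, z) + κ (z, y) ≤ κ (y, y) + κ (z, z) := by
  have hsum := hpsd 2 ![y, z] (Fin.forall_fin_two.2 ⟨hy, hz⟩) ![1, -1]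
  simp only [Fin.sum_univ_two, Matrix.cons_val_zero, Matrix.cons_val_one] at hsum
  linarith

theorem kernel_mixed_second_derivative_nonneg_general
    {E : Type*} [NormedAddCommGroup E] [NormedSpace ℝ E] {κ : E × E → ℝ} {x : E}
    (hκ : ∀ᶠ p in 𝓝 (x, x), DifferentiableAt ℝ κ p)
    (hκ' : DifferentiableAt ℝ (fderiv ℝ κ) (x, x))
    (hpair : ∀ᶠ p : E × E in 𝓝 (x, x), κ (p.1, p.2) + κ (p.2, p.1) ≤ κ (p.1, p.1) + κ (p.2, p.2))
    (v : E) :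
    0 ≤ iteratedFDeriv ℝ 2 κ (x, x) ![(v, 0), (0, v)] := by
  rw [iteratedFDeriv_two_apply]
  refine ge_of_tendsto (tendsto_alternate_sum_div_square
    (hκ.mono fun _ hp ↦ hp.hasFDerivAt) hκ'.hasFDerivAt (v, 0) (0, v)) ?_
  have hpoints : Tendsto (fun h : ℝ ↦ (x + h • 2 • v, x + h • v)) (𝓝[>] 0) (𝓝 (x, x)) :=
    (tendsto_add_smul_nhdsGT_zero x (2 • v)).prodMk_nhds (tendsto_add_smul_nhdsGT_zero x v)
  filter_upwards [hpoints.eventually hpair] with h hh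
  refine smul_nonneg (by positivity) ?_
  simp only [Prod.smul_mk, Prod.mk_add_mk, smul_zero, add_zero, zero_add]
  linarith

/-- **Positive semi-definiteness part of Theorem 1.**
If `κ : E × E → ℝ` is a `C²` positive semi-definite kernel on an open set `U` of a real
normed vector space `E`, then for every `x ∈ U` and every `v : E` the mixed second
derivative of `κ` on the diagonal is nonnegative:
`D²κ(x,x)[(v,0),(0,v)] ≥ 0`. -/
theorem kernel_mixed_second_derivative_nonneg
    {E : Type*} [NormedAddCommGroup E] [NormedSpace ℝ E]
    (U : Set E) (hU : IsOpen U) (κ : E × E → ℝ)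
    (hκ : ContDiffOn ℝ 2 κ (U ×ˢ U))
    (hpsd : ∀ (N : ℕ) (p : Fin N → E), (∀ i, p i ∈ U) →
      ∀ a : Fin N → ℝ, 0 ≤ ∑ i, ∑ j, a i * a j * κ (p i, p j))
    (x : E) (hx : x ∈ U) (v : E) :
    0 ≤ iteratedFDeriv ℝ 2 κ (x, x) ![(v, 0), (0, v)] :=
  have hxx : U ×ˢ U ∈ 𝓝 (x, x) := prod_mem_nhds (hU.mem_nhds hx) (hU.mem_nhds hx)
  have hκx : ContDiffAt ℝ 2 κ (x, x) := hκ.contDiffAt hxx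
  kernel_mixed_second_derivative_nonneg_general
    ((hκx.eventually (by simp)).mono fun _ hp ↦ hp.differentiableAt two_ne_zero)
    ((hκx.fderiv_right (m := 1) (by norm_num)).differentiableAt one_ne_zero)
    (mem_of_superset hxx fun _ hp ↦ add_swap_le_add_diag_of_posSemidef hpsd hp.1 hp.2) v
end

section
/- Let U ⊆ ℝⁿ be open and let (φ_j)_{j∈ℕ} be smooth real functions on U such that the series of matrix-valued maps ∑_j ∇φ_j(x) ∇φ_j(x)ᵀ converges, locally uniformly on U together with all its partial derivatives, to a smooth map α : U → Sym(n,ℝ). Assume the map x ↦ rank α(x) is locally constant on U. Then for every smooth vector field X : U → ℝⁿ taking values in the characteristic distribution of α (i.e. α(x)X(x) = 0 for all x ∈ U), the Lie derivative L_Xα vanishes identically on U. (Lie-derivative part of Theorem 1, in the local model in which all of the paper's applications take place.) -/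
open Filter Matrix

/-- The Jacobian matrix of a vector field `X : ℝⁿ → ℝⁿ` at `x`, computed with
derivatives taken within the set `U`: `(DX(x))ᵢⱼ = ∂ⱼXᵢ(x)`. -/
noncomputable def jacobianWithin {n : ℕ} (U : Set (Fin n → ℝ))
    (X : (Fin n → ℝ) → (Fin n → ℝ)) (x : Fin n → ℝ) : Matrix (Fin n) (Fin n) ℝ :=
  Matrix.of fun i j => fderivWithin ℝ (fun y => X y i) U x (Pi.single j 1)

/-- The Lie derivative of a symmetric-matrix-valued map `α` along a vector field `X`:
`(L_Xα)(x) = Dα(x)[X(x)] + (DX(x))ᵀ α(x) + α(x) DX(x)`. -/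
noncomputable def lieDerivMat {n : ℕ} (U : Set (Fin n → ℝ))
    (α : (Fin n → ℝ) → Matrix (Fin n) (Fin n) ℝ)
    (X : (Fin n → ℝ) → (Fin n → ℝ)) (x : Fin n → ℝ) : Matrix (Fin n) (Fin n) ℝ :=
  (Matrix.of fun i j => fderivWithin ℝ (fun y => α y i j) U x (X x))
    + (jacobianWithin U X x)ᵀ * α x + α x * jacobianWithin U X x

/-!
Contracting `∑ₖ dφₖ ⊗ dφₖ = α` twice with `X ∈ ker α` gives `∑ₖ (dφₖ(X))² = 0`, so every `dφₖ(X)`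
vanishes identically on `U`. By Cartan's formula `L_X(dφₖ) = d(dφₖ(X)) = 0`, hence by the Leibniz
rule `L_X(dφₖ ⊗ dφₖ) = 0` for each `k`. Since `L_X` only involves first derivatives of its argument,
it may be applied to the series term by term.
-/

section NormedSpace

open SummationFilter Topology

variable {𝕜 E F : Type*} [NontriviallyNormedField 𝕜] [NormedAddCommGroup E] [NormedSpace 𝕜 E]
  [NormedAddCommGroup F] [NormedSpace 𝕜 F] {s : Set E} {x : E}

lemma differentiableWithinAt_fderivWithin {f : E → F} (hs : UniqueDiffOn 𝕜 s)
    (hf : ContDiffWithinAt 𝕜 2 f s x) (hx : x ∈ s) :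
    DifferentiableWithinAt 𝕜 (fderivWithin 𝕜 f s) s x :=
  (hf.fderivWithin_right (m := 1) hs (by norm_num) hx).differentiableWithinAt one_ne_zero

lemma hasSum_conditional_nat_iff {M : Type*} [AddCommMonoid M] [TopologicalSpace M] {u : ℕ → M}
    {a : M} :
    HasSum u a (conditional ℕ) ↔ Tendsto (fun N => ∑ k ∈ Finset.range N, u k) atTop (𝓝 a) := by
  rw [HasSum, conditional_filter_eq_map_range, tendsto_map'_iff, Function.comp_def]

lemma hasSum_of_tendsto_iteratedFDerivWithin_zero {f : ℕ → E → F} {g : E → F}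
    (h : Tendsto
      (fun N : ℕ => iteratedFDerivWithin 𝕜 0 (fun y => ∑ k ∈ Finset.range N, f k y) s x) atTop
      (𝓝 (iteratedFDerivWithin 𝕜 0 g s x))) :
    HasSum (fun k => f k x) (g x) (conditional ℕ) := by
  rw [tendsto_iff_dist_tendsto_zero] at h
  simp only [dist_iteratedFDerivWithin_zero] at h
  exact hasSum_conditional_nat_iff.2 (tendsto_iff_dist_tendsto_zero.2 h)

lemma hasSum_fderivWithin_of_tendsto_iteratedFDerivWithin_one {f : ℕ → E → F} {g : E → F}
    (hs : UniqueDiffWithinAt 𝕜 s x) (hf : ∀ k, DifferentiableWithinAt 𝕜 (f k) s x)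
    (h : Tendsto
      (fun N : ℕ => iteratedFDerivWithin 𝕜 1 (fun y => ∑ k ∈ Finset.range N, f k y) s x) atTop
      (𝓝 (iteratedFDerivWithin 𝕜 1 g s x))) :
    HasSum (fun k => fderivWithin 𝕜 (f k) s x) (fderivWithin 𝕜 g s x) (conditional ℕ) := by
  rw [tendsto_iff_dist_tendsto_zero] at h
  simp only [dist_iteratedFDerivWithin_one _ _ hs hs,
    fderivWithin_fun_sum hs fun k _ => hf k] at h
  exact hasSum_conditional_nat_iff.2 (tendsto_iff_dist_tendsto_zero.2 h)

end NormedSpace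

lemma dotProduct_eq_zero_of_hasSum_vecMulVec {m ι : Type*} [Fintype m] {L : SummationFilter ι}
    [L.NeBot] [L.LeAtTop] {u : ι → m → ℝ} {A : Matrix m m ℝ} {v : m → ℝ}
    (hA : HasSum (fun k => vecMulVec (u k) (u k)) A L) (hv : A *ᵥ v = 0) (k : ι) :
    u k ⬝ᵥ v = 0 := by
  let evalAt : Matrix m m ℝ →+ ℝ :=
    .mk' (fun B => v ⬝ᵥ B *ᵥ v) fun B C => by rw [add_mulVec, dotProduct_add]
  have hcont : Continuous evalAt :=
    continuous_const.dotProduct (continuous_id.matrix_mulVec continuous_const)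
  have hterm (k : ι) : evalAt (vecMulVec (u k) (u k)) = (u k ⬝ᵥ v) ^ 2 := by
    change v ⬝ᵥ vecMulVec (u k) (u k) *ᵥ v = _
    rw [vecMulVec_mulVec, op_smul_eq_smul, dotProduct_smul, dotProduct_comm v, smul_eq_mul, sq]
  have hlimit : evalAt A = 0 := by
    change v ⬝ᵥ A *ᵥ v = 0
    rw [hv, dotProduct_zero]
  have hsquares : HasSum (fun k => (u k ⬝ᵥ v) ^ 2) 0 L := by
    simpa only [Function.comp_def, hterm, hlimit] using hA.map evalAt hcont
  exact sq_eq_zero_iff.1 <|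
    congrFun ((hasSum_zero_iff_of_nonneg fun k => sq_nonneg (u k ⬝ᵥ v)).1 hsquares) k

section LieDerivative

variable {n : ℕ} {U : Set (Fin n → ℝ)} {X : (Fin n → ℝ) → Fin n → ℝ} {x : Fin n → ℝ}

/-- The coordinate gradient `∇f(x)` of `f`, with derivatives taken within `U`: the components of
the covector `df(x)` in the standard basis. It plays the role of Mathlib's `gradientWithin`, which
is restricted to inner product spaces, whereas `Fin n → ℝ` carries the sup norm. -/
noncomputable def coordGradientWithin (U : Set (Fin n → ℝ)) (f : (Fin n → ℝ) → ℝ)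
    (x : Fin n → ℝ) : Fin n → ℝ :=
  fun i => fderivWithin ℝ f U x (Pi.single i 1)

/-- The matrix `∇f(x) ∇f(x)ᵀ` of the bilinear form `df(x) ⊗ df(x)`, the general term of the series;
derivatives are taken within `U`. -/
noncomputable def gradientDyadWithin (U : Set (Fin n → ℝ)) (f : (Fin n → ℝ) → ℝ)
    (x : Fin n → ℝ) : Matrix (Fin n) (Fin n) ℝ :=
  vecMulVec (coordGradientWithin U f x) (coordGradientWithin U f x)

/-- The Lie derivative `L_X u = Du[X] + (DX)ᵀ u` of a covector field `u`, written in coordinates,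
along the vector field `X`; all derivatives are taken within `U`. -/
noncomputable def lieDerivCovec (U : Set (Fin n → ℝ)) (u X : (Fin n → ℝ) → Fin n → ℝ)
    (x : Fin n → ℝ) : Fin n → ℝ :=
  (fun i => fderivWithin ℝ (fun y => u y i) U x (X x)) + (jacobianWithin U X x)ᵀ *ᵥ u x

lemma coordGradientWithin_dotProduct (f : (Fin n → ℝ) → ℝ) (v : Fin n → ℝ) :
    coordGradientWithin U f x ⬝ᵥ v = fderivWithin ℝ f U x v := by
  conv_rhs => rw [pi_eq_sum_univ' v, map_sum]
  simp only [dotProduct, coordGradientWithin, map_smul, smul_eq_mul, mul_comm]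

lemma coordGradientWithin_eq_zero {f : (Fin n → ℝ) → ℝ} (hf : Set.EqOn f 0 U) (hx : x ∈ U) :
    coordGradientWithin U f x = 0 := by
  ext i
  rw [coordGradientWithin, fderivWithin_congr hf (hf hx), fderivWithin_zero]
  rfl

lemma differentiableWithinAt_coordGradientWithin {f : (Fin n → ℝ) → ℝ} (hU : UniqueDiffOn ℝ U)
    (hf : ContDiffWithinAt ℝ 2 f U x) (hx : x ∈ U) :
    DifferentiableWithinAt ℝ (coordGradientWithin U f) U x :=
  differentiableWithinAt_pi.2 fun _ =>
    (differentiableWithinAt_fderivWithin hU hf hx).clm_apply (differentiableWithinAt_const _)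

lemma differentiableWithinAt_gradientDyadWithin {f : (Fin n → ℝ) → ℝ} (hU : UniqueDiffOn ℝ U)
    (hf : ContDiffWithinAt ℝ 2 f U x) (hx : x ∈ U) (i j : Fin n) :
    DifferentiableWithinAt ℝ (fun y => gradientDyadWithin U f y i j) U x :=
  have hgrad := differentiableWithinAt_pi.1 (differentiableWithinAt_coordGradientWithin hU hf hx)
  (hgrad i).mul (hgrad j)

lemma col_jacobianWithin (hU : UniqueDiffWithinAt ℝ U x) (hX : DifferentiableWithinAt ℝ X U x)
    (i : Fin n) : (jacobianWithin U X x).col i = fderivWithin ℝ X U x (Pi.single i 1) := by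
  ext l
  simp only [col_apply, jacobianWithin, of_apply, fderivWithin_apply hX hU l]
  rfl

/-- Cartan's formula for the exact one-form `df`; in coordinates it is the symmetry of the Hessian
of `f`. -/
lemma lieDerivCovec_coordGradientWithin {f : (Fin n → ℝ) → ℝ} (hU : UniqueDiffWithinAt ℝ U x)
    (hf : DifferentiableWithinAt ℝ (fderivWithin ℝ f U) U x)
    (hsymm : IsSymmSndFDerivWithinAt ℝ f U x) (hX : DifferentiableWithinAt ℝ X U x) :
    lieDerivCovec U (coordGradientWithin U f) X x =
      coordGradientWithin U (fun y => coordGradientWithin U f y ⬝ᵥ X y) x := by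
  ext i
  have hjacobian : ((jacobianWithin U X x)ᵀ *ᵥ coordGradientWithin U f x) i =
      fderivWithin ℝ f U x (fderivWithin ℝ X U x (Pi.single i 1)) := by
    rw [← coordGradientWithin_dotProduct, ← col_jacobianWithin hU hX, dotProduct_comm]
    rfl
  have hhessian : fderivWithin ℝ (fun y => coordGradientWithin U f y i) U x (X x) =
      fderivWithin ℝ (fderivWithin ℝ f U) U x (Pi.single i 1) (X x) := by
    rw [← hsymm.eq]
    simp [coordGradientWithin, fderivWithin_clm_apply hU hf (differentiableWithinAt_const _)]
  simp only [coordGradientWithin_dotProduct]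
  rw [lieDerivCovec, Pi.add_apply, hjacobian, hhessian, coordGradientWithin,
    fderivWithin_clm_apply hU hf hX, add_comm]
  rfl

lemma lieDerivMat_vecMulVec {u v : (Fin n → ℝ) → Fin n → ℝ} (hU : UniqueDiffWithinAt ℝ U x)
    (hu : DifferentiableWithinAt ℝ u U x) (hv : DifferentiableWithinAt ℝ v U x) :
    lieDerivMat U (fun y => vecMulVec (u y) (v y)) X x =
      vecMulVec (lieDerivCovec U u X x) (v x) + vecMulVec (u x) (lieDerivCovec U v X x) := by
  have hleibniz :
      (of fun i j => fderivWithin ℝ (fun y => vecMulVec (u y) (v y) i j) U x (X x)) =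
        vecMulVec (fun i => fderivWithin ℝ (fun y => u y i) U x (X x)) (v x) +
          vecMulVec (u x) (fun j => fderivWithin ℝ (fun y => v y j) U x (X x)) := by
    ext i j
    simp only [of_apply, vecMulVec_apply, Matrix.add_apply]
    rw [fderivWithin_fun_mul hU (differentiableWithinAt_pi.1 hu i)
      (differentiableWithinAt_pi.1 hv j)]
    simp only [_root_.add_apply, _root_.smul_apply, smul_eq_mul]
    ring
  rw [lieDerivMat, hleibniz, mul_vecMulVec, vecMulVec_mul, ← mulVec_transpose, lieDerivCovec,
    lieDerivCovec, add_vecMulVec, vecMulVec_add]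
  abel

lemma lieDerivMat_gradientDyadWithin_eq_zero {f : (Fin n → ℝ) → ℝ}
    (hU : UniqueDiffOn ℝ U) (hf : ContDiffWithinAt ℝ 2 f U x)
    (hX : DifferentiableWithinAt ℝ X U x) (hx : x ∈ U) (hx' : x ∈ closure (interior U))
    (hfX : ∀ y ∈ U, coordGradientWithin U f y ⬝ᵥ X y = 0) :
    lieDerivMat U (gradientDyadWithin U f) X x = 0 := by
  have hcovec : lieDerivCovec U (coordGradientWithin U f) X x = 0 := by
    rw [lieDerivCovec_coordGradientWithin (hU x hx) (differentiableWithinAt_fderivWithin hU hf hx)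
      (hf.isSymmSndFDerivWithinAt (by simp) hU hx' hx) hX, coordGradientWithin_eq_zero hfX hx]
  have hgrad := differentiableWithinAt_coordGradientWithin hU hf hx
  calc lieDerivMat U (gradientDyadWithin U f) X x
    _ = vecMulVec (lieDerivCovec U (coordGradientWithin U f) X x) (coordGradientWithin U f x) +
        vecMulVec (coordGradientWithin U f x) (lieDerivCovec U (coordGradientWithin U f) X x) :=
      lieDerivMat_vecMulVec (hU x hx) hgrad hgrad
    _ = 0 := by rw [hcovec, zero_vecMulVec, vecMulVec_zero, add_zero]

lemma hasSum_lieDerivMat {ι : Type*} {L : SummationFilter ι}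
    {A : ι → (Fin n → ℝ) → Matrix (Fin n) (Fin n) ℝ} {α : (Fin n → ℝ) → Matrix (Fin n) (Fin n) ℝ}
    (hA : HasSum (fun k => A k x) (α x) L)
    (hA' : ∀ i j, HasSum (fun k => fderivWithin ℝ (fun y => A k y i j) U x (X x))
      (fderivWithin ℝ (fun y => α y i j) U x (X x)) L) :
    HasSum (fun k => lieDerivMat U (A k) X x) (lieDerivMat U α X x) L :=
  ((Pi.hasSum.2 fun i => Pi.hasSum.2 (hA' i)).add (hA.mul_left _)).add (hA.mul_right _)

theorem lieDeriv_eq_zero_of_kernel_primitive_general {ι : Type*} {L : SummationFilter ι} [L.NeBot]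
    [L.LeAtTop] (hU : UniqueDiffOn ℝ U) {φ : ι → (Fin n → ℝ) → ℝ}
    (hφ : ∀ k, ContDiffOn ℝ 2 (φ k) U) {α : (Fin n → ℝ) → Matrix (Fin n) (Fin n) ℝ}
    (hα : ∀ y ∈ U, HasSum (fun k => gradientDyadWithin U (φ k) y) (α y) L)
    (hker : ∀ y ∈ U, α y *ᵥ X y = 0) (hx : x ∈ U) (hx' : x ∈ closure (interior U))
    (hX : DifferentiableWithinAt ℝ X U x) {α' : Fin n → Fin n → (Fin n → ℝ) →L[ℝ] ℝ}
    (hα' : ∀ i j, HasFDerivWithinAt (fun y => α y i j) (α' i j) U x)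
    (hsum' : ∀ i j, HasSum
      (fun k => fderivWithin ℝ (fun y => gradientDyadWithin U (φ k) y i j) U x) (α' i j) L) :
    lieDerivMat U α X x = 0 := by
  have hdφX (k : ι) : ∀ y ∈ U, coordGradientWithin U (φ k) y ⬝ᵥ X y = 0 :=
    fun y hy => dotProduct_eq_zero_of_hasSum_vecMulVec (hα y hy) (hker y hy) k
  have hterm (k : ι) : lieDerivMat U (gradientDyadWithin U (φ k)) X x = 0 :=
    lieDerivMat_gradientDyadWithin_eq_zero hU (hφ k x hx) hX hx hx' (hdφX k)
  have hseries : HasSum (fun k => lieDerivMat U (gradientDyadWithin U (φ k)) X x)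
      (lieDerivMat U α X x) L := by
    refine hasSum_lieDerivMat (hα x hx) fun i j => ?_
    rw [(hα' i j).fderivWithin (hU x hx)]
    exact (ContinuousLinearMap.apply ℝ ℝ (X x)).hasSum (hsum' i j)
  simp only [hterm] at hseries
  exact hseries.unique hasSum_zero

end LieDerivative

/-- **Lie-derivative part of Theorem 1 (local model).**
Let `U ⊆ ℝⁿ` be open and `(φ_j)` smooth functions on `U` such that
`∑_j ∇φ_j ∇φ_jᵀ` converges, locally uniformly on `U` together with all of its
derivatives, to a smooth symmetric-matrix-valued map `α` whose rank is locally
constant on `U`.  Then `L_X α = 0` for every smooth vector field `X` taking values in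
the characteristic distribution of `α`. -/
theorem lieDeriv_eq_zero_of_kernel_primitive {n : ℕ}
    (U : Set (Fin n → ℝ)) (hU : IsOpen U)
    (φ : ℕ → (Fin n → ℝ) → ℝ) (hφ : ∀ j, ContDiffOn ℝ (⊤ : ℕ∞) (φ j) U)
    (α : (Fin n → ℝ) → Matrix (Fin n) (Fin n) ℝ)
    (hαsymm : ∀ x ∈ U, (α x)ᵀ = α x)
    (hαsmooth : ∀ i j, ContDiffOn ℝ (⊤ : ℕ∞) (fun x => α x i j) U)
    -- the series `∑_j ∇φ_j ∇φ_jᵀ` converges to `α`, locally uniformly on `U`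
    -- together with all of its derivatives (entrywise)
    (hconv : ∀ (i j : Fin n) (m : ℕ),
      TendstoLocallyUniformlyOn
        (fun (N : ℕ) (x : Fin n → ℝ) => iteratedFDerivWithin ℝ m
          (fun y => ∑ k ∈ Finset.range N,
            fderivWithin ℝ (φ k) U y (Pi.single i 1) *
              fderivWithin ℝ (φ k) U y (Pi.single j 1)) U x)
        (fun x => iteratedFDerivWithin ℝ m (fun y => α y i j) U x) atTop U)
    -- the rank of `α` is locally constant on `U`
    (hrank : ∀ x ∈ U, ∃ V : Set (Fin n → ℝ), IsOpen V ∧ x ∈ V ∧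
      ∀ y ∈ V ∩ U, (α y).rank = (α x).rank) :
    ∀ X : (Fin n → ℝ) → (Fin n → ℝ), ContDiffOn ℝ (⊤ : ℕ∞) X U →
      (∀ x ∈ U, (α x).mulVec (X x) = 0) →
      ∀ x ∈ U, lieDerivMat U α X x = 0 := by
  intro X hX hker x hx
  have hφ₂ (k : ℕ) : ContDiffOn ℝ 2 (φ k) U := (hφ k).of_le (by norm_cast)
  have hsum (y : Fin n → ℝ) (hy : y ∈ U) (i j : Fin n) :
      HasSum (fun k => gradientDyadWithin U (φ k) y i j) (α y i j) (.conditional ℕ) :=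
    hasSum_of_tendsto_iteratedFDerivWithin_zero (f := fun k y => gradientDyadWithin U (φ k) y i j)
      (g := fun y => α y i j) ((hconv i j 0).tendsto_at hy)
  have hsum' (i j : Fin n) :=
    hasSum_fderivWithin_of_tendsto_iteratedFDerivWithin_one (hU.uniqueDiffOn x hx)
      (fun k => differentiableWithinAt_gradientDyadWithin hU.uniqueDiffOn (hφ₂ k x hx) hx i j)
      ((hconv i j 1).tendsto_at hx)
  exact lieDeriv_eq_zero_of_kernel_primitive_general hU.uniqueDiffOn hφ₂
    (fun y hy => Pi.hasSum.2 fun i => Pi.hasSum.2 (hsum y hy i)) hker hx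
    (subset_closure (by rwa [hU.interior_eq])) (hX.differentiableOn (by simp) x hx)
    (fun i j => ((hαsmooth i j).differentiableOn (by simp) x hx).hasFDerivWithinAt) hsum'
end

section
/- Let U ⊆ ℝⁿ be open and let α : U → Sym(n,ℝ) be a C¹ map such that L_Xα = 0 for every C¹ vector field X : U → ℝⁿ taking values in the characteristic distribution of α. Then the characteristic distribution of α is involutive (integrable in the sense of Frobenius): for any two C¹ vector fields X, Y : U → ℝⁿ with α(x)X(x) = 0 and α(x)Y(x) = 0 for all x ∈ U, their Lie bracket [X,Y](x) = DY(x)X(x) − DX(x)Y(x) satisfies α(x)[X,Y](x) = 0 for all x ∈ U. (Involutivity conclusion of Theorem 1.) -/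
open Matrix

/-!
The Lie derivative obeys the Leibniz rule `L_X (α Y) = (L_X α) Y + α [X, Y]`. If `Y` takes values in
the characteristic distribution of `α`, then `α Y` vanishes identically and so does `L_X (α Y)`; the
assumption `L_X α = 0` then leaves `α [X, Y] = 0`. None of this depends on coordinates, so the
argument is carried out for fields of continuous bilinear forms, and a matrix `M` is read as the
form `(v, w) ↦ M v ⬝ᵥ w`.
-/

open VectorField

section NormedSpace

variable {𝕜 E F : Type*} [NontriviallyNormedField 𝕜] [NormedAddCommGroup E] [NormedSpace 𝕜 E]
  [NormedAddCommGroup F] [NormedSpace 𝕜 F] {s : Set E} {x : E}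

/-- The Lie derivative `L_X ω` of an `F`-valued 1-form `ω` along a vector field `X`, with
derivatives taken within `s`. -/
noncomputable def oneFormLieDerivWithin (ω : E → E →L[𝕜] F) (X : E → E) (s : Set E) (x : E) :
    E →L[𝕜] F :=
  fderivWithin 𝕜 ω s x (X x) + ω x ∘L fderivWithin 𝕜 X s x

/-- The Lie derivative `L_X α` of a field `α` of `F`-valued bilinear forms along a vector field `X`,
with derivatives taken within `s`. -/
noncomputable def bilinLieDerivWithin (α : E → E →L[𝕜] E →L[𝕜] F) (X : E → E) (s : Set E)
    (x : E) : E →L[𝕜] E →L[𝕜] F :=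
  fderivWithin 𝕜 α s x (X x) + α x ∘L fderivWithin 𝕜 X s x
    + (α x).bilinearComp (.id 𝕜 E) (fderivWithin 𝕜 X s x)

theorem oneFormLieDerivWithin_eq_zero_of_eqOn_zero {ω : E → E →L[𝕜] F} (X : E → E)
    (hω : s.EqOn ω 0) (hx : x ∈ s) : oneFormLieDerivWithin ω X s x = 0 := by
  have hDω : fderivWithin 𝕜 ω s x = 0 := by
    rw [fderivWithin_congr hω (hω hx), fderivWithin_zero, Pi.zero_apply]
  simp [oneFormLieDerivWithin, hDω, hω hx]

theorem oneFormLieDerivWithin_clm_apply {α : E → E →L[𝕜] E →L[𝕜] F} (X : E → E) {Y : E → E}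
    (hs : UniqueDiffWithinAt 𝕜 s x) (hα : DifferentiableWithinAt 𝕜 α s x)
    (hY : DifferentiableWithinAt 𝕜 Y s x) :
    oneFormLieDerivWithin (fun y => α y (Y y)) X s x =
      bilinLieDerivWithin α X s x (Y x) + α x (lieBracketWithin 𝕜 X Y s x) := by
  ext w
  simp only [oneFormLieDerivWithin, bilinLieDerivWithin, lieBracketWithin,
    fderivWithin_clm_apply hs hα hY, _root_.add_apply, ContinuousLinearMap.comp_apply,
    ContinuousLinearMap.flip_apply, ContinuousLinearMap.bilinearComp_apply,
    ContinuousLinearMap.id_apply, map_sub, _root_.sub_apply]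
  abel

theorem apply_lieBracketWithin_eq_zero {α : E → E →L[𝕜] E →L[𝕜] F} {X Y : E → E}
    (hs : UniqueDiffWithinAt 𝕜 s x) (hα : DifferentiableWithinAt 𝕜 α s x)
    (hY : DifferentiableWithinAt 𝕜 Y s x) (hLX : bilinLieDerivWithin α X s x = 0)
    (hαY : ∀ y ∈ s, α y (Y y) = 0) (hx : x ∈ s) :
    α x (lieBracketWithin 𝕜 X Y s x) = 0 :=
  calc α x (lieBracketWithin 𝕜 X Y s x)
    _ = bilinLieDerivWithin α X s x (Y x) + α x (lieBracketWithin 𝕜 X Y s x) := by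
      rw [hLX, _root_.zero_apply, zero_add]
    _ = oneFormLieDerivWithin (fun y => α y (Y y)) X s x :=
      (oneFormLieDerivWithin_clm_apply X hs hα hY).symm
    _ = 0 := oneFormLieDerivWithin_eq_zero_of_eqOn_zero X hαY hx

theorem characteristic_distribution_involutive_general {α : E → E →L[𝕜] E →L[𝕜] F}
    (hs : UniqueDiffOn 𝕜 s) (hα : DifferentiableOn 𝕜 α s)
    (hLie : ∀ X : E → E, ContDiffOn 𝕜 1 X s → (∀ x ∈ s, α x (X x) = 0) →
      ∀ x ∈ s, bilinLieDerivWithin α X s x = 0)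
    {X Y : E → E} (hX : ContDiffOn 𝕜 1 X s) (hY : DifferentiableOn 𝕜 Y s)
    (hαX : ∀ x ∈ s, α x (X x) = 0) (hαY : ∀ x ∈ s, α x (Y x) = 0) :
    ∀ x ∈ s, α x (lieBracketWithin 𝕜 X Y s x) = 0 := fun x hx =>
  apply_lieBracketWithin_eq_zero (hs x hx) (hα x hx) (hY x hx) (hLie X hX hαX x hx) hαY hx

end NormedSpace

section MatrixFields

variable {𝕜 ι κ E F : Type*} [NontriviallyNormedField 𝕜] [CompleteSpace 𝕜] [Finite ι] [Finite κ]
  [NormedAddCommGroup E] [NormedSpace 𝕜 E] [NormedAddCommGroup F] [NormedSpace 𝕜 F]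
  {s : Set E} {x : E} {α : E → Matrix ι κ 𝕜}

theorem hasFDerivWithinAt_linearMap_matrix (L : Matrix ι κ 𝕜 →ₗ[𝕜] F)
    (hα : ∀ i j, DifferentiableWithinAt 𝕜 (fun y => α y i j) s x) :
    HasFDerivWithinAt (fun y => L (α y))
      ((L ∘ₗ (ofLinearEquiv 𝕜).toLinearMap).toContinuousLinearMap ∘L
        .pi fun i => .pi fun j => fderivWithin 𝕜 (fun y => α y i j) s x) s x := by
  have := Fintype.ofFinite ι
  have := Fintype.ofFinite κ
  let L' : (ι → κ → 𝕜) →L[𝕜] F := (L ∘ₗ (ofLinearEquiv 𝕜).toLinearMap).toContinuousLinearMap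
  have h_entries : HasFDerivWithinAt (fun y => of.symm (α y))
      (.pi fun i => .pi fun j => fderivWithin 𝕜 (fun y => α y i j) s x) s x :=
    hasFDerivWithinAt_pi.2 fun i => hasFDerivWithinAt_pi.2 fun j => (hα i j).hasFDerivWithinAt
  exact L'.hasFDerivAt.comp_hasFDerivWithinAt x h_entries

theorem fderivWithin_linearMap_matrix_apply (L : Matrix ι κ 𝕜 →ₗ[𝕜] F)
    (hs : UniqueDiffWithinAt 𝕜 s x)
    (hα : ∀ i j, DifferentiableWithinAt 𝕜 (fun y => α y i j) s x) (u : E) :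
    fderivWithin 𝕜 (fun y => L (α y)) s x u =
      L (of fun i j => fderivWithin 𝕜 (fun y => α y i j) s x u) := by
  rw [(hasFDerivWithinAt_linearMap_matrix L hα).fderivWithin hs]
  rfl

end MatrixFields

section MatrixBilin

variable {𝕜 ι κ E : Type*} [NontriviallyNormedField 𝕜] [CompleteSpace 𝕜] [Fintype ι] [Fintype κ]
  [NormedAddCommGroup E] [NormedSpace 𝕜 E] {s : Set E} {x : E} {α : E → Matrix ι κ 𝕜}

/-- The continuous bilinear form `(v, w) ↦ M v ⬝ᵥ w` of a matrix `M`, as a linear function of `M`.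
The vector multiplied by `M` comes first, so that `ker M` is the kernel of the curried form. -/
noncomputable def matrixBilin :
    Matrix ι κ 𝕜 →ₗ[𝕜] (κ → 𝕜) →L[𝕜] (ι → 𝕜) →L[𝕜] 𝕜 where
  toFun M := (dotProductBilin 𝕜 𝕜 ∘ₗ M.mulVecLin).toContinuousBilinearMap
  map_add' M N := by ext; simp
  map_smul' c M := by ext; simp

theorem matrixBilin_apply (M : Matrix ι κ 𝕜) (v : κ → 𝕜) (w : ι → 𝕜) :
    matrixBilin M v w = M *ᵥ v ⬝ᵥ w :=
  rfl

theorem matrixBilin_apply_eq_zero_iff (M : Matrix ι κ 𝕜) (v : κ → 𝕜) :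
    matrixBilin M v = 0 ↔ M *ᵥ v = 0 := by
  simp only [ContinuousLinearMap.ext_iff, matrixBilin_apply, _root_.zero_apply,
    dotProduct_eq_zero_iff]

-- `F` is given explicitly here and below: the unifier does not identify the algebraic and the
-- normed module structures on the space of forms while `F` is a metavariable.
theorem differentiableOn_matrixBilin (hα : ∀ i j, DifferentiableOn 𝕜 (fun y => α y i j) s) :
    DifferentiableOn 𝕜 (fun y => matrixBilin (α y)) s := fun y hy =>
  (hasFDerivWithinAt_linearMap_matrix (F := (κ → 𝕜) →L[𝕜] (ι → 𝕜) →L[𝕜] 𝕜) matrixBilin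
    fun i j => hα i j y hy).differentiableWithinAt

theorem fderivWithin_matrixBilin_apply (hs : UniqueDiffWithinAt 𝕜 s x)
    (hα : ∀ i j, DifferentiableWithinAt 𝕜 (fun y => α y i j) s x) (u : E) :
    fderivWithin 𝕜 (fun y => matrixBilin (α y)) s x u =
      matrixBilin (of fun i j => fderivWithin 𝕜 (fun y => α y i j) s x u) :=
  fderivWithin_linearMap_matrix_apply (F := (κ → 𝕜) →L[𝕜] (ι → 𝕜) →L[𝕜] 𝕜) matrixBilin hs hα u

end MatrixBilin

section Jacobian

variable {n : ℕ} {U : Set (Fin n → ℝ)} {x : Fin n → ℝ} {X Y : (Fin n → ℝ) → (Fin n → ℝ)}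

theorem jacobianWithin_mulVec (hU : UniqueDiffWithinAt ℝ U x)
    (hX : DifferentiableWithinAt ℝ X U x) (v : Fin n → ℝ) :
    jacobianWithin U X x *ᵥ v = fderivWithin ℝ X U x v := by
  have hJ : jacobianWithin U X x = LinearMap.toMatrix' (fderivWithin ℝ X U x).toLinearMap := by
    ext i j
    simp only [jacobianWithin, of_apply, fderivWithin_apply hX hU, LinearMap.toMatrix'_apply]
    rfl
  rw [hJ, LinearMap.toMatrix'_mulVec]
  rfl

theorem lieBracketWithin_eq_jacobianWithin (hU : UniqueDiffWithinAt ℝ U x)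
    (hX : DifferentiableWithinAt ℝ X U x) (hY : DifferentiableWithinAt ℝ Y U x) :
    lieBracketWithin ℝ X Y U x = jacobianWithin U Y x *ᵥ X x - jacobianWithin U X x *ᵥ Y x := by
  rw [jacobianWithin_mulVec hU hX, jacobianWithin_mulVec hU hY, lieBracketWithin]

theorem bilinLieDerivWithin_matrixBilin {α : (Fin n → ℝ) → Matrix (Fin n) (Fin n) ℝ}
    (hU : UniqueDiffWithinAt ℝ U x)
    (hα : ∀ i j, DifferentiableWithinAt ℝ (fun y => α y i j) U x)
    (hX : DifferentiableWithinAt ℝ X U x) :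
    bilinLieDerivWithin (fun y => matrixBilin (α y)) X U x = matrixBilin (lieDerivMat U α X x) := by
  ext v w
  simp only [bilinLieDerivWithin, lieDerivMat, fderivWithin_matrixBilin_apply hU hα,
    _root_.add_apply, ContinuousLinearMap.comp_apply, ContinuousLinearMap.bilinearComp_apply,
    ContinuousLinearMap.id_apply, matrixBilin_apply, add_mulVec, add_dotProduct,
    ← mulVec_mulVec, jacobianWithin_mulVec hU hX, mulVec_transpose, ← dotProduct_mulVec]
  ring

end Jacobian

/-- **Involutivity conclusion of Theorem 1.**
Let `U ⊆ ℝⁿ` be open and `α : U → Sym(n,ℝ)` a `C¹` map such that `L_X α = 0` for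
every `C¹` vector field `X` taking values in the characteristic distribution of `α`.
Then the characteristic distribution of `α` is involutive: for any two `C¹` vector
fields `X, Y` with `α X = 0` and `α Y = 0` on `U`, the Lie bracket
`[X,Y] = DY·X − DX·Y` also satisfies `α [X,Y] = 0` on `U`. -/
theorem characteristic_distribution_involutive {n : ℕ}
    (U : Set (Fin n → ℝ)) (hU : IsOpen U)
    (α : (Fin n → ℝ) → Matrix (Fin n) (Fin n) ℝ)
    (hαsymm : ∀ x ∈ U, (α x)ᵀ = α x)
    (hαC1 : ∀ i j, ContDiffOn ℝ 1 (fun x => α x i j) U)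
    (hLie : ∀ X : (Fin n → ℝ) → (Fin n → ℝ), ContDiffOn ℝ 1 X U →
      (∀ x ∈ U, (α x).mulVec (X x) = 0) →
      ∀ x ∈ U, lieDerivMat U α X x = 0) :
    ∀ X Y : (Fin n → ℝ) → (Fin n → ℝ),
      ContDiffOn ℝ 1 X U → ContDiffOn ℝ 1 Y U →
      (∀ x ∈ U, (α x).mulVec (X x) = 0) →
      (∀ x ∈ U, (α x).mulVec (Y x) = 0) →
      ∀ x ∈ U, (α x).mulVec
        ((jacobianWithin U Y x).mulVec (X x) - (jacobianWithin U X x).mulVec (Y x)) = 0 := by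
  intro X Y hX hY hαX hαY x hx
  have hα : ∀ i j, DifferentiableOn ℝ (fun y => α y i j) U :=
    fun i j => (hαC1 i j).differentiableOn one_ne_zero
  have hYd : DifferentiableOn ℝ Y U := hY.differentiableOn one_ne_zero
  rw [← lieBracketWithin_eq_jacobianWithin (hU.uniqueDiffWithinAt hx)
    (hX.differentiableOn one_ne_zero x hx) (hYd x hx)]
  simp only [← matrixBilin_apply_eq_zero_iff] at hLie hαX hαY ⊢
  refine characteristic_distribution_involutive_general hU.uniqueDiffOn
    (differentiableOn_matrixBilin hα) (fun Z hZ hαZ y hy => ?_) hX hYd hαX hαY x hx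
  rw [bilinLieDerivWithin_matrixBilin (hU.uniqueDiffWithinAt hy) (fun i j => hα i j y hy)
    (hZ.differentiableOn one_ne_zero y hy), hLie Z hZ hαZ y hy, map_zero]
end

section
/- Let U ⊆ ℝⁿ be open and let α : U → Sym(n,ℝ) be a smooth map such that: (i) α(x) is positive semi-definite for every x ∈ U; (ii) x ↦ rank α(x) is locally constant on U; (iii) L_Xα = 0 for every smooth vector field X : U → ℝⁿ taking values in the characteristic distribution of α. Then every point x₀ ∈ U has an open neighborhood V ⊆ U on which α admits a reproducing kernel primitive: there exist M ∈ ℕ and smooth functions φ₁,…,φ_M : V → ℝ with α(x) = ∑_{i=1}^M ∇φᵢ(x) ∇φᵢ(x)ᵀ for all x ∈ V. (Theorem 2: local sufficiency of the necessary conditions, in the local model.) -/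
open Matrix

/-!
Choose a constant symmetric `Q` making `α x₀ + Q` positive definite, with the rank of `Q` equal to
the dimension of `ker α x₀`.

Near `x₀` the Riemannian metric `α + Q` has a primitive, by a local isometric embedding in the style
of Günther. A small multiple of a flat metric is split off so that the remainder at `x₀` is
positive semidefinite; a constant such remainder is a sum of squares of linear functions. After
rescaling, what is left is the flat metric plus a small periodic perturbation, to be induced by
perturbing finitely many Fourier modes `e_m` on the torus to `e_m (δ + p_m)`. Günther's identity
turns the equation for the `p_m` into a quadratic fixed-point equation without loss of derivatives,
solved by contraction in weighted `ℓ¹` spaces of Fourier coefficients.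

To remove `Q`, constant rank provides smooth `A y` with values in `ker α y` and `Q (A y) = Q`.
Following the characteristic vector field `y ↦ A y (x₀ - x)` for unit time moves `x` to a point
`Φ x` of the slice `Q y = Q x₀`. By (iii) this flow preserves `α`, and the motion of the parameter
contributes only characteristic directions, so `Φ^* α = α`, whereas `Q DΦ = 0`. Hence
`α = Φ^* (α + Q)`, and the primitive of `α + Q` pulls back along `Φ`.
-/

namespace KernelPrimitive

open Filter Set MeasureTheory
open scoped Topology ContDiff NNReal ENNReal ComplexConjugate Matrix

section FixedPoint

variable {X τ : Type*} [NormedAddCommGroup X] [NormedSpace ℝ X]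

theorem norm_quadratic_sub_le {B : X →L[ℝ] X →L[ℝ] X} {C r : ℝ≥0}
    (hB : ∀ v w, ‖B v w‖ ≤ C * ‖v‖ * ‖w‖) {v w : X} (hv : ‖v‖ ≤ r) (hw : ‖w‖ ≤ r) :
    ‖B v v - B w w‖ ≤ 2 * C * r * ‖v - w‖ := by
  have split : B v v - B w w = B v (v - w) + B (v - w) w := by simp
  calc ‖B v v - B w w‖ ≤ C * ‖v‖ * ‖v - w‖ + C * ‖v - w‖ * ‖w‖ := by
        rw [split]; exact (norm_add_le _ _).trans (add_le_add (hB _ _) (hB _ _))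
    _ ≤ C * r * ‖v - w‖ + C * ‖v - w‖ * r := by gcongr
    _ = 2 * C * r * ‖v - w‖ := by ring

/- The iteration is confined to the closed set where all the functionals `N t` are at most `r`:
one contraction then controls every `N t` at once, with a smallness condition uniform in `t`. -/
theorem exists_quadratic_fixedPoint [CompleteSpace X] {B : X →L[ℝ] X →L[ℝ] X} {C r : ℝ≥0}
    (hB : ∀ v w, ‖B v w‖ ≤ C * ‖v‖ * ‖w‖) (hr : 4 * C * r ≤ 1) {N : τ → X → ℝ≥0∞}
    (hN : ∀ t, LowerSemicontinuous (N t)) (hN_add : ∀ t v w, N t (v + w) ≤ N t v + N t w)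
    (hN_mul : ∀ t v, N t (B v v) ≤ C * N t v * N t v) {f : X} (hf : ‖f‖ ≤ r / 2)
    (hNf : ∀ t, N t f ≤ ↑(r / 2)) :
    ∃ v, v = f + B v v ∧ ∀ t, N t v ≤ r := by
  have : (4 : ℝ) * C * r ≤ 1 := mod_cast hr
  have half_add : r / 2 + C * r * r ≤ r := by
    rw [← NNReal.coe_le_coe]; push_cast; nlinarith [r.2]
  let K : Set X := Metric.closedBall 0 r ∩ ⋂ t, N t ⁻¹' Iic (r : ℝ≥0∞)
  have memK {v : X} : v ∈ K ↔ ‖v‖ ≤ r ∧ ∀ t, N t v ≤ r := by simp [K]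
  have K_complete : IsComplete K :=
    (Metric.isClosed_closedBall.inter
      (isClosed_iInter fun t => (hN t).isClosed_preimage _)).isComplete
  have mapsTo : MapsTo (fun v => f + B v v) K K := by
    intro v hv
    obtain ⟨hv, hvN⟩ := memK.1 hv
    refine memK.2 ⟨?_, fun t => ?_⟩
    · calc ‖f + B v v‖ ≤ r / 2 + C * ‖v‖ * ‖v‖ := (norm_add_le _ _).trans (add_le_add hf (hB _ _))
        _ ≤ r / 2 + C * r * r := by gcongr
        _ ≤ r := mod_cast half_add
    · calc N t (f + B v v) ≤ ↑(r / 2) + C * N t v * N t v :=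
            (hN_add _ _ _).trans (add_le_add (hNf t) (hN_mul t v))
        _ ≤ ↑(r / 2) + C * r * r := by gcongr <;> exact hvN t
        _ ≤ r := mod_cast half_add
  have contracting : ContractingWith (1 / 2) (mapsTo.restrict _ K K) := by
    refine ⟨by norm_num, LipschitzWith.of_dist_le_mul fun v w => ?_⟩
    have := norm_quadratic_sub_le hB (memK.1 v.2).1 (memK.1 w.2).1
    rw [Subtype.dist_eq, Subtype.dist_eq, MapsTo.val_restrict_apply, MapsTo.val_restrict_apply,
      dist_add_left, dist_eq_norm, dist_eq_norm]
    refine this.trans (mul_le_mul_of_nonneg_right ?_ (norm_nonneg _))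
    push_cast
    linarith
  have hfK : f ∈ K := memK.2 ⟨hf.trans (by linarith [r.2]), fun t =>
    (hNf t).trans (by gcongr; exact half_le_self r.2)⟩
  obtain ⟨v, hvK, hv, -⟩ := contracting.exists_fixedPoint' K_complete mapsTo hfK (edist_ne_top _ _)
  exact ⟨v, hv.eq.symm, (memK.1 hvK).2⟩

end FixedPoint

section L1

variable {ι V F : Type*} [NormedAddCommGroup V]

theorem l1_summable_norm (v : lp (fun _ : ι => V) 1) : Summable fun i => ‖v i‖ := by
  simpa using (lp.memℓp v).summable (by simp)

theorem l1_norm_eq_tsum (v : lp (fun _ : ι => V) 1) : ‖v‖ = ∑' i, ‖v i‖ := by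
  simp [lp.norm_eq_tsum_rpow (p := 1) (by simp) v]

theorem subadditive_tsum_le {G : Type*} [AddCommMonoid G] [TopologicalSpace G] {N : G → ℝ≥0∞}
    (hN : LowerSemicontinuous N) (hN_zero : N 0 = 0) (hN_add : ∀ x y, N (x + y) ≤ N x + N y)
    {x : ι → G} (hx : Summable x) : N (∑' i, x i) ≤ ∑' i, N (x i) :=
  (hN.isClosed_preimage _).mem_of_tendsto hx.hasSum <| .of_forall fun s =>
    (Finset.le_sum_of_subadditive N hN_zero.le hN_add s x).trans (ENNReal.sum_le_tsum s)

/-- The `ℓ¹` norm with weight `ρ`, possibly infinite. -/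
noncomputable def weightedNorm (ρ : ι → ℝ≥0) (v : lp (fun _ : ι => V) 1) : ℝ≥0∞ :=
  ∑' i, ρ i * ‖v i‖ₑ

theorem enorm_eq_weightedNorm_one (v : lp (fun _ : ι => V) 1) : ‖v‖ₑ = weightedNorm 1 v := by
  simp only [weightedNorm, Pi.one_apply, ENNReal.coe_one, one_mul, ← ofReal_norm]
  rw [l1_norm_eq_tsum, ENNReal.ofReal_tsum_of_nonneg (fun _ => norm_nonneg _) (l1_summable_norm v)]

theorem weightedNorm_zero (ρ : ι → ℝ≥0) : weightedNorm ρ (0 : lp (fun _ : ι => V) 1) = 0 := by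
  simp [weightedNorm]

theorem weightedNorm_add_le (ρ : ι → ℝ≥0) (v w : lp (fun _ : ι => V) 1) :
    weightedNorm ρ (v + w) ≤ weightedNorm ρ v + weightedNorm ρ w := by
  rw [weightedNorm, weightedNorm, weightedNorm, ← ENNReal.tsum_add]
  refine ENNReal.tsum_le_tsum fun i => ?_
  rw [← mul_add, lp.coeFn_add, Pi.add_apply]
  gcongr
  exact enorm_add_le _ _

theorem weightedNorm_sum_le {κ : Type*} (ρ : ι → ℝ≥0) (s : Finset κ)
    (v : κ → lp (fun _ : ι => V) 1) :
    weightedNorm ρ (∑ i ∈ s, v i) ≤ ∑ i ∈ s, weightedNorm ρ (v i) :=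
  Finset.le_sum_of_subadditive _ (weightedNorm_zero ρ).le (weightedNorm_add_le ρ) s v

theorem weightedNorm_single [DecidableEq ι] (ρ : ι → ℝ≥0) (i : ι) (z : V) :
    weightedNorm ρ (lp.single 1 i z) = ρ i * ‖z‖ₑ := by
  rw [weightedNorm, tsum_eq_single i fun j hj => by simp [hj]]
  simp

variable [NormedSpace ℝ V] [NormedAddCommGroup F] [NormedSpace ℝ F]

theorem lowerSemicontinuous_weightedNorm (ρ : ι → ℝ≥0) :
    LowerSemicontinuous (weightedNorm (V := V) ρ) :=
  lowerSemicontinuous_tsum fun i => Continuous.lowerSemicontinuous <|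
    (ENNReal.continuous_const_mul ENNReal.coe_ne_top).comp
      (lp.evalCLM ℝ (fun _ : ι => V) 1 i).continuous.enorm

theorem l1_summable_apply [CompleteSpace F] {T : ι → V →L[ℝ] F} {C : ℝ≥0} (hT : ∀ i, ‖T i‖ ≤ C)
    (v : lp (fun _ : ι => V) 1) : Summable fun i => T i (v i) :=
  .of_norm_bounded ((l1_summable_norm v).mul_left (C : ℝ)) fun i => (T i).le_of_opNorm_le (hT i) _

/-- The continuous linear map on `ℓ¹` induced by a bounded family of maps on the factors: `ℓ¹` is
the coproduct in the category of Banach spaces. -/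
noncomputable def l1Lift [CompleteSpace F] (T : ι → V →L[ℝ] F) (C : ℝ≥0) (hT : ∀ i, ‖T i‖ ≤ C) :
    lp (fun _ : ι => V) 1 →L[ℝ] F :=
  LinearMap.mkContinuous
    { toFun := fun v => ∑' i, T i (v i)
      map_add' := fun v w => by
        simp [(l1_summable_apply hT v).tsum_add (l1_summable_apply hT w)]
      map_smul' := fun c v => by simp [tsum_const_smul'' c] } C fun v => by
    rw [l1_norm_eq_tsum, ← tsum_mul_left]
    exact tsum_of_norm_bounded ((l1_summable_norm v).mul_left (C : ℝ)).hasSum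
      fun i => (T i).le_of_opNorm_le (hT i) _

section Lift

variable [CompleteSpace F] {C : ℝ≥0}

theorem l1Lift_apply (T : ι → V →L[ℝ] F) (hT : ∀ i, ‖T i‖ ≤ C) (v : lp (fun _ : ι => V) 1) :
    l1Lift T C hT v = ∑' i, T i (v i) := rfl

theorem l1Lift_single [DecidableEq ι] (T : ι → V →L[ℝ] F) (hT : ∀ i, ‖T i‖ ≤ C) (i : ι) (z : V) :
    l1Lift T C hT (lp.single 1 i z) = T i z := by
  rw [l1Lift_apply, tsum_eq_single i fun j hj => by simp [hj]]
  simp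

theorem norm_l1Lift_le (T : ι → V →L[ℝ] F) (hT : ∀ i, ‖T i‖ ≤ C) :
    ‖l1Lift T C hT‖ ≤ C :=
  LinearMap.mkContinuous_norm_le _ C.2 _

/-- The bilinear analogue of `l1Lift`. -/
noncomputable def l1Bilin (T : ι → ι → V →L[ℝ] V →L[ℝ] F) (C : ℝ≥0)
    (hT : ∀ i j, ‖T i j‖ ≤ C) :
    lp (fun _ : ι => V) 1 →L[ℝ] lp (fun _ : ι => V) 1 →L[ℝ] F :=
  l1Lift (fun i => (l1Lift (fun j => (T i j).flip) C (by simpa using hT i)).flip) C fun i => by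
    simpa using norm_l1Lift_le (fun j => (T i j).flip) (by simpa using hT i)

variable (T : ι → ι → V →L[ℝ] V →L[ℝ] F) (hT : ∀ i j, ‖T i j‖ ≤ C)

theorem l1Bilin_single [DecidableEq ι] (i j : ι) (z w : V) :
    l1Bilin T C hT (lp.single 1 i z) (lp.single 1 j w) = T i j z w := by
  simp [l1Bilin, l1Lift_single]

end Lift

theorem l1_ext_bilin [DecidableEq ι]
    {B B' : lp (fun _ : ι => V) 1 →L[ℝ] lp (fun _ : ι => V) 1 →L[ℝ] F}
    (h : ∀ i j z w,
      B (lp.single 1 i z) (lp.single 1 j w) = B' (lp.single 1 i z) (lp.single 1 j w)) :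
    B = B' := by
  refine lp.ext_continuousLinearMap ENNReal.one_ne_top fun i => ?_
  ext1 z
  refine lp.ext_continuousLinearMap ENNReal.one_ne_top fun j => ?_
  ext1 w
  exact h i j z w

section LiftBounds

variable [CompleteSpace F] {N : F → ℝ≥0∞} {ρ : ι → ℝ≥0} {C : ℝ≥0}

theorem l1Lift_subadditive_le {T : ι → V →L[ℝ] F} {hT : ∀ i, ‖T i‖ ≤ C}
    (hN : LowerSemicontinuous N) (hN_zero : N 0 = 0) (hN_add : ∀ x y, N (x + y) ≤ N x + N y)
    {D : ℝ≥0∞} (hNT : ∀ i z, N (T i z) ≤ D * (ρ i * ‖z‖ₑ)) (v : lp (fun _ : ι => V) 1) :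
    N (l1Lift T C hT v) ≤ D * weightedNorm ρ v := by
  rw [weightedNorm, ← ENNReal.tsum_mul_left]
  exact (subadditive_tsum_le hN hN_zero hN_add (l1_summable_apply hT v)).trans
    (ENNReal.tsum_le_tsum fun i => hNT i (v i))

theorem l1Bilin_subadditive_le {T : ι → ι → V →L[ℝ] V →L[ℝ] F}
    {hT : ∀ i j, ‖T i j‖ ≤ C} (hN : LowerSemicontinuous N) (hN_zero : N 0 = 0)
    (hN_add : ∀ x y, N (x + y) ≤ N x + N y) {D : ℝ≥0∞}
    (hNT : ∀ i j z w, N (T i j z w) ≤ D * (ρ i * ‖z‖ₑ) * (ρ j * ‖w‖ₑ))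
    (v w : lp (fun _ : ι => V) 1) :
    N (l1Bilin T C hT v w) ≤ D * weightedNorm ρ v * weightedNorm ρ w := by
  have inner (i : ι) (z : V) : N (l1Lift (fun j => (T i j).flip) C (by simpa using hT i) w z) ≤
      D * (ρ i * ‖z‖ₑ) * weightedNorm ρ w :=
    l1Lift_subadditive_le (N := fun A : V →L[ℝ] F => N (A z)) (hN.comp (by fun_prop))
      hN_zero (fun A A' => hN_add (A z) (A' z)) (fun j y => hNT i j z y) w
  rw [mul_right_comm]
  exact l1Lift_subadditive_le (N := fun A : lp (fun _ : ι => V) 1 →L[ℝ] F => N (A w))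
    (hN.comp (by fun_prop)) hN_zero (fun A A' => hN_add (A w) (A' w))
    (fun i z => by rw [mul_right_comm]; exact inner i z) v

end LiftBounds

end L1

section GuntherKernel

variable {n : ℕ}

/-- The real frequency vector `2πk` of the character of the torus `ℝⁿ/ℤⁿ` indexed by `k`. -/
noncomputable def freq (k : Fin n → ℤ) : Fin n → ℝ := fun i => 2 * Real.pi * k i

theorem freq_add (k l : Fin n → ℤ) : freq (k + l) = freq k + freq l := by
  ext i; simp [freq, mul_add]

theorem freq_sub (k l : Fin n → ℤ) : freq (k - l) = freq k - freq l := by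
  ext i; simp [freq, mul_sub]

/-- The symbol `1 + |2πk|²` of the operator `1 - Δ`. -/
noncomputable def laplaceSymbol (k : Fin n → ℤ) : ℝ := 1 + freq k ⬝ᵥ freq k

theorem dotProduct_self_nonneg (κ : Fin n → ℝ) : 0 ≤ κ ⬝ᵥ κ :=
  Finset.sum_nonneg fun _ _ => mul_self_nonneg _

theorem one_le_laplaceSymbol (k : Fin n → ℤ) : 1 ≤ laplaceSymbol k :=
  le_add_of_nonneg_right (dotProduct_self_nonneg _)

theorem laplaceSymbol_pos (k : Fin n → ℤ) : 0 < laplaceSymbol k :=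
  one_pos.trans_le (one_le_laplaceSymbol k)

/-- The vector `|κ|²μ - |μ|²κ` in Günther's identity. -/
def guntherVector (κ μ : Fin n → ℝ) : Fin n → ℝ := (κ ⬝ᵥ κ) • μ - (μ ⬝ᵥ μ) • κ

/-- The matrix in Günther's identity; only its symmetric part matters. -/
def guntherMatrix (κ μ : Fin n → ℝ) : Matrix (Fin n) (Fin n) ℝ :=
  (κ ⬝ᵥ κ) • vecMulVec μ μ + (μ ⬝ᵥ μ) • vecMulVec κ κ + (1 - 2 * (κ ⬝ᵥ μ)) • vecMulVec κ μ

/- Both terms on the right have size `O((1 + |κ|²) (1 + |μ|²))`; the first one is the symmetrized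
gradient of a vector field: in `∂ᵢp ∂ⱼp̄` this trades two derivatives of the product for two
derivatives of each factor, so that the perturbation problem loses no derivatives. -/
theorem gunther_identity (κ μ : Fin n → ℝ) (i j : Fin n) :
    (κ i * μ j + κ j * μ i) * (1 + (κ - μ) ⬝ᵥ (κ - μ)) =
      (guntherVector κ μ i * (κ - μ) j + guntherVector κ μ j * (κ - μ) i) +
        (guntherMatrix κ μ i j + guntherMatrix κ μ j i) := by
  have expand : (κ - μ) ⬝ᵥ (κ - μ) = κ ⬝ᵥ κ + μ ⬝ᵥ μ - 2 * (κ ⬝ᵥ μ) := by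
    rw [sub_dotProduct, dotProduct_sub, dotProduct_sub, dotProduct_comm μ κ]; ring
  simp only [expand, guntherVector, guntherMatrix, Matrix.add_apply, Matrix.smul_apply,
    vecMulVec_apply, Pi.sub_apply, Pi.smul_apply, smul_eq_mul]
  ring

theorem abs_apply_le_sqrt (κ : Fin n → ℝ) (i : Fin n) : |κ i| ≤ √(κ ⬝ᵥ κ) := by
  refine Real.abs_le_sqrt ?_
  rw [sq]
  exact Finset.single_le_sum (f := fun i => κ i * κ i) (fun i _ => mul_self_nonneg _)
    (Finset.mem_univ i)

theorem abs_dotProduct_le_sqrt (κ μ : Fin n → ℝ) : |κ ⬝ᵥ μ| ≤ √(κ ⬝ᵥ κ) * √(μ ⬝ᵥ μ) := by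
  rw [← Real.sqrt_mul (dotProduct_self_nonneg κ)]
  refine Real.abs_le_sqrt ?_
  simpa [dotProduct, sq] using Finset.sum_mul_sq_le_sq_mul_sq Finset.univ κ μ

theorem abs_guntherVector_le (κ μ : Fin n → ℝ) (i : Fin n) :
    |guntherVector κ μ i| ≤ 2 * ((1 + κ ⬝ᵥ κ) * (1 + μ ⬝ᵥ μ)) := by
  have hκ := abs_apply_le_sqrt κ i
  have hμ := abs_apply_le_sqrt μ i
  simp only [guntherVector, Pi.sub_apply, Pi.smul_apply, smul_eq_mul]
  rw [← Real.sq_sqrt (dotProduct_self_nonneg κ), ← Real.sq_sqrt (dotProduct_self_nonneg μ)]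
  set s := √(κ ⬝ᵥ κ)
  set t := √(μ ⬝ᵥ μ)
  calc |s ^ 2 * μ i - t ^ 2 * κ i| ≤ s ^ 2 * |μ i| + t ^ 2 * |κ i| :=
        (abs_sub _ _).trans_eq (by simp [abs_mul])
    _ ≤ s ^ 2 * t + t ^ 2 * s := by gcongr
    _ ≤ 2 * ((1 + s ^ 2) * (1 + t ^ 2)) := by
        nlinarith [mul_nonneg (sq_nonneg s) (sq_nonneg (t - 1)),
          mul_nonneg (sq_nonneg t) (sq_nonneg (s - 1))]

theorem abs_guntherMatrix_le (κ μ : Fin n → ℝ) (i j : Fin n) :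
    |guntherMatrix κ μ i j| ≤ 5 * ((1 + κ ⬝ᵥ κ) * (1 + μ ⬝ᵥ μ)) := by
  have hκ := abs_apply_le_sqrt κ
  have hμ := abs_apply_le_sqrt μ
  have hκμ := abs_dotProduct_le_sqrt κ μ
  simp only [guntherMatrix, Matrix.add_apply, Matrix.smul_apply, vecMulVec_apply, smul_eq_mul]
  rw [← Real.sq_sqrt (dotProduct_self_nonneg κ), ← Real.sq_sqrt (dotProduct_self_nonneg μ)]
  set s := √(κ ⬝ᵥ κ)
  set t := √(μ ⬝ᵥ μ)
  have hs : 0 ≤ s := Real.sqrt_nonneg _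
  have ht : 0 ≤ t := Real.sqrt_nonneg _
  have coeff_le : |1 - 2 * (κ ⬝ᵥ μ)| ≤ 1 + 2 * |κ ⬝ᵥ μ| :=
    (abs_sub _ _).trans_eq (by simp [abs_mul])
  calc |s ^ 2 * (μ i * μ j) + t ^ 2 * (κ i * κ j) + (1 - 2 * (κ ⬝ᵥ μ)) * (κ i * μ j)|
      ≤ s ^ 2 * (|μ i| * |μ j|) + t ^ 2 * (|κ i| * |κ j|) +
          |1 - 2 * (κ ⬝ᵥ μ)| * (|κ i| * |μ j|) :=
        (abs_add_three _ _ _).trans_eq (by simp [abs_mul])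
    _ ≤ s ^ 2 * (t * t) + t ^ 2 * (s * s) + (1 + 2 * (s * t)) * (s * t) := by
        gcongr <;> first | exact hκ _ | exact hμ _ | linarith
    _ ≤ 5 * ((1 + s ^ 2) * (1 + t ^ 2)) := by
        nlinarith [mul_nonneg hs ht, sq_nonneg (s - t), mul_nonneg (sq_nonneg s) (sq_nonneg t)]

/-- Index set of the exponentials `e_m`, `m = ±e_p ± e_q`, used as building blocks of the immersion:
`(p, q, ±1, ±1)`. -/
abbrev Mode (n : ℕ) : Type := Fin n × Fin n × ℤˣ × ℤˣ

/-- The integer frequency `σ e_p + τ e_q` of the mode `(p, q, σ, τ)`. -/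
def modeIndex (ν : Mode n) : Fin n → ℤ :=
  (ν.2.2.1 : ℤ) • Pi.single ν.1 1 + (ν.2.2.2 : ℤ) • Pi.single ν.2.1 1

/-- The coefficients on the modes solving the linearized problem `modeCoeff_sum`. They separate a
symmetric matrix `S` from a vector `V` through their parity in the signs of the mode. -/
noncomputable def modeCoeff (S : Matrix (Fin n) (Fin n) ℝ) (V : Fin n → ℝ) (ν : Mode n) : ℝ :=
  ((ν.2.2.1 : ℤ) : ℝ) * ((ν.2.2.2 : ℤ) : ℝ) * S ν.1 ν.2.1 / (64 * Real.pi ^ 2) +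
    ((ν.2.2.1 : ℤ) : ℝ) * V ν.1 / (16 * Real.pi * n)

theorem sum_intUnits {M : Type*} [AddCommMonoid M] (f : ℤˣ → M) : ∑ σ, f σ = f 1 + f (-1) := by
  rw [show (Finset.univ : Finset ℤˣ) = {1, -1} from rfl,
    Finset.sum_pair (by decide)]

theorem abs_intUnits (σ : ℤˣ) : |((σ : ℤ) : ℝ)| = 1 := by
  rw [← Int.cast_abs, Int.isUnit_iff_abs_eq.1 σ.isUnit, Int.cast_one]

theorem freq_modeIndex (ν : Mode n) (i : Fin n) : freq (modeIndex ν) i =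
    2 * Real.pi * (((ν.2.2.1 : ℤ) : ℝ) * Pi.single (M := fun _ => ℝ) ν.1 1 i +
      ((ν.2.2.2 : ℤ) : ℝ) * Pi.single (M := fun _ => ℝ) ν.2.1 1 i) := by
  simp [freq, modeIndex, Pi.single_apply]

theorem modeCoeff_sum (S : Matrix (Fin n) (Fin n) ℝ) (V d : Fin n → ℝ) (i j : Fin n) :
    2 * ∑ ν, modeCoeff S V ν * (freq (modeIndex ν) i * (d + freq (modeIndex ν)) j +
        freq (modeIndex ν) j * (d + freq (modeIndex ν)) i) =
      (S i j + S j i) + (V i * d j + V j * d i) := by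
  have hn : (n : ℝ) ≠ 0 := Nat.cast_ne_zero.2 i.pos.ne'
  have sum_signs (p q : Fin n) :
      2 * ∑ σ, ∑ τ, modeCoeff S V (p, q, σ, τ) *
        (freq (modeIndex (p, q, σ, τ)) i * (d + freq (modeIndex (p, q, σ, τ))) j +
          freq (modeIndex (p, q, σ, τ)) j * (d + freq (modeIndex (p, q, σ, τ))) i) =
        (Pi.single (M := fun _ => ℝ) p 1 i * Pi.single (M := fun _ => ℝ) q 1 j * S p q +
            Pi.single (M := fun _ => ℝ) q 1 i * Pi.single (M := fun _ => ℝ) p 1 j * S p q) +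
          (Pi.single (M := fun _ => ℝ) p 1 i * (V p * d j) +
            Pi.single (M := fun _ => ℝ) p 1 j * (V p * d i)) / n := by
    simp only [sum_intUnits, freq_modeIndex, modeCoeff, Pi.add_apply, Units.val_one,
      Units.val_neg, Int.cast_one, Int.cast_neg]
    field_simp
    ring
  simp only [Fintype.sum_prod_type, Finset.mul_sum (s := (Finset.univ : Finset (Fin n)))]
  simp only [sum_signs, Finset.sum_add_distrib, Pi.single_apply]
  simp [mul_div_cancel₀ _ hn, Finset.sum_add_distrib]

theorem abs_modeCoeff_gunther_le (κ μ : Fin n → ℝ) (ν : Mode n) :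
    |modeCoeff (guntherMatrix κ μ) (guntherVector κ μ) ν| ≤ (1 + κ ⬝ᵥ κ) * (1 + μ ⬝ᵥ μ) := by
  have hn : (1 : ℝ) ≤ n := mod_cast ν.1.pos
  have hM := abs_guntherMatrix_le κ μ ν.1 ν.2.1
  have hV := abs_guntherVector_le κ μ ν.1
  have hπ := Real.pi_gt_three
  set P := (1 + κ ⬝ᵥ κ) * (1 + μ ⬝ᵥ μ)
  have hP : 0 ≤ P := by linarith [abs_nonneg (guntherVector κ μ ν.1)]
  calc |modeCoeff (guntherMatrix κ μ) (guntherVector κ μ) ν|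
      ≤ |guntherMatrix κ μ ν.1 ν.2.1| / (64 * Real.pi ^ 2) +
          |guntherVector κ μ ν.1| / (16 * Real.pi * n) := by
        refine (abs_add_le _ _).trans_eq ?_
        simp [abs_div, abs_mul, abs_intUnits, abs_of_pos Real.pi_pos]
    _ ≤ 5 * P / (64 * 1 ^ 2) + 2 * P / (16 * 1 * 1) := by gcongr <;> linarith
    _ ≤ P := by linarith

end GuntherKernel

section Linearization

variable {n : ℕ}

/-- The character `x ↦ exp (2πi k·x)` of the torus `ℝⁿ/ℤⁿ`, as a function on `ℝⁿ`. -/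
noncomputable def character (k : Fin n → ℤ) (x : Fin n → ℝ) : ℂ :=
  Complex.exp ((freq k ⬝ᵥ x : ℝ) * Complex.I)

theorem norm_character (k : Fin n → ℤ) (x : Fin n → ℝ) : ‖character k x‖ = 1 :=
  Complex.norm_exp_ofReal_mul_I _

theorem character_mul_conj (k l : Fin n → ℤ) (x : Fin n → ℝ) :
    character k x * conj (character l x) = character (k - l) x := by
  rw [character, character, character, ← Complex.exp_conj, ← Complex.exp_add, freq_sub,
    sub_dotProduct]
  congr 1
  simp
  ring

/-- Coefficients `v (ν, k)` of the functions `(1 - Δ) p_ν`, where `e_{m_ν} (δ + p_ν)`, `ν : Mode n`,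
are the components of the immersion. -/
abbrev ModeSpace (n : ℕ) : Type := lp (fun _ : Mode n × (Fin n → ℤ) => ℂ) 1

theorem laplaceSymbol_add_le (k m : Fin n → ℤ) :
    laplaceSymbol (k + m) ≤ 2 * laplaceSymbol m * laplaceSymbol k := by
  have expand : freq (k + m) ⬝ᵥ freq (k + m) + (freq k - freq m) ⬝ᵥ (freq k - freq m) =
      2 * (freq k ⬝ᵥ freq k) + 2 * (freq m ⬝ᵥ freq m) := by
    simp only [freq_add, add_dotProduct, dotProduct_add, sub_dotProduct, dotProduct_sub]
    ring
  have := dotProduct_self_nonneg (freq k - freq m)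
  have := mul_nonneg (dotProduct_self_nonneg (freq k)) (dotProduct_self_nonneg (freq m))
  simp only [laplaceSymbol]
  nlinarith

variable (n) in
/-- A constant with `1 + |2π(k + m_ν)|² ≤ modeBound n * (1 + |2πk|²)` for all modes `ν`. -/
noncomputable def modeBound : ℝ≥0 := ∑ ν : Mode n, (2 * laplaceSymbol (modeIndex ν)).toNNReal

theorem laplaceSymbol_add_modeIndex_le (k : Fin n → ℤ) (ν : Mode n) :
    laplaceSymbol (k + modeIndex ν) ≤ modeBound n * laplaceSymbol k := by
  refine (laplaceSymbol_add_le k _).trans ?_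
  gcongr
  · exact (laplaceSymbol_pos k).le
  · have := Finset.single_le_sum (f := fun ν : Mode n => (2 * laplaceSymbol (modeIndex ν)).toNNReal)
      (fun _ _ => zero_le) (Finset.mem_univ ν)
    exact (Real.le_coe_toNNReal _).trans (NNReal.coe_le_coe.2 this)

theorem abs_freq_le_laplaceSymbol (k : Fin n → ℤ) (i : Fin n) : |freq k i| ≤ laplaceSymbol k := by
  refine (abs_apply_le_sqrt _ i).trans (Real.sqrt_le_iff.2 ⟨(laplaceSymbol_pos k).le, ?_⟩)
  rw [laplaceSymbol]
  nlinarith [dotProduct_self_nonneg (freq k)]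

/-- The value at `x` of `e_{-m_ν} ∂ᵢ (e_{m_ν} p_ν) / √-1`, as a functional of the coefficients of
`(1 - Δ) p`. -/
noncomputable def modeDeriv (x : Fin n → ℝ) (ν : Mode n) (i : Fin n) : ModeSpace n →L[ℝ] ℂ :=
  l1Lift (fun a => if a.1 = ν then
    (freq (a.2 + modeIndex ν) i / laplaceSymbol a.2) •
      ContinuousLinearMap.mul ℝ ℂ (character a.2 x) else 0)
    (modeBound n) fun a => by
      split_ifs
      · rw [norm_smul, ContinuousLinearMap.opNorm_mul_apply, norm_character, mul_one,
          Real.norm_eq_abs, abs_div, abs_of_pos (laplaceSymbol_pos _),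
          div_le_iff₀ (laplaceSymbol_pos _)]
        exact (abs_freq_le_laplaceSymbol _ i).trans (laplaceSymbol_add_modeIndex_le _ ν)
      · simp

theorem modeDeriv_single (x : Fin n → ℝ) (ν μ : Mode n) (i : Fin n) (k : Fin n → ℤ) (z : ℂ) :
    modeDeriv x ν i (lp.single 1 (μ, k) z) = if μ = ν then
      (freq (k + modeIndex ν) i / laplaceSymbol k) • (character k x * z) else 0 := by
  rw [modeDeriv, l1Lift_single]
  split_ifs <;> simp

/-- The part linear in `p` of `∑ ν, Re (∂ᵢ U_ν * conj (∂ⱼ U_ν))`, where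
`U_ν = e_{m_ν} (δ + p_ν)`. -/
noncomputable def linearizedMetric (δ : ℝ) (x : Fin n → ℝ) (i j : Fin n) : ModeSpace n →L[ℝ] ℝ :=
  δ • ∑ ν, (freq (modeIndex ν) i • Complex.reCLM ∘L modeDeriv x ν j +
    freq (modeIndex ν) j • Complex.reCLM ∘L modeDeriv x ν i)

/-- The part quadratic in `p` of `∑ ν, Re (∂ᵢ U_ν * conj (∂ⱼ U_ν))`, polarized. -/
noncomputable def quadraticMetric (x : Fin n → ℝ) (i j : Fin n) :
    ModeSpace n →L[ℝ] ModeSpace n →L[ℝ] ℝ :=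
  ∑ ν, (innerSL ℝ).bilinearComp (modeDeriv x ν i) (modeDeriv x ν j)

theorem quadraticMetric_single (x : Fin n → ℝ) (i j : Fin n) (ν μ : Mode n) (k l : Fin n → ℤ)
    (z w : ℂ) : quadraticMetric x i j (lp.single 1 (ν, k) z) (lp.single 1 (μ, l) w) =
      if ν = μ then freq (k + modeIndex ν) i * freq (l + modeIndex ν) j /
        (laplaceSymbol k * laplaceSymbol l) * (character (k - l) x * (z * conj w)).re else 0 := by
  simp only [quadraticMetric, _root_.sum_apply, ContinuousLinearMap.bilinearComp_apply,
    modeDeriv_single, innerSL_apply_apply]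
  obtain rfl | hne := eq_or_ne ν μ
  · rw [Finset.sum_eq_single ν (fun _ _ h => by rw [if_neg h.symm, inner_zero_left]) (by simp),
      if_pos rfl, if_pos rfl, if_pos rfl, real_inner_smul_left, real_inner_smul_right,
      real_inner_comm, Complex.inner, ← character_mul_conj, map_mul]
    rw [mul_mul_mul_comm (character k x)]
    ring
  · refine (Finset.sum_eq_zero fun ξ _ => ?_).trans (if_neg hne).symm
    obtain rfl | h := eq_or_ne ν ξ
    · rw [if_neg hne.symm, inner_zero_right]
    · rw [if_neg h, inner_zero_left]

/-- Places the coefficients `modeCoeff S V` at the frequency `k`. -/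
noncomputable def modeLift (S : Matrix (Fin n) (Fin n) ℝ) (V : Fin n → ℝ) (k : Fin n → ℤ) :
    ℂ →L[ℝ] ModeSpace n :=
  ∑ ν, modeCoeff S V ν • lp.singleContinuousLinearMap ℝ (fun _ => ℂ) 1 (ν, k)

theorem linearizedMetric_modeLift (δ : ℝ) (x : Fin n → ℝ) (i j : Fin n)
    (S : Matrix (Fin n) (Fin n) ℝ) (V : Fin n → ℝ) (k : Fin n → ℤ) (z : ℂ) :
    2 * linearizedMetric δ x i j (modeLift S V k z) =
      δ / laplaceSymbol k * ((S i j + S j i) + (V i * freq k j + V j * freq k i)) *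
        (character k x * z).re := by
  have modeDeriv_lift (ν : Mode n) (i : Fin n) : (modeDeriv x ν i (modeLift S V k z)).re =
      modeCoeff S V ν * freq (k + modeIndex ν) i / laplaceSymbol k * (character k x * z).re := by
    simp [modeLift, modeDeriv_single, -Complex.mul_re, -Complex.real_smul, Complex.smul_re,
      mul_assoc, mul_div_assoc]
  rw [← modeCoeff_sum]
  simp only [linearizedMetric, _root_.smul_apply, _root_.sum_apply,
    _root_.add_apply, ContinuousLinearMap.comp_apply, Complex.reCLM_apply, smul_eq_mul,
    modeDeriv_lift, freq_add, Finset.mul_sum, Finset.sum_mul]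
  exact Finset.sum_congr rfl fun ν _ => by ring

theorem weightedNorm_modeLift_le {S : Matrix (Fin n) (Fin n) ℝ} {V : Fin n → ℝ} {D : ℝ≥0}
    (hD : ∀ ν, |modeCoeff S V ν| ≤ D) (ρ : (Fin n → ℤ) → ℝ≥0) (k : Fin n → ℤ) (z : ℂ) :
    weightedNorm (fun a : Mode n × (Fin n → ℤ) => ρ a.2) (modeLift S V k z) ≤
      Fintype.card (Mode n) * D * (ρ k * ‖z‖ₑ) := by
  have single_le (ν : Mode n) : weightedNorm (fun a : Mode n × (Fin n → ℤ) => ρ a.2)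
      (lp.single 1 (ν, k) (modeCoeff S V ν • z)) ≤ D * (ρ k * ‖z‖ₑ) := by
    rw [weightedNorm_single, enorm_smul, mul_left_comm]
    gcongr
    exact enorm_le_coe.2 (NNReal.coe_le_coe.1 (by simpa using hD ν))
  calc weightedNorm (fun a : Mode n × (Fin n → ℤ) => ρ a.2) (modeLift S V k z)
      = weightedNorm (fun a : Mode n × (Fin n → ℤ) => ρ a.2)
          (∑ ν, lp.single 1 (ν, k) (modeCoeff S V ν • z)) := by
        simp [modeLift, lp.single_smul, -Complex.real_smul]
    _ ≤ ∑ _ν : Mode n, D * (ρ k * ‖z‖ₑ) :=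
        (weightedNorm_sum_le _ _ _).trans (Finset.sum_le_sum fun ν _ => single_le ν)
    _ = Fintype.card (Mode n) * D * (ρ k * ‖z‖ₑ) := by simp [mul_assoc]

end Linearization

section CoefficientEquation

variable {n : ℕ} (δ : ℝ≥0)

/-- The pairing `(z, w) ↦ z * conj w`. -/
noncomputable def mulConj : ℂ →L[ℝ] ℂ →L[ℝ] ℂ :=
  (ContinuousLinearMap.mul ℝ ℂ).bilinearComp (.id ℝ ℂ) (Complex.conjCLE : ℂ →L[ℝ] ℂ)

theorem mulConj_apply (z w : ℂ) : mulConj z w = z * conj w := rfl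

/-- Günther's right inverse: a bilinear map into `ModeSpace n` whose linearized metric is minus the
quadratic metric, on the exponentials with indices `a` and `b`. -/
noncomputable def guntherKernel (a b : Mode n × (Fin n → ℤ)) : ℂ →L[ℝ] ℂ →L[ℝ] ModeSpace n :=
  if a.1 = b.1 then
    ContinuousLinearMap.compL ℝ ℂ ℂ (ModeSpace n)
      (modeLift (guntherMatrix (freq (a.2 + modeIndex a.1)) (freq (b.2 + modeIndex b.1)))
        (guntherVector (freq (a.2 + modeIndex a.1)) (freq (b.2 + modeIndex b.1)))
        (a.2 - b.2)) ∘L (-(δ * laplaceSymbol a.2 * laplaceSymbol b.2)⁻¹ • mulConj)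
  else 0

theorem guntherKernel_apply (ν : Mode n) (k l : Fin n → ℤ) (z w : ℂ) :
    guntherKernel δ (ν, k) (ν, l) z w =
      modeLift (guntherMatrix (freq (k + modeIndex ν)) (freq (l + modeIndex ν)))
        (guntherVector (freq (k + modeIndex ν)) (freq (l + modeIndex ν))) (k - l)
        (-(δ * laplaceSymbol k * laplaceSymbol l)⁻¹ • (z * conj w)) := by
  simp only [guntherKernel, if_true, ContinuousLinearMap.comp_apply, _root_.smul_apply,
    ContinuousLinearMap.compL_apply, mulConj_apply]

theorem abs_modeCoeff_gunther_freq_le (k l : Fin n → ℤ) (ν ν' : Mode n) :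
    |modeCoeff (guntherMatrix (freq (k + modeIndex ν)) (freq (l + modeIndex ν)))
        (guntherVector (freq (k + modeIndex ν)) (freq (l + modeIndex ν))) ν'| ≤
      modeBound n * laplaceSymbol k * (modeBound n * laplaceSymbol l) :=
  (abs_modeCoeff_gunther_le _ _ ν').trans <|
    mul_le_mul (laplaceSymbol_add_modeIndex_le k ν) (laplaceSymbol_add_modeIndex_le l ν)
      (laplaceSymbol_pos _).le ((laplaceSymbol_pos _).le.trans (laplaceSymbol_add_modeIndex_le k ν))

variable (n) in
/-- The constant `C` in `N (B v w) ≤ C * N v * N w`, where `B` is Günther's bilinear map and `N` is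
a submultiplicatively weighted `ℓ¹` norm. -/
noncomputable def guntherBound : ℝ≥0 := Fintype.card (Mode n) * (modeBound n ^ 2 * δ⁻¹)

theorem weightedNorm_guntherKernel_le {ρ : (Fin n → ℤ) → ℝ≥0}
    (hρ : ∀ k l, ρ (k - l) ≤ ρ k * ρ l) (a b : Mode n × (Fin n → ℤ)) (z w : ℂ) :
    weightedNorm (fun a : Mode n × (Fin n → ℤ) => ρ a.2) (guntherKernel δ a b z w) ≤
      guntherBound n δ * (ρ a.2 * ‖z‖ₑ) * (ρ b.2 * ‖w‖ₑ) := by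
  obtain ⟨ν, k⟩ := a
  obtain ⟨μ, l⟩ := b
  obtain rfl | hne := eq_or_ne ν μ; swap
  · simp [guntherKernel, hne, weightedNorm_zero]
  have coeff_le := abs_modeCoeff_gunther_freq_le k l ν
  rw [guntherKernel_apply]
  have hwk := laplaceSymbol_pos k
  have hwl := laplaceSymbol_pos l
  lift laplaceSymbol k to ℝ≥0 using hwk.le with wk
  lift laplaceSymbol l to ℝ≥0 using hwl.le with wl
  norm_cast at hwk hwl
  have enorm_arg : ‖-((δ : ℝ) * wk * wl)⁻¹ • (z * conj w)‖ₑ =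
      ((δ * wk * wl)⁻¹ : ℝ≥0) * (‖z‖ₑ * ‖w‖ₑ) := by
    rw [enorm_smul, enorm_neg, enorm_mul, RCLike.enorm_conj, ← NNReal.coe_mul, ← NNReal.coe_mul,
      ← NNReal.coe_inv, NNReal.enorm_eq]
  have cancel : (modeBound n * wk) * (modeBound n * wl) * (δ * wk * wl)⁻¹ =
      modeBound n ^ 2 * δ⁻¹ := by
    field_simp
  calc _ ≤ Fintype.card (Mode n) * ((modeBound n * wk * (modeBound n * wl) : ℝ≥0) : ℝ≥0∞) *
        (ρ (k - l) * (((δ * wk * wl)⁻¹ : ℝ≥0) * (‖z‖ₑ * ‖w‖ₑ))) :=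
        enorm_arg ▸ weightedNorm_modeLift_le (by exact_mod_cast coeff_le) ρ _ _
    _ ≤ Fintype.card (Mode n) * ((modeBound n * wk * (modeBound n * wl) : ℝ≥0) : ℝ≥0∞) *
        ((ρ k * ρ l : ℝ≥0) * (((δ * wk * wl)⁻¹ : ℝ≥0) * (‖z‖ₑ * ‖w‖ₑ))) := by
        gcongr
        exact hρ k l
    _ = Fintype.card (Mode n) *
        ((modeBound n * wk * (modeBound n * wl) * (δ * wk * wl)⁻¹ : ℝ≥0) : ℝ≥0∞) *
        (ρ k * ‖z‖ₑ) * (ρ l * ‖w‖ₑ) := by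
        push_cast
        ring
    _ = guntherBound n δ * (ρ k * ‖z‖ₑ) * (ρ l * ‖w‖ₑ) := by
        rw [cancel, guntherBound]
        push_cast
        rfl

theorem norm_guntherKernel_le (a b : Mode n × (Fin n → ℤ)) :
    ‖guntherKernel δ a b‖ ≤ guntherBound n δ := by
  refine ContinuousLinearMap.opNorm_le_bound₂ _ NNReal.zero_le_coe fun z w => ?_
  have := weightedNorm_guntherKernel_le δ (ρ := 1) (by simp) a b z w
  change weightedNorm 1 _ ≤ _ at this
  simp only [← enorm_eq_weightedNorm_one, Pi.one_apply, ENNReal.coe_one, one_mul,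
    enorm_eq_nnnorm] at this
  exact_mod_cast this

/-- Günther's bilinear map on `ModeSpace n`, with `guntherKernel` as its values on pairs of
exponentials; see `linearizedMetric_guntherBilin` for its defining property. -/
noncomputable def guntherBilin : ModeSpace n →L[ℝ] ModeSpace n →L[ℝ] ModeSpace n :=
  l1Bilin (guntherKernel δ) (guntherBound n δ) (norm_guntherKernel_le δ)

variable {δ}

theorem linearizedMetric_guntherBilin (hδ : δ ≠ 0) (x : Fin n → ℝ) (i j : Fin n)
    (v w : ModeSpace n) : 2 * linearizedMetric δ x i j (guntherBilin δ v w) =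
      -(quadraticMetric x i j v w + quadraticMetric x j i v w) := by
  suffices h : (2 : ℝ) • ContinuousLinearMap.compL ℝ (ModeSpace n) (ModeSpace n) ℝ
      (linearizedMetric δ x i j) ∘L guntherBilin δ =
        -(quadraticMetric x i j + quadraticMetric x j i) by
    simpa using congr($h v w)
  refine l1_ext_bilin fun ⟨ν, k⟩ ⟨μ, l⟩ z w => ?_
  have hwk := (laplaceSymbol_pos k).ne'
  have hwl := (laplaceSymbol_pos l).ne'
  suffices h : 2 * linearizedMetric δ x i j (guntherKernel δ (ν, k) (μ, l) z w) =
      -(quadraticMetric x i j (lp.single 1 (ν, k) z) (lp.single 1 (μ, l) w) +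
        quadraticMetric x j i (lp.single 1 (ν, k) z) (lp.single 1 (μ, l) w)) by
    simpa [guntherBilin, l1Bilin_single] using h
  rw [quadraticMetric_single, quadraticMetric_single]
  obtain rfl | hne := eq_or_ne ν μ; swap
  · simp [guntherKernel, hne]
  simp only [if_true]
  have sub_freq : freq (k + modeIndex ν) - freq (l + modeIndex ν) = freq (k - l) := by
    rw [freq_add, freq_add, freq_sub]
    abel
  have identity := gunther_identity (freq (k + modeIndex ν)) (freq (l + modeIndex ν)) i j
  rw [sub_freq, add_comm (_ + _), ← laplaceSymbol] at identity
  rw [guntherKernel_apply, linearizedMetric_modeLift, mul_smul_comm, Complex.smul_re, smul_eq_mul,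
    ← identity]
  have hw := (laplaceSymbol_pos (k - l)).ne'
  field_simp

variable (δ)

theorem abs_modeCoeff_single_le (p q : Fin n) (ν : Mode n) :
    |modeCoeff (Matrix.single p q 1) 0 ν| ≤ (1 : ℝ≥0) := by
  have entry_le : |Matrix.single p q (1 : ℝ) ν.1 ν.2.1| ≤ 1 := by
    rw [Matrix.single_apply]
    split_ifs <;> simp
  have : 1 ≤ 64 * Real.pi ^ 2 := by nlinarith [Real.pi_gt_three]
  simpa [modeCoeff, abs_div, abs_mul, abs_intUnits] using
    div_le_one_of_le₀ (entry_le.trans this) (by positivity)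

/-- The exponential at the frequency `k` of the right inverse `sourceLift` of the linearized
metric. -/
noncomputable def sourceKernel (k : Fin n → ℤ) : (Fin n → Fin n → ℂ) →L[ℝ] ModeSpace n :=
  ∑ p, ∑ q, modeLift (Matrix.single p q 1) 0 k ∘L ((δ⁻¹ : ℝ) •
    ContinuousLinearMap.proj q ∘L ContinuousLinearMap.proj (R := ℝ) (φ := fun _ => Fin n → ℂ) p)

theorem sourceKernel_apply (k : Fin n → ℤ) (c : Fin n → Fin n → ℂ) :
    sourceKernel δ k c = ∑ p, ∑ q, modeLift (Matrix.single p q 1) 0 k ((δ⁻¹ : ℝ) • c p q) := by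
  simp only [sourceKernel, _root_.sum_apply, ContinuousLinearMap.comp_apply, _root_.smul_apply,
    ContinuousLinearMap.proj_apply]

variable (n) in
/-- The norm of `sourceLift` is at most this constant. -/
noncomputable def sourceBound : ℝ≥0 := n * n * (Fintype.card (Mode n) * δ⁻¹)

theorem weightedNorm_sourceKernel_le (ρ : (Fin n → ℤ) → ℝ≥0) (k : Fin n → ℤ)
    (c : Fin n → Fin n → ℂ) :
    weightedNorm (fun a : Mode n × (Fin n → ℤ) => ρ a.2) (sourceKernel δ k c) ≤
      sourceBound n δ * (ρ k * ‖c‖ₑ) := by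
  have entry_le (p q : Fin n) : weightedNorm (fun a : Mode n × (Fin n → ℤ) => ρ a.2)
      (modeLift (Matrix.single p q 1) 0 k ((δ⁻¹ : ℝ) • c p q)) ≤
        Fintype.card (Mode n) * (ρ k * ((δ⁻¹ : ℝ≥0) * ‖c‖ₑ)) := by
    refine (weightedNorm_modeLift_le (abs_modeCoeff_single_le p q) ρ k _).trans ?_
    rw [enorm_smul, ENNReal.coe_one, mul_one, ← NNReal.coe_inv, NNReal.enorm_eq]
    gcongr
    exact enorm_le_iff_norm_le.2 ((norm_le_pi_norm (c p) q).trans (norm_le_pi_norm c p))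
  rw [sourceKernel_apply]
  calc _ ≤ ∑ _p : Fin n, ∑ _q : Fin n, Fintype.card (Mode n) * (ρ k * ((δ⁻¹ : ℝ≥0) * ‖c‖ₑ)) :=
        (weightedNorm_sum_le _ _ _).trans <| Finset.sum_le_sum fun p _ =>
          (weightedNorm_sum_le _ _ _).trans <| Finset.sum_le_sum fun q _ => entry_le p q
    _ = sourceBound n δ * (ρ k * ‖c‖ₑ) := by
        simp only [Finset.sum_const, Finset.card_univ, Fintype.card_fin, nsmul_eq_mul, sourceBound]
        push_cast
        ring

theorem norm_sourceKernel_le (k : Fin n → ℤ) :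
    ‖sourceKernel δ k‖ ≤ sourceBound n δ := by
  refine ContinuousLinearMap.opNorm_le_bound _ NNReal.zero_le_coe fun c => ?_
  have := weightedNorm_sourceKernel_le δ 1 k c
  change weightedNorm 1 _ ≤ _ at this
  simp only [← enorm_eq_weightedNorm_one, Pi.one_apply, ENNReal.coe_one, one_mul,
    enorm_eq_nnnorm] at this
  exact_mod_cast this

/-- A right inverse of the linearized metric: see `linearizedMetric_sourceLift`. -/
noncomputable def sourceLift :
    lp (fun _ : Fin n → ℤ => Fin n → Fin n → ℂ) 1 →L[ℝ] ModeSpace n :=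
  l1Lift (sourceKernel δ) (sourceBound n δ) (norm_sourceKernel_le δ)

variable {δ}

theorem linearizedMetric_sourceKernel (hδ : δ ≠ 0) (x : Fin n → ℝ) (i j : Fin n)
    (k : Fin n → ℤ) (c : Fin n → Fin n → ℂ) : 2 * linearizedMetric δ x i j (sourceKernel δ k c) =
      (laplaceSymbol k)⁻¹ * (character k x * (c i j + c j i)).re := by
  have hδ' : (δ : ℝ) ≠ 0 := by exact_mod_cast hδ
  have entry (p q : Fin n) :
      2 * linearizedMetric δ x i j (modeLift (Matrix.single p q 1) 0 k ((δ⁻¹ : ℝ) • c p q)) =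
        (laplaceSymbol k)⁻¹ * ((if p = i ∧ q = j then (character k x * c p q).re else 0) +
          (if p = j ∧ q = i then (character k x * c p q).re else 0)) := by
    rw [linearizedMetric_modeLift, mul_smul_comm, Complex.smul_re, smul_eq_mul]
    simp only [Matrix.single_apply, Pi.zero_apply, zero_mul, add_zero]
    field_simp
    split_ifs <;> ring
  simp only [sourceKernel_apply, map_sum, Finset.mul_sum, entry, mul_add (character k x),
    Complex.add_re]
  simp only [ite_and, ← Finset.mul_sum, Finset.sum_add_distrib]
  simp

theorem linearizedMetric_sourceLift (hδ : δ ≠ 0) (x : Fin n → ℝ) (i j : Fin n)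
    (c : lp (fun _ : Fin n → ℤ => Fin n → Fin n → ℂ) 1) :
    2 * linearizedMetric δ x i j (sourceLift δ c) =
      ∑' k, (laplaceSymbol k)⁻¹ * (character k x * (c k i j + c k j i)).re := by
  rw [sourceLift, l1Lift_apply, ContinuousLinearMap.map_tsum _
    (l1_summable_apply (norm_sourceKernel_le δ) c), ← tsum_mul_left]
  simp only [linearizedMetric_sourceKernel hδ]

end CoefficientEquation

section RapidDecay

variable {n : ℕ} {V : Type*} [NormedAddCommGroup V]

/-- Fourier coefficients that decay faster than any power of the frequency, stated as summability
against all polynomial weights. -/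
def RapidDecay (c : (Fin n → ℤ) → V) : Prop :=
  ∀ t : ℕ, Summable fun k => (1 + ‖k‖) ^ t * ‖c k‖

/-- The weight `(1 + ‖k‖ / R) ^ t`. -/
noncomputable def latticeWeight (R : ℝ≥0) (t : ℕ) (k : Fin n → ℤ) : ℝ≥0 := (1 + ‖k‖₊ / R) ^ t

theorem latticeWeight_sub_le (R : ℝ≥0) (t : ℕ) (k l : Fin n → ℤ) :
    latticeWeight R t (k - l) ≤ latticeWeight R t k * latticeWeight R t l := by
  rw [latticeWeight, latticeWeight, latticeWeight, ← mul_pow]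
  gcongr
  calc 1 + ‖k - l‖₊ / R ≤ 1 + (‖k‖₊ + ‖l‖₊) / R := by gcongr; exact nnnorm_sub_le k l
    _ ≤ 1 + (‖k‖₊ + ‖l‖₊) / R + ‖k‖₊ / R * (‖l‖₊ / R) := le_self_add
    _ = (1 + ‖k‖₊ / R) * (1 + ‖l‖₊ / R) := by ring

theorem one_add_pow_le_one_add_mul (y : ℝ≥0) (t : ℕ) :
    (1 + y) ^ t ≤ 1 + t * (y * (1 + y) ^ t) := by
  induction t with
  | zero => simp
  | succ t ih =>
    calc (1 + y) ^ (t + 1) = (1 + y) ^ t + y * (1 + y) ^ t := by ring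
      _ ≤ 1 + t * (y * (1 + y) ^ t) + y * (1 + y) ^ t := by gcongr
      _ = 1 + (t + 1) * (y * (1 + y) ^ t) := by ring
      _ ≤ 1 + ((t + 1 : ℕ) : ℝ≥0) * (y * (1 + y) ^ (t + 1)) := by
        push_cast
        gcongr
        · exact le_self_add
        · exact t.le_succ

theorem latticeWeight_le_add {R : ℝ≥0} (hR : 1 ≤ R) (t : ℕ) (k : Fin n → ℤ) :
    latticeWeight R t k ≤ 1 + t / R * latticeWeight 1 (t + 1) k := by
  calc latticeWeight R t k ≤ 1 + t * (‖k‖₊ / R * (1 + ‖k‖₊ / R) ^ t) :=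
        one_add_pow_le_one_add_mul _ t
    _ ≤ 1 + t * ((1 + ‖k‖₊) / R * (1 + ‖k‖₊) ^ t) := by
        gcongr
        · exact le_add_self
        · exact div_le_self zero_le hR
    _ = 1 + t / R * latticeWeight 1 (t + 1) k := by
        rw [latticeWeight, div_one]
        ring

theorem latticeWeight_one_le {R : ℝ≥0} (hR : 1 ≤ R) (t : ℕ) (k : Fin n → ℤ) :
    latticeWeight 1 t k ≤ R ^ t * latticeWeight R t k := by
  rw [latticeWeight, latticeWeight, ← mul_pow, mul_add, mul_div_cancel₀ _ (by positivity), mul_one,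
    div_one]
  gcongr

theorem weightedNorm_ne_top_iff {ι : Type*} (ρ : ι → ℝ≥0) (v : lp (fun _ : ι => V) 1) :
    weightedNorm ρ v ≠ ⊤ ↔ Summable fun i => (ρ i : ℝ) * ‖v i‖ := by
  simp only [weightedNorm, enorm_eq_nnnorm, ← ENNReal.coe_mul,
    ENNReal.tsum_coe_ne_top_iff_summable, ← NNReal.summable_coe, NNReal.coe_mul, coe_nnnorm]

theorem RapidDecay.weightedNorm_ne_top {v : lp (fun _ : Fin n → ℤ => V) 1} (hv : RapidDecay v)
    (t : ℕ) : weightedNorm (latticeWeight 1 t) v ≠ ⊤ := by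
  rw [weightedNorm_ne_top_iff]
  simpa [latticeWeight] using hv t

theorem RapidDecay.exists_weightedNorm_le {v : lp (fun _ : Fin n → ℤ => V) 1} (hv : RapidDecay v)
    {ε : ℝ≥0} (hε : ‖v‖₊ < ε) (t : ℕ) :
    ∃ R : ℝ≥0, 1 ≤ R ∧ weightedNorm (latticeWeight R t) v ≤ ε := by
  lift weightedNorm (latticeWeight 1 (t + 1)) v to ℝ≥0 using hv.weightedNorm_ne_top (t + 1)
    with W hW
  refine ⟨1 + t * W / (ε - ‖v‖₊), le_self_add, ?_⟩
  set R := 1 + t * W / (ε - ‖v‖₊)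
  calc weightedNorm (latticeWeight R t) v
      ≤ ∑' k, (1 * ‖v k‖ₑ + (t / R : ℝ≥0) * (latticeWeight 1 (t + 1) k * ‖v k‖ₑ)) := by
        refine ENNReal.tsum_le_tsum fun k => ?_
        rw [← mul_assoc, ← add_mul]
        gcongr
        exact_mod_cast latticeWeight_le_add le_self_add t k
    _ = ‖v‖₊ + (t / R * W : ℝ≥0) := by
        rw [ENNReal.tsum_add, ENNReal.tsum_mul_left, ENNReal.tsum_mul_left, ENNReal.coe_mul, hW,
          one_mul, ← enorm_eq_nnnorm, enorm_eq_weightedNorm_one]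
        simp [weightedNorm]
    _ ≤ ε := by
        norm_cast
        have gap : 0 < ε - ‖v‖₊ := tsub_pos_of_lt hε
        have : t / R * W ≤ ε - ‖v‖₊ := by
          rw [div_mul_eq_mul_div, div_le_iff₀ (by positivity), mul_add, mul_one,
            mul_div_cancel₀ _ gap.ne']
          exact le_add_self
        calc ‖v‖₊ + t / R * W ≤ ‖v‖₊ + (ε - ‖v‖₊) := by gcongr
          _ = ε := add_tsub_cancel_of_le hε.le

end RapidDecay

section CoefficientSolution

variable {n : ℕ} {δ : ℝ≥0}

theorem rapidDecay_of_weightedNorm_ne_top {v : ModeSpace n} {R : ℕ → ℝ≥0} (hR : ∀ t, 1 ≤ R t)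
    (hv : ∀ t, weightedNorm (fun a : Mode n × (Fin n → ℤ) => latticeWeight (R t) t a.2) v ≠ ⊤)
    (ν : Mode n) : RapidDecay fun k => v (ν, k) := by
  intro t
  have summable_weight := (weightedNorm_ne_top_iff _ _).1 (hv t)
  refine .of_nonneg_of_le (fun k => by positivity) (fun k => ?_) <|
    (summable_weight.comp_injective (Prod.mk_right_injective ν)).mul_left (R t ^ t : ℝ)
  have := latticeWeight_one_le (hR t) t k
  rw [Function.comp_apply, ← mul_assoc]
  gcongr
  rw [latticeWeight, div_one] at this
  exact_mod_cast this

theorem exists_coefficients_metric_eq (hδ : δ ≠ 0) : ∃ η : ℝ≥0, 0 < η ∧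
    ∀ c : lp (fun _ : Fin n → ℤ => Fin n → Fin n → ℂ) 1, RapidDecay c → ‖c‖₊ < η →
      ∃ v : ModeSpace n, (∀ ν, RapidDecay fun k => v (ν, k)) ∧ ∀ x i j,
        2 * linearizedMetric δ x i j v + (quadraticMetric x i j v v + quadraticMetric x j i v v) =
          ∑' k, (laplaceSymbol k)⁻¹ * (character k x * (c k i j + c k j i)).re := by
  set r : ℝ≥0 := (4 * (guntherBound n δ + 1))⁻¹
  refine ⟨r / 2 / (sourceBound n δ + 1), by positivity, fun c hc hcη => ?_⟩
  choose R hR hcR using hc.exists_weightedNorm_le hcη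
  let ρ (t : ℕ) (a : Mode n × (Fin n → ℤ)) : ℝ≥0 := latticeWeight (R t) t a.2
  have guntherBilin_le (t : ℕ) (v w : ModeSpace n) : weightedNorm (ρ t) (guntherBilin δ v w) ≤
      guntherBound n δ * weightedNorm (ρ t) v * weightedNorm (ρ t) w :=
    l1Bilin_subadditive_le (lowerSemicontinuous_weightedNorm _) (weightedNorm_zero _)
      (weightedNorm_add_le _) (weightedNorm_guntherKernel_le δ (latticeWeight_sub_le (R t) t)) v w
  have sourceLift_le (t : ℕ) : weightedNorm (ρ t) (sourceLift δ c) ≤ (r / 2 : ℝ≥0) := by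
    calc weightedNorm (ρ t) (sourceLift δ c)
        ≤ sourceBound n δ * weightedNorm (latticeWeight (R t) t) c :=
          l1Lift_subadditive_le (lowerSemicontinuous_weightedNorm _) (weightedNorm_zero _)
            (weightedNorm_add_le _) (weightedNorm_sourceKernel_le δ _) c
      _ ≤ sourceBound n δ * (r / 2 / (sourceBound n δ + 1) : ℝ≥0) := by gcongr; exact hcR t
      _ ≤ (r / 2 : ℝ≥0) := by
        norm_cast
        rw [mul_div_left_comm]
        exact mul_le_of_le_one_right' (div_le_one_of_le₀ le_self_add zero_le)
  have enorm_eq (v : ModeSpace n) : weightedNorm (ρ 0) v = ‖v‖₊ := by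
    rw [← enorm_eq_nnnorm, enorm_eq_weightedNorm_one]
    congr 1
  obtain ⟨v, hv, hvr⟩ := exists_quadratic_fixedPoint (B := guntherBilin δ) (C := guntherBound n δ)
    (r := r) (f := sourceLift δ c) (N := fun t => weightedNorm (ρ t))
    (fun v w => by exact_mod_cast (by simpa only [enorm_eq] using guntherBilin_le 0 v w :
      (‖guntherBilin δ v w‖₊ : ℝ≥0∞) ≤ guntherBound n δ * ‖v‖₊ * ‖w‖₊))
    (mul_inv_le_one_of_le₀ (by gcongr; exact le_self_add) zero_le)
    (fun t => lowerSemicontinuous_weightedNorm (ρ t)) (fun t => weightedNorm_add_le (ρ t))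
    (fun t v => guntherBilin_le t v v) (by exact_mod_cast enorm_eq _ ▸ sourceLift_le 0)
    sourceLift_le
  refine ⟨v, ?_, fun x i j => ?_⟩
  · exact rapidDecay_of_weightedNorm_ne_top hR fun t => ((hvr t).trans_lt ENNReal.coe_lt_top).ne
  · rw [← linearizedMetric_sourceLift hδ]
    nth_rw 1 [hv]
    rw [map_add, mul_add, linearizedMetric_guntherBilin hδ]
    ring

end CoefficientSolution

section FourierSeries

variable {n : ℕ}

theorem RapidDecay.of_norm_le {V W : Type*} [NormedAddCommGroup V] [NormedAddCommGroup W]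
    {c : (Fin n → ℤ) → V} (hc : RapidDecay c) {d : (Fin n → ℤ) → W} (C : ℝ) (s : ℕ)
    (hd : ∀ k, ‖d k‖ ≤ C * ((1 + ‖k‖) ^ s * ‖c k‖)) : RapidDecay d := fun t =>
  .of_nonneg_of_le (fun k => by positivity) (fun k => by
    calc (1 + ‖k‖) ^ t * ‖d k‖ ≤ (1 + ‖k‖) ^ t * (C * ((1 + ‖k‖) ^ s * ‖c k‖)) := by
          gcongr; exact hd k
      _ = C * ((1 + ‖k‖) ^ (t + s) * ‖c k‖) := by ring) ((hc (t + s)).mul_left C)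

theorem RapidDecay.summable_norm {V : Type*} [NormedAddCommGroup V] {c : (Fin n → ℤ) → V}
    (hc : RapidDecay c) : Summable fun k => ‖c k‖ := by
  simpa using hc 0

/-- The function with Fourier coefficients `c`. -/
noncomputable def fourierSeries (c : (Fin n → ℤ) → ℂ) (x : Fin n → ℝ) : ℂ :=
  ∑' k, c k * character k x

theorem RapidDecay.summable_fourierSeries {c : (Fin n → ℤ) → ℂ} (hc : RapidDecay c)
    (x : Fin n → ℝ) : Summable fun k => c k * character k x :=
  .of_norm <| by simpa [norm_character] using hc.summable_norm

/-- The Fourier coefficients of the `j`-th partial derivative. -/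
noncomputable def derivCoeff (j : Fin n) (c : (Fin n → ℤ) → ℂ) (k : Fin n → ℤ) : ℂ :=
  freq k j * Complex.I * c k

theorem abs_freq_le (k : Fin n → ℤ) (j : Fin n) : |freq k j| ≤ 2 * Real.pi * ‖k‖ := by
  rw [freq, abs_mul, abs_of_pos Real.two_pi_pos, ← Int.norm_eq_abs]
  gcongr
  exact norm_le_pi_norm k j

theorem norm_derivCoeff_le (j : Fin n) (c : (Fin n → ℤ) → ℂ) (k : Fin n → ℤ) :
    ‖derivCoeff j c k‖ ≤ 2 * Real.pi * ((1 + ‖k‖) ^ 1 * ‖c k‖) := by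
  simp only [derivCoeff, norm_mul, Complex.norm_I, mul_one, Complex.norm_real,
    Real.norm_eq_abs, pow_one, ← mul_assoc]
  gcongr
  linarith [abs_freq_le k j, Real.pi_pos]

theorem RapidDecay.derivCoeff {c : (Fin n → ℤ) → ℂ} (hc : RapidDecay c) (j : Fin n) :
    RapidDecay (derivCoeff j c) :=
  hc.of_norm_le (2 * Real.pi) 1 (norm_derivCoeff_le j c)

/-- The linear form `v ↦ ∑ j, b j * v j` with complex coefficients. -/
noncomputable def coordForm : (Fin n → ℂ) →L[ℝ] (Fin n → ℝ) →L[ℝ] ℂ :=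
  ∑ j, ContinuousLinearMap.smulRightL ℝ (Fin n → ℝ) ℂ (ContinuousLinearMap.proj j) ∘L
    ContinuousLinearMap.proj j

theorem coordForm_apply (b : Fin n → ℂ) (v : Fin n → ℝ) : coordForm b v = ∑ j, v j • b j := by
  simp [coordForm]

theorem hasFDerivAt_character (k : Fin n → ℤ) (x : Fin n → ℝ) :
    HasFDerivAt (character k) (coordForm fun j => freq k j * Complex.I * character k x) x := by
  have phase : HasFDerivAt (fun y => freq k ⬝ᵥ y) (∑ j, freq k j •
      (ContinuousLinearMap.proj (R := ℝ) j : (Fin n → ℝ) →L[ℝ] ℝ)) x := by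
    simp only [dotProduct]
    exact HasFDerivAt.fun_sum fun j _ => (hasFDerivAt_apply j x).const_mul (freq k j)
  refine ((Complex.ofRealCLM.hasFDerivAt.comp x phase).mul_const Complex.I).cexp.congr_fderiv ?_
  ext v
  simp only [_root_.smul_apply, ContinuousLinearMap.comp_apply, _root_.sum_apply,
    ContinuousLinearMap.proj_apply, Complex.ofRealCLM_apply, smul_eq_mul, Complex.ofReal_sum,
    Complex.ofReal_mul, coordForm_apply, character, Complex.real_smul, Finset.mul_sum,
    Function.comp_apply]
  exact Finset.sum_congr rfl fun j _ => by ring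

theorem hasFDerivAt_fourierSeries {c : (Fin n → ℤ) → ℂ} (hc : RapidDecay c) (x : Fin n → ℝ) :
    HasFDerivAt (fourierSeries c) (coordForm fun j => fourierSeries (derivCoeff j c) x) x := by
  have coeff_le (k : Fin n → ℤ) (y : Fin n → ℝ) :
      ‖fun j => derivCoeff j c k * character k y‖ ≤ 2 * Real.pi * ((1 + ‖k‖) ^ 1 * ‖c k‖) := by
    refine (pi_norm_le_iff_of_nonneg (by positivity)).2 fun j => ?_
    rw [norm_mul, norm_character, mul_one]
    exact norm_derivCoeff_le j c k
  have summable_coeff : Summable fun k => fun j => derivCoeff j c k * character k x :=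
    .of_norm_bounded ((hc 1).mul_left _) fun k => coeff_le k x
  have := hasFDerivAt_tsum
    (((hc 1).mul_left (2 * Real.pi)).mul_left ‖(coordForm : (Fin n → ℂ) →L[ℝ] _)‖)
    (fun k y => ((hasFDerivAt_character k y).const_mul (c k)).congr_fderiv
      (g' := coordForm fun j => derivCoeff j c k * character k y) <| by
        ext v
        simp only [_root_.smul_apply, coordForm_apply, derivCoeff, smul_eq_mul, Finset.mul_sum,
          Complex.real_smul]
        exact Finset.sum_congr rfl fun j _ => by ring)
    (fun k y => coordForm.le_opNorm_of_le (coeff_le k y)) (hc.summable_fourierSeries 0) x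
  refine this.congr_fderiv ?_
  rw [← ContinuousLinearMap.map_tsum _ summable_coeff]
  congr 1
  ext j
  exact tsum_apply summable_coeff

theorem contDiff_fourierSeries {c : (Fin n → ℤ) → ℂ} (hc : RapidDecay c) :
    ContDiff ℝ ∞ (fourierSeries c) := by
  rw [contDiff_infty]
  intro N
  induction N generalizing c with
  | zero =>
    exact contDiff_zero.2 (continuous_iff_continuousAt.2 fun x =>
      (hasFDerivAt_fourierSeries hc x).continuousAt)
  | succ N ih =>
    refine contDiff_succ_iff_hasFDerivAt.2 ⟨_, ?_, hasFDerivAt_fourierSeries hc⟩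
    exact coordForm.contDiff.comp (contDiff_pi.2 fun j => ih (hc.derivCoeff j))

end FourierSeries

section PeriodicImmersion

variable {n : ℕ} {δ : ℝ≥0}

/-- Fourier coefficients of `p_ν`, given the coefficients of `(1 - Δ) p`. -/
noncomputable def modeFunctionCoeff (v : ModeSpace n) (ν : Mode n) (k : Fin n → ℤ) : ℂ :=
  (laplaceSymbol k)⁻¹ • v (ν, k)

/-- The component `e_{m_ν} (δ + p_ν)` of the periodic immersion. -/
noncomputable def modeFunction (δ : ℝ) (v : ModeSpace n) (ν : Mode n) (x : Fin n → ℝ) : ℂ :=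
  character (modeIndex ν) x * (δ + fourierSeries (modeFunctionCoeff v ν) x)

theorem rapidDecay_modeFunctionCoeff {v : ModeSpace n} {ν : Mode n}
    (hv : RapidDecay fun k => v (ν, k)) : RapidDecay (modeFunctionCoeff v ν) :=
  hv.of_norm_le 1 0 fun k => by
    rw [modeFunctionCoeff, norm_smul, norm_inv, Real.norm_of_nonneg (laplaceSymbol_pos k).le,
      pow_zero, one_mul]
    gcongr
    exact inv_le_one_of_one_le₀ (one_le_laplaceSymbol k)

theorem contDiff_character (k : Fin n → ℤ) : ContDiff ℝ ∞ (character k) := by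
  have phase : ContDiff ℝ ∞ fun x => freq k ⬝ᵥ x := by
    simp only [dotProduct]
    fun_prop
  exact ((Complex.ofRealCLM.contDiff.comp phase).mul contDiff_const).cexp

theorem modeDeriv_eq_tsum (x : Fin n → ℝ) (ν : Mode n) (i : Fin n) (v : ModeSpace n) :
    modeDeriv x ν i v =
      ∑' k, freq (k + modeIndex ν) i * modeFunctionCoeff v ν k * character k x := by
  rw [modeDeriv, l1Lift_apply, ← (Prod.mk_right_injective ν).tsum_eq]
  · refine tsum_congr fun k => ?_
    simp [modeFunctionCoeff]
    ring
  · rintro ⟨μ, k⟩ ha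
    by_contra hμ
    exact ha (by simp [show μ ≠ ν from fun h => hμ ⟨k, by rw [h]⟩])

theorem fderiv_modeFunction_single (x : Fin n → ℝ) {v : ModeSpace n} {ν : Mode n}
    (hv : RapidDecay fun k => v (ν, k)) (i : Fin n) :
    fderiv ℝ (modeFunction δ v ν) x (Pi.single i 1) =
      Complex.I * character (modeIndex ν) x * (δ * freq (modeIndex ν) i + modeDeriv x ν i v) := by
  have hp := rapidDecay_modeFunctionCoeff hv
  have product : HasFDerivAt (modeFunction δ v ν) _ x :=
    (hasFDerivAt_character (modeIndex ν) x).mul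
      ((hasFDerivAt_fourierSeries hp x).const_add (δ : ℂ))
  have shifted : modeDeriv x ν i v = -Complex.I * fourierSeries (derivCoeff i
      (modeFunctionCoeff v ν)) x + freq (modeIndex ν) i *
        fourierSeries (modeFunctionCoeff v ν) x := by
    rw [modeDeriv_eq_tsum, fourierSeries, fourierSeries, ← tsum_mul_left, ← tsum_mul_left,
      ← (((hp.derivCoeff i).summable_fourierSeries x).mul_left _).tsum_add
        ((hp.summable_fourierSeries x).mul_left _)]
    refine tsum_congr fun k => ?_
    rw [freq_add, derivCoeff, Pi.add_apply, Complex.ofReal_add]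
    linear_combination freq k i * modeFunctionCoeff v ν k * character k x * Complex.I_sq
  rw [shifted, product.fderiv]
  simp only [_root_.add_apply, _root_.smul_apply, coordForm_apply, Pi.single_apply, ite_smul,
    one_smul, zero_smul, Finset.sum_ite_eq', Finset.mem_univ, if_true, smul_eq_mul]
  linear_combination character (modeIndex ν) x * fourierSeries (derivCoeff i
      (modeFunctionCoeff v ν)) x * Complex.I_sq

theorem laplaceSymbol_le (k : Fin n → ℤ) :
    laplaceSymbol k ≤ (1 + n * (2 * Real.pi) ^ 2) * (1 + ‖k‖) ^ 2 := by
  have sum_le : freq k ⬝ᵥ freq k ≤ n * (2 * Real.pi * ‖k‖) ^ 2 := by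
    refine (Finset.sum_le_card_nsmul Finset.univ _ ((2 * Real.pi * ‖k‖) ^ 2) fun j _ => ?_).trans_eq
      (by simp)
    rw [← pow_two]
    exact sq_le_sq' (neg_le_of_abs_le (abs_freq_le k j)) (le_of_abs_le (abs_freq_le k j))
  rw [laplaceSymbol]
  nlinarith [norm_nonneg k, mul_nonneg (by positivity : 0 ≤ n * (2 * Real.pi) ^ 2)
    (norm_nonneg k)]

theorem inner_unit_mul {e : ℂ} (he : ‖e‖ = 1) (a b : ℂ) :
    inner ℝ (e * a) (e * b) = inner ℝ a b := by
  have : e.re * e.re + e.im * e.im = 1 := by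
    rw [← Complex.normSq_apply, Complex.normSq_eq_norm_sq, he, one_pow]
  simp only [Complex.inner, Complex.mul_re, Complex.mul_im, Complex.conj_re, Complex.conj_im]
  linear_combination (a.re * b.re + a.im * b.im) * this

theorem two_mul_sum_inner_fderiv_modeFunction (x : Fin n → ℝ) {v : ModeSpace n}
    (hv : ∀ ν, RapidDecay fun k => v (ν, k)) (i j : Fin n) :
    2 * ∑ ν, inner ℝ (fderiv ℝ (modeFunction δ v ν) x (Pi.single i 1))
        (fderiv ℝ (modeFunction δ v ν) x (Pi.single j 1)) =
      2 * (δ ^ 2 * ∑ ν : Mode n, freq (modeIndex ν) i * freq (modeIndex ν) j) +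
        (2 * linearizedMetric δ x i j v +
          (quadraticMetric x i j v v + quadraticMetric x j i v v)) := by
  simp only [fderiv_modeFunction_single x (hv _), linearizedMetric, quadraticMetric,
    _root_.smul_apply, _root_.sum_apply, _root_.add_apply, ContinuousLinearMap.comp_apply,
    ContinuousLinearMap.bilinearComp_apply, innerSL_apply_apply, Finset.mul_sum, smul_eq_mul,
    ← Finset.sum_add_distrib, Complex.reCLM_apply]
  refine Finset.sum_congr rfl fun ν _ => ?_
  rw [inner_unit_mul (by rw [norm_mul, Complex.norm_I, norm_character, one_mul])]
  simp only [Complex.inner, Complex.mul_re, Complex.add_re, Complex.add_im, Complex.mul_im,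
    Complex.ofReal_re, Complex.ofReal_im, Complex.conj_re, Complex.conj_im]
  ring

theorem exists_periodic_immersion (hδ : δ ≠ 0) : ∃ η : ℝ, 0 < η ∧
    ∀ c : (Fin n → ℤ) → Fin n → Fin n → ℂ, RapidDecay c →
      ∑' k, laplaceSymbol k * ‖c k‖ < η → ∃ u : Mode n → (Fin n → ℝ) → ℂ,
        (∀ ν, ContDiff ℝ ∞ (u ν)) ∧ ∀ x i j,
          2 * ∑ ν, inner ℝ (fderiv ℝ (u ν) x (Pi.single i 1)) (fderiv ℝ (u ν) x (Pi.single j 1)) =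
            2 * (δ ^ 2 * ∑ ν : Mode n, freq (modeIndex ν) i * freq (modeIndex ν) j) +
              (fourierSeries (fun k => c k i j) x + fourierSeries (fun k => c k j i) x).re := by
  obtain ⟨η, hη, solve⟩ := exists_coefficients_metric_eq (n := n) hδ
  refine ⟨η, hη, fun c hc hcη => ?_⟩
  have norm_weighted (k : Fin n → ℤ) : ‖laplaceSymbol k • c k‖ = laplaceSymbol k * ‖c k‖ := by
    rw [norm_smul, Real.norm_of_nonneg (laplaceSymbol_pos k).le]
  have weighted_decay : RapidDecay fun k => laplaceSymbol k • c k :=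
    hc.of_norm_le (1 + n * (2 * Real.pi) ^ 2) 2 fun k => by
      rw [norm_weighted, ← mul_assoc]
      gcongr
      exact laplaceSymbol_le k
  let weighted : lp (fun _ : Fin n → ℤ => Fin n → Fin n → ℂ) 1 :=
    ⟨fun k => laplaceSymbol k • c k, memℓp_gen (by simpa using weighted_decay.summable_norm)⟩
  obtain ⟨v, hv, metric_eq⟩ := solve weighted weighted_decay <| by
    rw [← NNReal.coe_lt_coe, coe_nnnorm, l1_norm_eq_tsum]
    exact (tsum_congr norm_weighted).trans_lt hcη
  refine ⟨modeFunction δ v, fun ν => (contDiff_character _).mul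
    (contDiff_const.add (contDiff_fourierSeries (rapidDecay_modeFunctionCoeff (hv ν)))),
    fun x i j => ?_⟩
  have entry_decay (i j : Fin n) : RapidDecay fun k => c k i j :=
    hc.of_norm_le 1 0 fun k => by
      simpa using (norm_le_pi_norm (c k i) j).trans (norm_le_pi_norm (c k) i)
  rw [two_mul_sum_inner_fderiv_modeFunction x hv, metric_eq, fourierSeries, fourierSeries,
    ← ((entry_decay i j).summable_fourierSeries x).tsum_add
      ((entry_decay j i).summable_fourierSeries x), Complex.re_tsum
      (((entry_decay i j).summable_fourierSeries x).add
        ((entry_decay j i).summable_fourierSeries x))]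
  refine congrArg _ (tsum_congr fun k => ?_)
  have := (laplaceSymbol_pos k).ne'
  simp only [weighted, Pi.smul_apply, ← smul_add, mul_smul_comm, Complex.smul_re, smul_eq_mul]
  rw [inv_mul_cancel_left₀ this, mul_add, mul_comm, mul_comm (c k j i)]

end PeriodicImmersion

section FourierCoefficients

variable {n : ℕ}

/-- Periodicity with respect to the lattice `ℤⁿ`. -/
def UnitPeriodic {V : Type*} (G : (Fin n → ℝ) → V) : Prop :=
  ∀ i, Function.Periodic G (Pi.single i 1)

theorem unitPeriodic_character (k : Fin n → ℤ) : UnitPeriodic (character k) := by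
  intro i x
  have phase : freq k ⬝ᵥ (x + Pi.single i 1) = freq k ⬝ᵥ x + 2 * Real.pi * k i := by
    rw [dotProduct_add, dotProduct_single, mul_one, freq]
  rw [character, character, phase]
  push_cast
  rw [show (((freq k ⬝ᵥ x : ℝ) : ℂ) + 2 * Real.pi * k i) * Complex.I =
    ((freq k ⬝ᵥ x : ℝ) : ℂ) * Complex.I + k i * (2 * Real.pi * Complex.I) by ring, Complex.exp_add,
    Complex.exp_int_mul_two_pi_mul_I, mul_one]

/-- The partial derivative `∂ᵢ G`. -/
noncomputable def partialDeriv {V : Type*} [NormedAddCommGroup V] [NormedSpace ℝ V] (i : Fin n)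
    (G : (Fin n → ℝ) → V) (x : Fin n → ℝ) : V :=
  fderiv ℝ G x (Pi.single i 1)

section Real

variable {V : Type*} [NormedAddCommGroup V] [NormedSpace ℝ V]

theorem UnitPeriodic.partialDeriv {G : (Fin n → ℝ) → V} (hper : UnitPeriodic G) (i : Fin n) :
    UnitPeriodic (partialDeriv i G) := fun j x => by
  rw [KernelPrimitive.partialDeriv, KernelPrimitive.partialDeriv,
    ← fderiv_comp_add_right (Pi.single j 1), (hper j).funext]

theorem contDiff_iterate_partialDeriv {E : Type*} [NormedAddCommGroup E] [NormedSpace ℝ E]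
    {G : E → (Fin n → ℝ) → V} (hG : ContDiff ℝ ∞ (Function.uncurry G)) (i : Fin n) (t : ℕ) :
    ContDiff ℝ ∞ (Function.uncurry fun ε => (partialDeriv i)^[t] (G ε)) := by
  induction t with
  | zero => exact hG
  | succ t ih =>
    simp only [Function.iterate_succ_apply']
    exact (ContDiff.fderiv (f := fun p : E × (Fin n → ℝ) => (partialDeriv i)^[t] (G p.1))
      (ih.comp ((contDiff_fst.comp contDiff_fst).prodMk contDiff_snd)) contDiff_snd
      le_rfl).clm_apply contDiff_const

theorem continuous_partialDeriv {G : (Fin n → ℝ) → V} (hG : ContDiff ℝ 1 G) (i : Fin n) :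
    Continuous (partialDeriv i G) :=
  (hG.continuous_fderiv one_ne_zero).clm_apply continuous_const

theorem integral_partialDeriv_eq_zero {G : (Fin n → ℝ) → V} (hG : ContDiff ℝ 1 G)
    (hper : UnitPeriodic G) (i : Fin n) :
    ∫ x in Icc (0 : Fin n → ℝ) 1, partialDeriv i G x = 0 := by
  obtain _ | n := n
  · exact i.elim0
  have divergence (x : Fin (n + 1) → ℝ) :
      ∑ j, (ContinuousLinearMap.single ℝ (fun _ => V) i ∘L fderiv ℝ G x) (Pi.single j 1) j =
        partialDeriv i G x := by
    simp [Pi.single_apply, partialDeriv]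
  have := integral_divergence_of_hasFDerivAt_off_countable (0 : Fin (n + 1) → ℝ) 1 zero_le_one
    (fun x => Pi.single i (G x))
    (fun x => ContinuousLinearMap.single ℝ (fun _ => V) i ∘L fderiv ℝ G x) ∅ countable_empty
    ((continuous_single i).comp hG.continuous).continuousOn
    (fun x _ => (ContinuousLinearMap.single ℝ (fun _ => V) i).hasFDerivAt.comp x
      (hG.differentiable one_ne_zero x).hasFDerivAt)
    (by simpa only [divergence] using
      (continuous_partialDeriv hG i).continuousOn.integrableOn_compact isCompact_Icc)
  simp only [divergence] at this
  rw [this]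
  refine Finset.sum_eq_zero fun j _ => sub_eq_zero.2 ?_
  obtain rfl | hij := eq_or_ne j i
  · congr 1 with x
    rw [Pi.single_eq_same, Pi.single_eq_same, ← hper j (j.insertNth ((0 : Fin (n + 1) → ℝ) j) x)]
    congr 1
    ext l
    cases l using Fin.succAboveCases j <;> simp
  · simp [Pi.single_eq_of_ne hij]

end Real

variable {V : Type*} [NormedAddCommGroup V] [NormedSpace ℂ V]

/-- The Fourier coefficients of a `ℤⁿ`-periodic function. -/
noncomputable def cubeCoeff (G : (Fin n → ℝ) → V) (k : Fin n → ℤ) : V :=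
  ∫ x in Icc (0 : Fin n → ℝ) 1, character (-k) x • G x

theorem norm_cubeCoeff_le {G : (Fin n → ℝ) → V} {C : ℝ} (hC : ∀ x ∈ Icc 0 1, ‖G x‖ ≤ C)
    (k : Fin n → ℤ) : ‖cubeCoeff G k‖ ≤ C := by
  have := norm_setIntegral_le_of_norm_le_const (μ := volume) (C := C)
    (f := fun x => character (-k) x • G x) isCompact_Icc.measure_lt_top fun x hx => by
      rw [norm_smul, norm_character, one_mul]
      exact hC x hx
  simpa [cubeCoeff, measureReal_def, Real.volume_Icc_pi] using this

theorem cubeCoeff_partialDeriv {G : (Fin n → ℝ) → V} (hG : ContDiff ℝ 1 G) (hper : UnitPeriodic G)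
    (i : Fin n) (k : Fin n → ℤ) :
    cubeCoeff (partialDeriv i G) k = (Complex.I * freq k i) • cubeCoeff G k := by
  have hχ : ContDiff ℝ 1 (character (-k)) := (contDiff_character _).of_le (by exact_mod_cast le_top)
  have product (x : Fin n → ℝ) : partialDeriv i (fun x => character (-k) x • G x) x =
      character (-k) x • partialDeriv i G x -
        (Complex.I * freq k i) • (character (-k) x • G x) := by
    have := ((hasFDerivAt_character (-k) x).fun_smul
      (hG.differentiable one_ne_zero x).hasFDerivAt).fderiv
    simp only [partialDeriv, this, _root_.add_apply, _root_.smul_apply,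
      ContinuousLinearMap.smulRight_apply, coordForm_apply, Pi.single_apply, ite_smul, one_smul,
      zero_smul, Finset.sum_ite_eq', Finset.mem_univ, if_true, sub_eq_add_neg, ← neg_smul,
      smul_smul]
    congr 2
    simp only [freq, Pi.neg_apply]
    push_cast
    ring
  have : ∫ x in Icc 0 1, partialDeriv i (fun x => character (-k) x • G x) x = 0 :=
    integral_partialDeriv_eq_zero (hχ.smul hG)
      (fun j x => congrArg₂ (· • ·) (unitPeriodic_character _ j x) (hper j x)) i
  simp only [product] at this
  rw [integral_sub, integral_smul, sub_eq_zero] at this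
  · exact this
  · exact (hχ.continuous.smul (continuous_partialDeriv hG i)).continuousOn.integrableOn_compact
      isCompact_Icc
  · exact ((hχ.continuous.smul hG.continuous).const_smul _).continuousOn.integrableOn_compact
      isCompact_Icc

theorem cubeCoeff_iterate_partialDeriv {G : (Fin n → ℝ) → V} (hG : ContDiff ℝ ∞ G)
    (hper : UnitPeriodic G) (i : Fin n) (t : ℕ) (k : Fin n → ℤ) :
    cubeCoeff ((partialDeriv i)^[t] G) k = (Complex.I * freq k i) ^ t • cubeCoeff G k := by
  induction t generalizing G with
  | zero => simp
  | succ t ih =>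
    have smooth : ContDiff ℝ ∞ (partialDeriv i G) :=
      (hG.fderiv_right (m := ∞) (by simp)).clm_apply contDiff_const
    rw [Function.iterate_succ_apply, ih smooth (hper.partialDeriv i),
      cubeCoeff_partialDeriv (hG.of_le (by exact_mod_cast le_top)) hper, smul_smul, pow_succ]

theorem one_add_norm_pow_mul_norm_cubeCoeff_le {G : (Fin n → ℝ) → V} (hG : ContDiff ℝ ∞ G)
    (hper : UnitPeriodic G) {t : ℕ} {C : ℝ} (hC : ∀ x ∈ Icc 0 1, ‖G x‖ ≤ C)
    (hCt : ∀ i, ∀ x ∈ Icc 0 1, ‖(partialDeriv i)^[t] G x‖ ≤ C) (k : Fin n → ℤ) :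
    (1 + ‖k‖) ^ t * ‖cubeCoeff G k‖ ≤ 2 ^ t * C := by
  obtain hk | hk := le_or_gt ‖k‖ 1
  · gcongr
    · linarith
    · exact norm_cubeCoeff_le hC k
  obtain ⟨i, hi⟩ : ∃ i, ‖k‖ ≤ ‖k i‖ := by
    by_contra! h
    exact lt_irrefl _ ((pi_norm_lt_iff (one_pos.trans hk)).2 h)
  have norm_le_freq : ‖k‖ ≤ |freq k i| := by
    rw [freq, abs_mul, abs_of_pos Real.two_pi_pos, ← Int.norm_eq_abs]
    exact hi.trans (le_mul_of_one_le_left (norm_nonneg _) (by linarith [Real.pi_gt_three]))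
  have deriv_le := norm_cubeCoeff_le (hCt i) k
  rw [cubeCoeff_iterate_partialDeriv hG hper, norm_smul, norm_pow, norm_mul, Complex.norm_I,
    one_mul, Complex.norm_real, Real.norm_eq_abs] at deriv_le
  calc (1 + ‖k‖) ^ t * ‖cubeCoeff G k‖ ≤ (2 * |freq k i|) ^ t * ‖cubeCoeff G k‖ := by
        gcongr
        linarith
    _ = 2 ^ t * (|freq k i| ^ t * ‖cubeCoeff G k‖) := by ring
    _ ≤ 2 ^ t * C := by gcongr

theorem summable_one_add_norm_pow_inv (n : ℕ) :
    Summable fun k : Fin n → ℤ => ((1 + ‖k‖) ^ (n + 1))⁻¹ := by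
  let L := Submodule.span ℤ (range (Pi.basisFun ℝ (Fin n)))
  let toLattice (k : Fin n → ℤ) : L :=
    ⟨fun i => k i, ((Pi.basisFun ℝ (Fin n)).mem_span_iff_repr_mem ℤ _).2 fun i => ⟨k i, by simp⟩⟩
  have norm_toLattice (k : Fin n → ℤ) : ‖toLattice k‖ = ‖k‖ := by
    simp only [toLattice, Submodule.coe_norm, Pi.norm_def, nnnorm, Int.norm_cast_real]
  have injective : Function.Injective toLattice := fun k l h => by
    ext i
    exact Int.cast_injective (α := ℝ) (congrFun (congrArg Subtype.val h) i)
  have summable := (ZLattice.summable_norm_zpow L (-(n + 1 : ℕ))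
    (by rw [ZLattice.rank ℝ]; simp)).comp_injective injective
  refine .of_norm_bounded_eventually summable ?_
  filter_upwards [(finite_singleton (0 : Fin n → ℤ)).compl_mem_cofinite] with k hk
  have : 0 < ‖k‖ := norm_pos_iff.2 hk
  rw [Function.comp_apply, norm_toLattice, _root_.zpow_neg, zpow_natCast,
    Real.norm_of_nonneg (by positivity)]
  gcongr
  linarith

theorem le_mul_one_add_norm_pow_inv {k : Fin n → ℤ} {t : ℕ} {a C : ℝ}
    (h : (1 + ‖k‖) ^ (t + (n + 1)) * a ≤ C) :
    (1 + ‖k‖) ^ t * a ≤ C * ((1 + ‖k‖) ^ (n + 1))⁻¹ := by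
  rw [← div_eq_mul_inv, le_div_iff₀ (by positivity)]
  exact (by ring : _ = (1 + ‖k‖) ^ (t + (n + 1)) * a).trans_le h

theorem rapidDecay_cubeCoeff {G : (Fin n → ℝ) → V} (hG : ContDiff ℝ ∞ G) (hper : UnitPeriodic G) :
    RapidDecay (cubeCoeff G) := by
  intro t
  have smooth (i : Fin n) : ContDiff ℝ ∞ ((partialDeriv i)^[t + (n + 1)] G) :=
    (contDiff_iterate_partialDeriv (E := ℝ) (G := fun _ => G) (hG.comp contDiff_snd) i
      (t + (n + 1))).comp (contDiff_prodMk_right 0)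
  obtain ⟨C, hC⟩ := isCompact_Icc.exists_bound_of_continuousOn hG.continuous.continuousOn
    (s := Icc (0 : Fin n → ℝ) 1)
  choose D hD using fun i => isCompact_Icc.exists_bound_of_continuousOn
    (s := Icc (0 : Fin n → ℝ) 1) (smooth i).continuous.continuousOn
  obtain ⟨B, hB⟩ := (finite_range D).bddAbove
  exact .of_nonneg_of_le (fun k => by positivity)
    (fun k => le_mul_one_add_norm_pow_inv <| one_add_norm_pow_mul_norm_cubeCoeff_le hG hper
      (C := max C B) (fun x hx => (hC x hx).trans (le_max_left C B))
      (fun i x hx => (hD i x hx).trans ((hB (mem_range_self i)).trans (le_max_right C B))) k)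
    ((summable_one_add_norm_pow_inv n).mul_left _)

section Family

variable {E : Type*} [NormedAddCommGroup E] [NormedSpace ℝ E] {G : E → (Fin n → ℝ) → V} {ε₀ : E}

theorem eventually_one_add_norm_pow_mul_norm_cubeCoeff_le
    (hG : ContDiff ℝ ∞ (Function.uncurry G)) (hper : ∀ ε, UnitPeriodic (G ε)) (hzero : G ε₀ = 0)
    (t : ℕ) {C : ℝ} (hC : 0 < C) :
    ∀ᶠ ε in 𝓝 ε₀, ∀ k, (1 + ‖k‖) ^ t * ‖cubeCoeff (G ε) k‖ ≤ 2 ^ t * C := by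
  have eventually_le {H : E → (Fin n → ℝ) → V} (hH : ContDiff ℝ ∞ (Function.uncurry H))
      (hzero : H ε₀ = 0) : ∀ᶠ ε in 𝓝 ε₀, ∀ x ∈ Icc 0 1, ‖H ε x‖ ≤ C :=
    isCompact_Icc.eventually_forall_of_forall_eventually fun x _ =>
      (hH.continuous.norm.continuousAt.eventually
        (gt_mem_nhds (by simpa [hzero] using hC : ‖Function.uncurry H (ε₀, x)‖ < C))).mono
        fun _ => le_of_lt
  have iterate_zero (i : Fin n) : (partialDeriv i)^[t] (G ε₀) = 0 := by
    rw [hzero]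
    exact Function.iterate_fixed (by ext; simp [partialDeriv]) t
  filter_upwards [eventually_le hG hzero, eventually_all.2 fun i =>
    eventually_le (contDiff_iterate_partialDeriv hG i t) (iterate_zero i)] with ε hε hεt
  exact one_add_norm_pow_mul_norm_cubeCoeff_le (hG.comp (contDiff_prodMk_right ε)) (hper ε) hε hεt

theorem eventually_tsum_laplaceSymbol_mul_norm_cubeCoeff_lt
    (hG : ContDiff ℝ ∞ (Function.uncurry G)) (hper : ∀ ε, UnitPeriodic (G ε)) (hzero : G ε₀ = 0)
    {η : ℝ} (hη : 0 < η) :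
    ∀ᶠ ε in 𝓝 ε₀, ∑' k, laplaceSymbol k * ‖cubeCoeff (G ε) k‖ < η := by
  set A : ℝ := 1 + n * (2 * Real.pi) ^ 2
  set S : ℝ := ∑' k : Fin n → ℤ, ((1 + ‖k‖) ^ (n + 1))⁻¹
  have hS : 0 ≤ S := tsum_nonneg fun _ => by positivity
  have hA : 0 < A := by positivity
  have hC : 0 < η / (A * (2 ^ (2 + (n + 1)) * (S + 1))) := by positivity
  filter_upwards [eventually_one_add_norm_pow_mul_norm_cubeCoeff_le hG hper hzero
    (2 + (n + 1)) hC] with ε hε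
  have summable_bound := (summable_one_add_norm_pow_inv n).mul_left (η / (S + 1))
  have term_le (k : Fin n → ℤ) : laplaceSymbol k * ‖cubeCoeff (G ε) k‖ ≤
      η / (S + 1) * ((1 + ‖k‖) ^ (n + 1))⁻¹ :=
    calc laplaceSymbol k * ‖cubeCoeff (G ε) k‖
        ≤ A * (1 + ‖k‖) ^ 2 * ‖cubeCoeff (G ε) k‖ := by gcongr; exact laplaceSymbol_le k
      _ ≤ A * (2 ^ (2 + (n + 1)) * (η / (A * (2 ^ (2 + (n + 1)) * (S + 1)))) *
            ((1 + ‖k‖) ^ (n + 1))⁻¹) := by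
          rw [mul_assoc]
          exact mul_le_mul_of_nonneg_left (le_mul_one_add_norm_pow_inv (hε k)) hA.le
      _ = η / (S + 1) * ((1 + ‖k‖) ^ (n + 1))⁻¹ := by field_simp
  calc ∑' k, laplaceSymbol k * ‖cubeCoeff (G ε) k‖
      ≤ ∑' k : Fin n → ℤ, η / (S + 1) * ((1 + ‖k‖) ^ (n + 1))⁻¹ :=
        (summable_bound.of_nonneg_of_le (fun k => mul_nonneg (laplaceSymbol_pos k).le
          (norm_nonneg _)) term_le).tsum_le_tsum term_le summable_bound
    _ = η * (S / (S + 1)) := by rw [tsum_mul_left]; ring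
    _ < η := mul_lt_of_lt_one_right hη ((div_lt_one (by positivity)).2 (lt_add_one S))

end Family

section Inversion

theorem UnitPeriodic.add_intCast {V : Type*} {G : (Fin n → ℝ) → V} (hper : UnitPeriodic G)
    (x : Fin n → ℝ) (k : Fin n → ℤ) : G (x + fun i => (k i : ℝ)) = G x := by
  have partial_shift (s : Finset (Fin n)) : G (x + ∑ i ∈ s, k i • Pi.single i (1 : ℝ)) = G x := by
    induction s using Finset.induction_on with
    | empty => simp
    | insert i s hi ih => rw [Finset.sum_insert hi, add_comm (k i • _), ← add_assoc,
        (hper i).zsmul (k i), ih]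
  have := partial_shift Finset.univ
  rwa [show ∑ i, k i • Pi.single i (1 : ℝ) = fun i => (k i : ℝ) by
    ext j; simp [Finset.sum_apply, Pi.single_apply]] at this

/-- The projection `ℝⁿ → ℝⁿ/ℤⁿ`. -/
def toTorus (x : Fin n → ℝ) : UnitAddTorus (Fin n) := fun i => (x i : UnitAddCircle)

theorem isQuotientMap_toTorus : Topology.IsQuotientMap (toTorus (n := n)) :=
  (IsOpenQuotientMap.piMap fun _ => QuotientAddGroup.isOpenQuotientMap_mk).isQuotientMap

theorem UnitPeriodic.exists_comp_toTorus_eq {V : Type*} [TopologicalSpace V]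
    {G : (Fin n → ℝ) → V} (hper : UnitPeriodic G) (hG : Continuous G) :
    ∃ g : C(UnitAddTorus (Fin n), V), ∀ x, g (toTorus x) = G x := by
  have congruent {x y : Fin n → ℝ} (h : toTorus x = toTorus y) : G x = G y := by
    have integral (i : Fin n) : ∃ k : ℤ, k • (1 : ℝ) = x i - y i := by
      rw [← AddCircle.coe_eq_zero_iff, AddCircle.coe_sub, sub_eq_zero]
      exact congrFun h i
    choose k hk using integral
    rw [← hper.add_intCast y k]
    congr 1 with i
    rw [Pi.add_apply, ← zsmul_one, hk, add_sub_cancel]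
  let π : C(Fin n → ℝ, UnitAddTorus (Fin n)) := ⟨toTorus, isQuotientMap_toTorus.continuous⟩
  have quotient : Topology.IsQuotientMap π := isQuotientMap_toTorus
  exact ⟨quotient.lift ⟨G, hG⟩ fun x y => congruent,
    DFunLike.congr_fun (quotient.lift_comp ⟨G, hG⟩ fun x y => congruent)⟩

theorem mFourier_toTorus (k : Fin n → ℤ) (x : Fin n → ℝ) :
    UnitAddTorus.mFourier k (toTorus x) = character k x := by
  simp only [UnitAddTorus.mFourier, toTorus, ContinuousMap.coe_mk, fourier_coe_apply]
  rw [← Complex.exp_sum, character, dotProduct]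
  push_cast
  rw [Finset.sum_mul]
  congr! 2 with i
  simp only [freq]
  push_cast
  ring

theorem mFourierCoeff_eq_cubeCoeff (g : C(UnitAddTorus (Fin n), ℂ)) (k : Fin n → ℤ) :
    UnitAddTorus.mFourierCoeff g k = cubeCoeff (fun x => g (toTorus x)) k := by
  have cube : {x : Fin n → ℝ | ∀ i, x i ∈ Ioc ((0 : Fin n → ℝ) i) ((0 : Fin n → ℝ) i + 1)} =
      univ.pi fun i => Ioc ((0 : Fin n → ℝ) i) ((1 : Fin n → ℝ) i) := by
    ext x
    simp
  rw [UnitAddTorus.mFourierCoeff_eq_integral g k 0, cube, volume_pi,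
    setIntegral_congr_set Measure.univ_pi_Ioc_ae_eq_Icc, ← volume_pi]
  exact integral_congr_ae (.of_forall fun x => congrArg (· • _) (mFourier_toTorus (-k) x))

theorem fourierSeries_cubeCoeff {G : (Fin n → ℝ) → ℂ} (hG : Continuous G) (hper : UnitPeriodic G)
    (hc : RapidDecay (cubeCoeff G)) (x : Fin n → ℝ) : fourierSeries (cubeCoeff G) x = G x := by
  obtain ⟨g, hg⟩ := hper.exists_comp_toTorus_eq hG
  have coeff : UnitAddTorus.mFourierCoeff g = cubeCoeff G := by
    ext k
    rw [mFourierCoeff_eq_cubeCoeff, funext hg]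
  have series := UnitAddTorus.hasSum_mFourier_series_apply_of_summable (f := g)
    (coeff ▸ hc.summable_norm.of_norm) (toTorus x)
  simpa only [coeff, mFourier_toTorus, smul_eq_mul, hg, fourierSeries] using series.tsum_eq

theorem cubeCoeff_apply {ι : Type*} [Fintype ι] {V : ι → Type*}
    [∀ i, NormedAddCommGroup (V i)] [∀ i, NormedSpace ℂ (V i)] [∀ i, CompleteSpace (V i)]
    {G : (Fin n → ℝ) → ∀ i, V i} (hG : Continuous G) (k : Fin n → ℤ) (i : ι) :
    cubeCoeff G k i = cubeCoeff (fun x => G x i) k :=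
  ((ContinuousLinearMap.proj (R := ℂ) (φ := V) i).integral_comp_comm
    (((contDiff_character _).continuous.smul hG).continuousOn.integrableOn_compact
      isCompact_Icc)).symm

end Inversion

end FourierCoefficients

section Localization

variable {E F : Type*} [NormedAddCommGroup E] [NormedSpace ℝ E] [NormedAddCommGroup F]
  [NormedSpace ℝ F] {U : Set E} {x₀ : E}

theorem contDiff_smul_of_tsupport_subset {r : WithTop ℕ∞} {χ : E → ℝ} {f : E → F}
    (hχ : ContDiff ℝ r χ) (hU : IsOpen U) (hsupp : tsupport χ ⊆ U) (hf : ContDiffOn ℝ r f U) :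
    ContDiff ℝ r fun x => χ x • f x :=
  contMDiff_iff_contDiff.1 <| contMDiff_of_tsupport fun _ hx => contMDiffAt_iff_contDiffAt.2 <|
    hχ.contDiffAt.smul <| hf.contDiffAt <| hU.mem_nhds <| hsupp <| tsupport_smul_subset_left χ f hx

theorem exists_contDiff_cutoff [FiniteDimensional ℝ E] (hU : U ∈ 𝓝 x₀) :
    ∃ χ : E → ℝ, ContDiff ℝ ∞ χ ∧ tsupport χ ⊆ U ∧ χ =ᶠ[𝓝 x₀] 1 := by
  obtain ⟨r, hr, hball⟩ := Metric.nhds_basis_closedBall.mem_iff.1 hU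
  let χ : ContDiffBump x₀ := ⟨r / 2, r, half_pos hr, half_lt_self hr⟩
  exact ⟨χ, χ.contDiff, χ.tsupport_eq.trans_subset hball, χ.eventuallyEq_one⟩

theorem exists_contDiff_eventuallyEq [FiniteDimensional ℝ E] {f : E → F} (hU : IsOpen U)
    (hf : ContDiffOn ℝ ∞ f U) (hx₀ : x₀ ∈ U) : ∃ g : E → F, ContDiff ℝ ∞ g ∧ g =ᶠ[𝓝 x₀] f := by
  obtain ⟨χ, hχ, hsupp, hone⟩ := exists_contDiff_cutoff (hU.mem_nhds hx₀)
  refine ⟨_, contDiff_smul_of_tsupport_subset hχ hU hsupp hf, ?_⟩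
  filter_upwards [hone] with x hx
  rw [hx, Pi.one_apply, one_smul]

end Localization

section PeriodicCoordinates

variable {n : ℕ}

theorem exists_unitPeriodic_eventuallyEq_id (n : ℕ) :
    ∃ S : (Fin n → ℝ) → Fin n → ℝ, ContDiff ℝ ∞ S ∧ UnitPeriodic S ∧ S =ᶠ[𝓝 0] id := by
  have smooth : ContDiffOn ℝ ∞ (fun u => Real.arcsin u / (2 * Real.pi)) (Ioo (-1) 1) :=
    fun u hu => ((Real.contDiffAt_arcsin hu.1.ne' hu.2.ne).div_const _).contDiffWithinAt
  obtain ⟨τ, hτ, hτ_eq⟩ := exists_contDiff_eventuallyEq isOpen_Ioo smooth (x₀ := 0) (by simp)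
  refine ⟨fun x i => τ (Real.sin (2 * Real.pi * x i)), contDiff_pi.2 fun i => hτ.comp <|
    Real.contDiff_sin.comp <| contDiff_const.mul <| contDiff_apply ℝ ℝ i, fun i x => ?_, ?_⟩
  · ext j
    obtain rfl | hij := eq_or_ne j i
    · simp [mul_add, Real.sin_add_two_pi]
    · simp [hij]
  · have tendsto_sin (i : Fin n) :
        Tendsto (fun x : Fin n → ℝ => Real.sin (2 * Real.pi * x i)) (𝓝 0) (𝓝 0) :=
      Continuous.tendsto' (by fun_prop) _ _ (by simp)
    have tendsto_angle (i : Fin n) :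
        Tendsto (fun x : Fin n → ℝ => 2 * Real.pi * x i) (𝓝 0) (𝓝 0) :=
      Continuous.tendsto' (by fun_prop) _ _ (by simp)
    filter_upwards [eventually_all.2 fun i => (tendsto_sin i).eventually hτ_eq,
      eventually_all.2 fun i => (tendsto_angle i).eventually
        (Icc_mem_nhds (neg_neg_iff_pos.2 Real.pi_div_two_pos) Real.pi_div_two_pos)] with x hx hangle
    ext i
    rw [hx i, Real.arcsin_sin (hangle i).1 (hangle i).2, id,
      mul_div_cancel_left₀ _ Real.two_pi_pos.ne']

end PeriodicCoordinates

section LocalImmersion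

variable {n : ℕ}

/-- The metric `∑ ν, u ν^* ⟨·,·⟩` induced by a family of functions, as a Gram matrix in the
standard coordinates. -/
noncomputable def inducedMetric {ι F : Type*} [Fintype ι] [NormedAddCommGroup F]
    [InnerProductSpace ℝ F] (u : ι → (Fin n → ℝ) → F) (x : Fin n → ℝ) : Matrix (Fin n) (Fin n) ℝ :=
  .of fun i j => ∑ ν, inner ℝ (fderiv ℝ (u ν) x (Pi.single i 1)) (fderiv ℝ (u ν) x (Pi.single j 1))

/-- The metric `∑ ν, m_ν ⊗ m_ν` induced by the undeformed modes `x ↦ exp(i⟨m_ν, x⟩)`, where `m_ν`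
is the frequency vector of `modeIndex ν`. -/
noncomputable def flatMetric (n : ℕ) : Matrix (Fin n) (Fin n) ℝ :=
  .of fun i j => ∑ ν : Mode n, freq (modeIndex ν) i * freq (modeIndex ν) j

theorem exists_inducedMetric_rescaled_eq {δ : ℝ≥0} (hδ : δ ≠ 0)
    {f : (Fin n → ℝ) → Fin n → Fin n → ℝ} (hf : ContDiff ℝ ∞ f) (x₀ : Fin n → ℝ) :
    ∃ ε : ℝ, ε ≠ 0 ∧ ∃ u : Mode n → (Fin n → ℝ) → ℂ, (∀ ν, ContDiff ℝ ∞ (u ν)) ∧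
      ∀ᶠ x in 𝓝 0, ∀ i j, 2 * inducedMetric u x i j = 2 * (δ ^ 2 * flatMetric n i j) +
        (f (x₀ + ε • x) i j - f x₀ i j + (f (x₀ + ε • x) j i - f x₀ j i)) := by
  obtain ⟨η, hη, immersion⟩ := exists_periodic_immersion (n := n) hδ
  obtain ⟨S, hS, hSper, hS_eq⟩ := exists_unitPeriodic_eventuallyEq_id n
  let G (ε : ℝ) (x : Fin n → ℝ) (i j : Fin n) : ℂ := (f (x₀ + ε • S x) i j - f x₀ i j : ℝ)
  have smooth : ContDiff ℝ ∞ (Function.uncurry G) := by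
    refine contDiff_pi.2 fun i => contDiff_pi.2 fun j => Complex.ofRealCLM.contDiff.comp ?_
    have hfij : ContDiff ℝ ∞ fun x => f x i j := contDiff_pi.1 (contDiff_pi.1 hf i) j
    exact (hfij.comp <| contDiff_const.add <| contDiff_fst.smul <|
      hS.comp contDiff_snd).sub contDiff_const
  have smooth_slice (ε : ℝ) : ContDiff ℝ ∞ (G ε) := smooth.comp (contDiff_prodMk_right ε)
  have periodic (ε : ℝ) : UnitPeriodic (G ε) := fun i x => by simp only [G, hSper i x]
  have small := eventually_tsum_laplaceSymbol_mul_norm_cubeCoeff_lt smooth periodic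
    (ε₀ := 0) (by ext; simp [G]) hη
  obtain ⟨ε, hε, hε₀⟩ := ((small.filter_mono nhdsWithin_le_nhds).and
    (eventually_mem_nhdsWithin (s := {(0 : ℝ)}ᶜ))).exists
  have rapid := rapidDecay_cubeCoeff (smooth_slice ε) (periodic ε)
  obtain ⟨u, hu, metric⟩ := immersion (cubeCoeff (G ε)) rapid hε
  refine ⟨ε, hε₀, u, hu, hS_eq.mono fun x hx i j => ?_⟩
  have entry (i j : Fin n) : fourierSeries (fun k => cubeCoeff (G ε) k i j) x =
      (f (x₀ + ε • x) i j - f x₀ i j : ℝ) := by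
    have coeff : (fun k => cubeCoeff (G ε) k i j) = cubeCoeff fun x => G ε x i j := by
      ext k
      rw [cubeCoeff_apply (smooth_slice ε).continuous,
        cubeCoeff_apply (contDiff_pi.1 (smooth_slice ε) i).continuous]
    have hij : ContDiff ℝ ∞ fun x => G ε x i j := contDiff_pi.1 (contDiff_pi.1 (smooth_slice ε) i) j
    have hper : UnitPeriodic fun x => G ε x i j := fun l x => by simp only [periodic ε l x]
    rw [coeff, fourierSeries_cubeCoeff hij.continuous hper (rapidDecay_cubeCoeff hij hper)]
    simp only [G, hx, id]
  simpa only [entry, Complex.add_re, Complex.ofReal_re, inducedMetric, flatMetric, of_apply]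
    using metric x i j

theorem exists_inducedMetric_eq {δ : ℝ≥0} (hδ : δ ≠ 0)
    {f : (Fin n → ℝ) → Fin n → Fin n → ℝ} (hf : ContDiff ℝ ∞ f) (x₀ : Fin n → ℝ) :
    ∃ u : Mode n → (Fin n → ℝ) → ℂ, (∀ ν, ContDiff ℝ ∞ (u ν)) ∧
      ∀ᶠ x in 𝓝 x₀, ∀ i j, 2 * inducedMetric u x i j = 2 * (δ ^ 2 * flatMetric n i j) +
        (f x i j - f x₀ i j + (f x j i - f x₀ j i)) := by
  obtain ⟨ε, hε, u, hu, metric⟩ := exists_inducedMetric_rescaled_eq hδ hf x₀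
  let Φ (x : Fin n → ℝ) : Fin n → ℝ := ε⁻¹ • (x - x₀)
  have hΦ (x : Fin n → ℝ) : HasFDerivAt Φ (ε⁻¹ • .id ℝ (Fin n → ℝ)) x :=
    ((hasFDerivAt_id x).sub_const x₀).const_smul ε⁻¹
  have hΦ_smooth : ContDiff ℝ ∞ Φ := (contDiff_id.sub contDiff_const).const_smul ε⁻¹
  have tendsto : Tendsto Φ (𝓝 x₀) (𝓝 0) := hΦ_smooth.continuous.tendsto' _ _ (by simp [Φ])
  have fderiv_rescaled (ν : Mode n) (x : Fin n → ℝ) :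
      fderiv ℝ (fun x => ε • u ν (Φ x)) x = fderiv ℝ (u ν) (Φ x) := by
    have := ((hu ν).differentiable (by simp) (Φ x)).hasFDerivAt.comp x (hΦ x)
    refine (this.const_smul ε).fderiv.trans ?_
    rw [ContinuousLinearMap.comp_smul, ContinuousLinearMap.comp_id, smul_inv_smul₀ hε]
  refine ⟨fun ν x => ε • u ν (Φ x), fun ν => ((hu ν).comp hΦ_smooth).const_smul ε, ?_⟩
  filter_upwards [tendsto.eventually metric] with x hx i j
  simpa only [inducedMetric, fderiv_rescaled, of_apply, Φ, smul_inv_smul₀ hε, add_sub_cancel]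
    using hx i j

end LocalImmersion

section LocalPrimitive

variable {E : Type*} [NormedAddCommGroup E] [NormedSpace ℝ E] {β γ : E → E → E → ℝ} {x₀ : E}

/-- A field `β` of bilinear forms admits a reproducing kernel primitive near `x₀` if
`β = ∑ i, dφᵢ ⊗ dφᵢ` for finitely many smooth functions `φᵢ`. -/
def HasLocalPrimitive (β : E → E → E → ℝ) (x₀ : E) : Prop :=
  ∃ (ι : Type) (_ : Fintype ι) (φ : ι → E → ℝ), ∀ᶠ x in 𝓝 x₀, (∀ i, ContDiffAt ℝ ∞ (φ i) x) ∧
    ∀ v w, β x v w = ∑ i, fderiv ℝ (φ i) x v * fderiv ℝ (φ i) x w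

namespace HasLocalPrimitive

theorem congr (h : HasLocalPrimitive β x₀) (heq : ∀ᶠ x in 𝓝 x₀, ∀ v w, γ x v w = β x v w) :
    HasLocalPrimitive γ x₀ := by
  obtain ⟨ι, _, φ, hφ⟩ := h
  refine ⟨ι, inferInstance, φ, ?_⟩
  filter_upwards [hφ, heq] with x hx hx_eq
  exact ⟨hx.1, fun v w => (hx_eq v w).trans (hx.2 v w)⟩

theorem zero : HasLocalPrimitive (0 : E → E → E → ℝ) x₀ :=
  ⟨PEmpty, inferInstance, PEmpty.elim, by simp⟩

theorem add (hβ : HasLocalPrimitive β x₀) (hγ : HasLocalPrimitive γ x₀) :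
    HasLocalPrimitive (β + γ) x₀ := by
  obtain ⟨ι, _, φ, hφ⟩ := hβ
  obtain ⟨κ, _, ψ, hψ⟩ := hγ
  refine ⟨ι ⊕ κ, inferInstance, Sum.elim φ ψ, ?_⟩
  filter_upwards [hφ, hψ] with x hφx hψx
  exact ⟨Sum.rec hφx.1 hψx.1, fun v w => by simp [hφx.2, hψx.2]⟩

theorem sum {κ : Type*} {β : κ → E → E → E → ℝ} (s : Finset κ)
    (h : ∀ ν ∈ s, HasLocalPrimitive (β ν) x₀) : HasLocalPrimitive (∑ ν ∈ s, β ν) x₀ :=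
  Finset.sum_induction β (HasLocalPrimitive · x₀) (fun _ _ => add) zero h

theorem pullback {E' : Type*} [NormedAddCommGroup E'] [NormedSpace ℝ E'] {Φ : E' → E} {y₀ : E'}
    (h : HasLocalPrimitive β (Φ y₀)) (hΦ : ∀ᶠ y in 𝓝 y₀, ContDiffAt ℝ ∞ Φ y) :
    HasLocalPrimitive (fun y v w => β (Φ y) (fderiv ℝ Φ y v) (fderiv ℝ Φ y w)) y₀ := by
  obtain ⟨ι, _, φ, hφ⟩ := h
  refine ⟨ι, inferInstance, fun i => φ i ∘ Φ, ?_⟩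
  filter_upwards [hΦ.self_of_nhds.continuousAt.eventually hφ, hΦ] with y hφy hy
  have chain (i : ι) : fderiv ℝ (φ i ∘ Φ) y = fderiv ℝ (φ i) (Φ y) ∘L fderiv ℝ Φ y :=
    fderiv_comp y ((hφy.1 i).differentiableAt (by simp)) (hy.differentiableAt (by simp))
  exact ⟨fun i => (hφy.1 i).comp y hy, fun v w => by
    simp only [hφy.2, chain, ContinuousLinearMap.comp_apply]⟩

theorem exists_isOpen (h : HasLocalPrimitive β x₀) {U : Set E} (hU : U ∈ 𝓝 x₀) :
    ∃ V, IsOpen V ∧ x₀ ∈ V ∧ V ⊆ U ∧ ∃ (M : ℕ) (φ : Fin M → E → ℝ),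
      (∀ i, ContDiffOn ℝ ∞ (φ i) V) ∧ ∀ x ∈ V, ∀ v w,
        β x v w = ∑ i, fderivWithin ℝ (φ i) V x v * fderivWithin ℝ (φ i) V x w := by
  obtain ⟨ι, _, φ, hφ⟩ := h
  obtain ⟨V, hV, hV_open, hx₀⟩ := _root_.eventually_nhds_iff.1 (hφ.and hU)
  let e := (Fintype.equivFin ι).symm
  refine ⟨V, hV_open, hx₀, fun x hx => (hV x hx).2, Fintype.card ι, φ ∘ e,
    fun i x hx => ((hV x hx).1.1 (e i)).contDiffWithinAt, fun x hx v w => ?_⟩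
  simp_rw [fderivWithin_of_isOpen hV_open hx, (hV x hx).1.2]
  exact (e.sum_comp fun i => fderiv ℝ (φ i) x v * fderiv ℝ (φ i) x w).symm

end HasLocalPrimitive

theorem hasLocalPrimitive_inner {F : Type*} [NormedAddCommGroup F] [InnerProductSpace ℝ F]
    [FiniteDimensional ℝ F] {u : E → F} (hu : ∀ᶠ x in 𝓝 x₀, ContDiffAt ℝ ∞ u x) :
    HasLocalPrimitive (fun x v w => inner ℝ (fderiv ℝ u x v) (fderiv ℝ u x w)) x₀ := by
  let b := stdOrthonormalBasis ℝ F
  refine ⟨Fin (Module.finrank ℝ F), inferInstance, fun i x => innerSL ℝ (b i) (u x), ?_⟩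
  filter_upwards [hu] with x hx
  have chain (i : Fin (Module.finrank ℝ F)) :
      fderiv ℝ (fun x => innerSL ℝ (b i) (u x)) x = innerSL ℝ (b i) ∘L fderiv ℝ u x :=
    ((innerSL ℝ (b i)).hasFDerivAt.comp x (hx.differentiableAt (by simp)).hasFDerivAt).fderiv
  refine ⟨fun i => (innerSL ℝ (b i)).contDiff.contDiffAt.comp x hx, fun v w => ?_⟩
  simp_rw [chain, ContinuousLinearMap.comp_apply, innerSL_apply_apply]
  rw [← b.sum_inner_mul_inner]
  exact Finset.sum_congr rfl fun i _ => by rw [real_inner_comm]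

end LocalPrimitive

section PosDef

variable {n : ℕ} {x₀ : Fin n → ℝ}

theorem hasLocalPrimitive_const {K : Matrix (Fin n) (Fin n) ℝ} (hK : K.PosSemidef) :
    HasLocalPrimitive (fun _ v w => v ⬝ᵥ K *ᵥ w) x₀ := by
  obtain ⟨m, u, rfl⟩ := posSemidef_iff_eq_sum_vecMulVec.1 hK
  let φ (i : Fin m) : (Fin n → ℝ) →L[ℝ] ℝ := (dotProductBilin ℝ ℝ (u i)).toContinuousLinearMap
  refine ⟨Fin m, inferInstance, fun i => φ i, .of_forall fun x =>
    ⟨fun i => (φ i).contDiff.contDiffAt, fun v w => ?_⟩⟩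
  simp_rw [ContinuousLinearMap.fderiv, sum_mulVec, dotProduct_sum, vecMulVec_mulVec]
  simp [φ, dotProduct_comm, mul_comm]

theorem hasLocalPrimitive_inducedMetric {ι F : Type*} [Fintype ι] [NormedAddCommGroup F]
    [InnerProductSpace ℝ F] [FiniteDimensional ℝ F] {u : ι → (Fin n → ℝ) → F}
    (hu : ∀ ν, ContDiff ℝ ∞ (u ν)) :
    HasLocalPrimitive (fun x v w => v ⬝ᵥ inducedMetric u x *ᵥ w) x₀ := by
  refine (HasLocalPrimitive.sum Finset.univ fun ν _ => hasLocalPrimitive_inner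
    (.of_forall fun x => (hu ν).contDiffAt)).congr (.of_forall fun x v w => ?_)
  have expand (ν : ι) (v : Fin n → ℝ) :
      fderiv ℝ (u ν) x v = ∑ i, v i • fderiv ℝ (u ν) x (Pi.single i 1) := by
    conv_lhs => rw [pi_eq_sum_univ' v, map_sum]
    simp only [map_smul]
  simp only [Finset.sum_apply, inducedMetric, dotProduct, mulVec, of_apply, Finset.sum_mul,
    Finset.mul_sum]
  rw [Finset.sum_congr rfl fun i _ => Finset.sum_comm, Finset.sum_comm]
  refine Finset.sum_congr rfl fun ν _ => ?_
  rw [expand ν v, expand ν w, sum_inner]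
  simp only [inner_sum, real_inner_smul_left, real_inner_smul_right]
  exact Finset.sum_congr rfl fun i _ => Finset.sum_congr rfl fun j _ => by ring

theorem eventually_posSemidef_sub_smul {A K : Matrix (Fin n) (Fin n) ℝ} (hA : A.PosDef)
    (hK : K.IsHermitian) : ∀ᶠ t : ℝ in 𝓝 0, (A - t • K).PosSemidef := by
  have sphere : ∀ᶠ t : ℝ in 𝓝 0, ∀ x ∈ Metric.sphere (0 : Fin n → ℝ) 1,
      0 < x ⬝ᵥ (A - t • K) *ᵥ x := by
    refine (isCompact_sphere _ _).eventually_forall_of_forall_eventually fun x hx => ?_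
    have continuous : Continuous fun p : ℝ × (Fin n → ℝ) => p.2 ⬝ᵥ (A - p.1 • K) *ᵥ p.2 := by
      fun_prop
    have hx₀ : x ≠ 0 := ne_zero_of_mem_unit_sphere ⟨x, hx⟩
    refine continuous.continuousAt.eventually (lt_mem_nhds ?_)
    simpa using hA.dotProduct_mulVec_pos hx₀
  filter_upwards [sphere] with t ht
  refine .of_dotProduct_mulVec_nonneg (hA.1.sub (hK.smul (IsSelfAdjoint.all t))) fun x => ?_
  obtain rfl | hx := eq_or_ne x 0
  · simp
  have unit : ‖x‖⁻¹ • x ∈ Metric.sphere 0 1 := by simp [norm_smul, hx]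
  have pos := (ht _ unit).le
  rw [mulVec_smul, smul_dotProduct, dotProduct_smul, smul_smul, smul_eq_mul] at pos
  exact nonneg_of_mul_nonneg_right pos (by positivity)

theorem isHermitian_flatMetric : (flatMetric n).IsHermitian := by
  ext i j
  simp [flatMetric, mul_comm]

theorem exists_posSemidef_sub_flatMetric {A : Matrix (Fin n) (Fin n) ℝ} (hA : A.PosDef) :
    ∃ δ : ℝ≥0, δ ≠ 0 ∧ (A - ((δ : ℝ) ^ 2) • flatMetric n).PosSemidef := by
  have tendsto_sq : Tendsto (fun δ : ℝ≥0 => (δ : ℝ) ^ 2) (𝓝[≠] 0) (𝓝 0) :=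
    (Continuous.tendsto' (by fun_prop) _ _ (by simp)).mono_left nhdsWithin_le_nhds
  obtain ⟨δ, hδ, hpos⟩ := (eventually_mem_nhdsWithin.and
    (tendsto_sq.eventually (eventually_posSemidef_sub_smul hA isHermitian_flatMetric))).exists
  exact ⟨δ, hδ, hpos⟩

theorem hasLocalPrimitive_of_posDef {U : Set (Fin n → ℝ)} (hU : IsOpen U) (hx₀ : x₀ ∈ U)
    {g : (Fin n → ℝ) → Matrix (Fin n) (Fin n) ℝ}
    (hg : ∀ i j, ContDiffOn ℝ ∞ (fun x => g x i j) U) (hsymm : ∀ x ∈ U, (g x).IsSymm)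
    (hpos : (g x₀).PosDef) : HasLocalPrimitive (fun x v w => v ⬝ᵥ g x *ᵥ w) x₀ := by
  obtain ⟨f, hf, hf_eq⟩ := exists_contDiff_eventuallyEq (f := fun x i j => g x i j) hU
    (contDiffOn_pi.2 fun i => contDiffOn_pi.2 (hg i)) hx₀
  obtain ⟨δ, hδ, hrest⟩ := exists_posSemidef_sub_flatMetric hpos
  obtain ⟨u, hu, hmetric⟩ := exists_inducedMetric_eq hδ hf x₀
  refine ((hasLocalPrimitive_inducedMetric hu).add (hasLocalPrimitive_const hrest)).congr ?_
  filter_upwards [hmetric, hf_eq, hU.mem_nhds hx₀] with x hx hfx hxU v w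
  have decompose : g x = inducedMetric u x + (g x₀ - (δ : ℝ) ^ 2 • flatMetric n) := by
    ext i j
    have := hx i j
    simp only [hfx, hf_eq.self_of_nhds, (hsymm x hxU).apply i j, (hsymm x₀ hx₀).apply i j] at this
    simp only [Matrix.add_apply, Matrix.sub_apply, Matrix.smul_apply, smul_eq_mul]
    linarith
  simp only [Pi.add_apply, ← dotProduct_add, ← add_mulVec, ← decompose]

end PosDef

section Superposition

universe v

variable {K : Type*} [TopologicalSpace K] [CompactSpace K]
  {E F : Type v} [NormedAddCommGroup E] [NormedSpace ℝ E] [NormedAddCommGroup F] [NormedSpace ℝ F]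

/-- The pointwise application of a continuous family of operators to a continuous family of
vectors, as a continuous bilinear map. -/
noncomputable def pointwiseApply : C(K, E →L[ℝ] F) →L[ℝ] C(K, E) →L[ℝ] C(K, F) :=
  LinearMap.mkContinuous₂
    (LinearMap.mk₂ ℝ
      (fun (L : C(K, E →L[ℝ] F)) (v : C(K, E)) =>
        (⟨fun s => L s (v s), L.continuous.clm_apply v.continuous⟩ : C(K, F)))
      (by intros; ext; simp) (by intros; ext; simp) (by intros; ext; simp) (by intros; ext; simp))
    1 fun L v => (ContinuousMap.norm_le _ (by positivity)).2 fun s => by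
      rw [one_mul]
      exact ((L s).le_opNorm _).trans (mul_le_mul (L.norm_coe_le_norm s) (v.norm_coe_le_norm s)
        (norm_nonneg _) (by positivity))

@[simp]
theorem pointwiseApply_apply (L : C(K, E →L[ℝ] F)) (v : C(K, E)) (s : K) :
    pointwiseApply L v s = L s (v s) :=
  rfl

theorem eventually_forall_norm_sub_sub_fderiv_le {f : E → F} (hf : ContDiff ℝ 1 f) {S : Set E}
    (hS : IsCompact S) {ε : ℝ} (hε : 0 < ε) :
    ∀ᶠ h in 𝓝 0, ∀ x ∈ S, ‖f (x + h) - f x - fderiv ℝ f x h‖ ≤ ε * ‖h‖ := by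
  refine hS.eventually_forall_of_forall_eventually fun x _ => ?_
  have tendsto_pair : Tendsto (fun p : E × E => (p.2 + p.1, p.2)) (𝓝 (0, x)) (𝓝 (x, x)) :=
    Continuous.tendsto' (by fun_prop) _ _ (by simp)
  have strict := tendsto_pair.eventually
    ((hf.contDiffAt.hasStrictFDerivAt one_ne_zero).isLittleO.def (half_pos hε))
  have continuous : Continuous fun p : E × E => ‖fderiv ℝ f p.2 - fderiv ℝ f x‖ :=
    (((hf.continuous_fderiv one_ne_zero).comp continuous_snd).sub continuous_const).norm
  have close : ∀ᶠ p : E × E in 𝓝 (0, x), ‖fderiv ℝ f p.2 - fderiv ℝ f x‖ < ε / 2 :=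
    continuous.continuousAt.eventually (gt_mem_nhds (by simpa using half_pos hε))
  filter_upwards [strict, close] with ⟨h, y⟩ h_strict h_close
  simp only [add_sub_cancel_left] at h_strict
  calc ‖f (y + h) - f y - fderiv ℝ f y h‖
      = ‖(f (y + h) - f y - fderiv ℝ f x h) - (fderiv ℝ f y - fderiv ℝ f x) h‖ := by simp
    _ ≤ ε / 2 * ‖h‖ + ε / 2 * ‖h‖ := (norm_sub_le _ _).trans
      (add_le_add h_strict (((fderiv ℝ f y - fderiv ℝ f x).le_opNorm h).trans (by gcongr)))
    _ = ε * ‖h‖ := by ring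

theorem hasFDerivAt_postcomp (f : C(E, F)) (hf : ContDiff ℝ 1 f) (u : C(K, E)) :
    HasFDerivAt (fun u : C(K, E) => f.comp u)
      (pointwiseApply (.comp ⟨fderiv ℝ f, hf.continuous_fderiv one_ne_zero⟩ u)) u := by
  rw [hasFDerivAt_iff_isLittleO_nhds_zero, Asymptotics.isLittleO_iff]
  intro ε hε
  have uniform := eventually_forall_norm_sub_sub_fderiv_le hf (isCompact_range u.continuous) hε
  obtain ⟨δ, hδ, hδ_le⟩ := Metric.eventually_nhds_iff.1 uniform
  refine Metric.eventually_nhds_iff.2 ⟨δ, hδ, fun h hh => ?_⟩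
  refine (ContinuousMap.norm_le _ (by positivity)).2 fun s => ?_
  have norm_le : ‖h s‖ ≤ ‖h‖ := h.norm_coe_le_norm s
  have pointwise : ‖f (u s + h s) - f (u s) - fderiv ℝ f (u s) (h s)‖ ≤ ε * ‖h s‖ :=
    hδ_le (by rw [dist_zero_right] at hh ⊢; exact norm_le.trans_lt hh) _ ⟨s, rfl⟩
  exact pointwise.trans (mul_le_mul_of_nonneg_left norm_le hε.le)

theorem contDiff_postcomp {n : ℕ∞} (f : C(E, F)) (hf : ContDiff ℝ n f) :
    ContDiff ℝ n fun u : C(K, E) => f.comp u := by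
  have finite_order (m : ℕ) : ∀ {G : Type v} [NormedAddCommGroup G] [NormedSpace ℝ G]
      (g : C(E, G)), ContDiff ℝ m g → ContDiff ℝ m fun u : C(K, E) => g.comp u := by
    induction m with
    | zero => exact fun g _ => contDiff_zero.2 g.continuous_postcomp
    | succ m ih =>
      intro G _ _ g hg
      have hg₁ : ContDiff ℝ 1 g := hg.of_le (by norm_cast; omega)
      exact contDiff_succ_iff_hasFDerivAt.2 ⟨_, pointwiseApply.contDiff.comp
        (ih ⟨fderiv ℝ g, hg₁.continuous_fderiv one_ne_zero⟩ (hg.fderiv_right le_rfl)),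
        hasFDerivAt_postcomp g hg₁⟩
  exact contDiff_iff_forall_nat_le.2 fun m hm => finite_order m f (hf.of_le (mod_cast hm))

end Superposition

section ImplicitFunction

variable {E F G : Type*} [NormedAddCommGroup E] [NormedSpace ℝ E] [CompleteSpace E]
  [NormedAddCommGroup F] [NormedSpace ℝ F] [CompleteSpace F]
  [NormedAddCommGroup G] [NormedSpace ℝ G] [CompleteSpace G]

theorem exists_eventually_contDiffAt_implicitFunction {f : E × F → G} (hf : ContDiff ℝ ∞ f)
    {a : E} {b : F} (hinv : (fderiv ℝ f (a, b) ∘L .inr ℝ E F).IsInvertible) :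
    ∃ ψ : E → F, ψ a = b ∧ ∀ᶠ x in 𝓝 a, ContDiffAt ℝ ∞ ψ x ∧ f (x, ψ x) = f (a, b) := by
  have h_infty : (∞ : WithTop ℕ∞) ≠ 0 := by simp
  let ψ := hf.contDiffAt.implicitFunction h_infty hinv
  have ψ_self : ψ a = b := hf.contDiffAt.implicitFunction_apply_self h_infty hinv
  have solves : ∀ᶠ x in 𝓝 a, f (x, ψ x) = f (a, b) :=
    hf.contDiffAt.eventually_apply_implicitFunction h_infty hinv
  have smooth_at : ContDiffAt ℝ ∞ ψ a := hf.contDiffAt.contDiffAt_implicitFunction h_infty hinv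
  have continuousAt : ∀ᶠ x in 𝓝 a, ContinuousAt ψ x :=
    ((smooth_at.of_le (m := 1) (by simp)).eventually (by simp)).mono fun x hx => hx.continuousAt
  have invertible : ∀ᶠ x in 𝓝 a, (fderiv ℝ f (x, ψ x) ∘L .inr ℝ E F).IsInvertible := by
    have continuousAt_deriv : ContinuousAt (fun x => fderiv ℝ f (x, ψ x) ∘L .inr ℝ E F) a :=
      ((hf.continuous_fderiv h_infty).continuousAt.comp
        (continuousAt_id.prodMk smooth_at.continuousAt)).clm_comp continuousAt_const
    obtain ⟨e, he⟩ := hinv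
    refine continuousAt_deriv.eventually ?_
    simp only [ψ_self, ← he]
    exact e.nhds
  refine ⟨ψ, ψ_self, ?_⟩
  filter_upwards [solves.eventually_nhds, continuousAt, invertible] with x hx hx_cont hx_inv
  refine ⟨?_, hx.self_of_nhds⟩
  have unique : hf.contDiffAt.implicitFunction h_infty hx_inv =ᶠ[𝓝 x] ψ := by
    filter_upwards [(continuousAt_id.prodMk hx_cont).eventually
      (hf.contDiffAt.eventually_apply_eq_iff_implicitFunction h_infty hx_inv), hx] with y hy hy_eq
    exact hy.1 (hy_eq.trans hx.self_of_nhds.symm)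
  exact (hf.contDiffAt.contDiffAt_implicitFunction h_infty hx_inv).congr_of_eventuallyEq unique.symm

end ImplicitFunction

section Flow

universe v

variable {D E : Type v} [NormedAddCommGroup D] [NormedSpace ℝ D] [NormedAddCommGroup E]
  [NormedSpace ℝ E]

/-- The Volterra operator `w ↦ ∫₀ˢ w(t) dt` on continuous paths `[0, 1] → E`. -/
noncomputable def volterra : C(unitInterval, E) →L[ℝ] C(unitInterval, E) :=
  have integrable (w : C(unitInterval, E)) (a b : ℝ) :
      IntervalIntegrable (IccExtend zero_le_one w) volume a b :=
    w.continuous.Icc_extend'.intervalIntegrable a b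
  LinearMap.mkContinuous
    { toFun := fun w => ⟨fun s => ∫ t in (0 : ℝ)..s, IccExtend zero_le_one w t,
        (intervalIntegral.continuous_primitive (integrable w) 0).comp continuous_subtype_val⟩
      map_add' := fun w₁ w₂ => ContinuousMap.ext fun s =>
        intervalIntegral.integral_add (integrable w₁ 0 s) (integrable w₂ 0 s)
      map_smul' := fun c w => ContinuousMap.ext fun s => intervalIntegral.integral_smul c _ }
    1 fun w => (ContinuousMap.norm_le _ (by positivity)).2 fun s => by
      have bound := intervalIntegral.norm_integral_le_of_norm_le_const (a := 0) (b := s)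
        fun t _ => w.norm_coe_le_norm (projIcc 0 1 zero_le_one t)
      refine bound.trans ?_
      rw [sub_zero, abs_of_nonneg s.2.1, one_mul]
      exact mul_le_of_le_one_right (norm_nonneg w) s.2.2

theorem volterra_apply (w : C(unitInterval, E)) (s : unitInterval) :
    volterra w s = ∫ t in (0 : ℝ)..s, IccExtend zero_le_one w t :=
  rfl

theorem hasDerivWithinAt_IccExtend_const_add_volterra [CompleteSpace E] (x : E)
    (w : C(unitInterval, E)) {s : ℝ} (hs : s ∈ Icc (0 : ℝ) 1) :
    HasDerivWithinAt (IccExtend zero_le_one (.const _ x + volterra w : C(unitInterval, E)))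
      (IccExtend zero_le_one w s) (Icc 0 1) s := by
  have integral := (w.continuous.Icc_extend' (h := zero_le_one)).integral_hasStrictDerivAt 0 s
  refine (integral.hasDerivAt.hasDerivWithinAt.const_add x).congr_of_mem (fun t ht => ?_) hs
  rw [IccExtend_of_mem _ _ ht, ContinuousMap.add_apply, volterra_apply, ContinuousMap.const_apply]

/-- The space-time graph `s ↦ (p, u s)` of a path `u` in parameter `p`, as a continuous linear map
on triples of a parameter `p`, an initial value and a path `u`. -/
noncomputable def parametrizedPath :
    (D × E) × C(unitInterval, E) →L[ℝ] C(unitInterval, D × E) :=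
  (ContinuousLinearMap.inl ℝ D E).compLeftContinuous ℝ unitInterval ∘L
      ContinuousLinearMap.const ℝ unitInterval ∘L .fst ℝ D E ∘L .fst ℝ _ _ +
    (ContinuousLinearMap.inr ℝ D E).compLeftContinuous ℝ unitInterval ∘L .snd ℝ _ _

@[simp]
theorem parametrizedPath_apply (a : (D × E) × C(unitInterval, E)) (s : unitInterval) :
    parametrizedPath a s = (a.1.1, a.2 s) := by
  change (a.1.1, (0 : E)) + ((0 : D), a.2 s) = _
  simp

/-- The Picard operator `((p, x), u) ↦ x + ∫₀ˢ W(p, u(t)) dt`, whose fixed points in `u` are the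
integral curves of `W(p, ·)` starting at `x`. -/
noncomputable def picard (W : C(D × E, E)) (a : (D × E) × C(unitInterval, E)) :
    C(unitInterval, E) :=
  .const _ a.1.2 + volterra (W.comp (parametrizedPath a))

variable {W : C(D × E, E)}

theorem contDiff_picard {n : ℕ∞} (hW : ContDiff ℝ n W) : ContDiff ℝ n (picard W) :=
  ((ContinuousLinearMap.const ℝ unitInterval).contDiff.comp (contDiff_snd.comp contDiff_fst)).add
    (volterra.contDiff.comp ((contDiff_postcomp W hW).comp parametrizedPath.contDiff))

theorem fderiv_picard_apply (hW : ContDiff ℝ 1 W) (a b : (D × E) × C(unitInterval, E)) :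
    fderiv ℝ (picard W) a b = .const _ b.1.2 + volterra (pointwiseApply
      (.comp ⟨fderiv ℝ W, hW.continuous_fderiv one_ne_zero⟩ (parametrizedPath a))
      (parametrizedPath b)) := by
  have initial := (ContinuousLinearMap.const ℝ unitInterval ∘L .snd ℝ D E ∘L
    .fst ℝ _ C(unitInterval, E)).hasFDerivAt (x := a)
  have integral := volterra.hasFDerivAt.comp a ((hasFDerivAt_postcomp W hW
    (parametrizedPath a)).comp a (parametrizedPath (D := D) (E := E)).hasFDerivAt)
  exact congrArg (fun L => L b) (initial.add integral).fderiv

theorem fderiv_apply_eq_zero_of_forall_eq_zero {f : D × E → E} {p : D} {y : E}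
    (hf : DifferentiableAt ℝ f (p, y)) (h : ∀ y, f (p, y) = 0) (v : E) :
    fderiv ℝ f (p, y) (0, v) = 0 := by
  have slice : HasFDerivAt (fun y => f (p, y)) _ y := hf.hasFDerivAt.comp y
    (hasFDerivAt_prodMk_right p y)
  simp only [h] at slice
  simpa using congrArg (fun L => L v) (slice.unique (hasFDerivAt_const 0 y))

theorem exists_contDiffAt_eq_picard [CompleteSpace D] [CompleteSpace E] (hW : ContDiff ℝ ∞ W)
    {p₀ : D} (hW₀ : ∀ y, W (p₀, y) = 0) (x₀ : E) :
    ∃ u : D × E → C(unitInterval, E), u (p₀, x₀) = .const _ x₀ ∧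
      ∀ᶠ q in 𝓝 (p₀, x₀), ContDiffAt ℝ ∞ u q ∧ u q = picard W (q, u q) := by
  let f (a : (D × E) × C(unitInterval, E)) : C(unitInterval, E) := a.2 - picard W a
  have hf : ContDiff ℝ ∞ f := contDiff_snd.sub (contDiff_picard hW)
  have stationary : picard W ((p₀, x₀), .const _ x₀) = .const _ x₀ := by
    ext s
    simp [picard, volterra_apply, IccExtend, hW₀]
  have picard_deriv (v : C(unitInterval, E)) :
      fderiv ℝ (picard W) ((p₀, x₀), .const _ x₀) (0, v) = 0 := by
    have integrand : pointwiseApply (.comp ⟨fderiv ℝ W, hW.continuous_fderiv (by simp)⟩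
        (parametrizedPath ((p₀, x₀), .const _ x₀))) (parametrizedPath (0, v)) = 0 := by
      ext s
      simpa using fderiv_apply_eq_zero_of_forall_eq_zero (hW.differentiable (by simp) _) hW₀ (v s)
    rw [fderiv_picard_apply (hW.of_le (by simp)), integrand, map_zero, add_zero]
    rfl
  have deriv_snd : fderiv ℝ f ((p₀, x₀), .const _ x₀) ∘L .inr ℝ (D × E) C(unitInterval, E) =
      .id ℝ _ := by
    have deriv : HasFDerivAt f _ _ :=
      (ContinuousLinearMap.snd ℝ (D × E) C(unitInterval, E)).hasFDerivAt.sub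
        ((contDiff_picard hW).differentiable (by simp) ((p₀, x₀), .const _ x₀)).hasFDerivAt
    ext1 v
    rw [deriv.fderiv]
    simp [picard_deriv]
  obtain ⟨u, u_self, hu⟩ := exists_eventually_contDiffAt_implicitFunction hf
    (a := (p₀, x₀)) (b := .const _ x₀) (by rw [deriv_snd]; exact ⟨.refl ℝ _, rfl⟩)
  refine ⟨u, u_self, hu.mono fun q hq => ⟨hq.1, ?_⟩⟩
  exact sub_eq_zero.1 (hq.2.trans (sub_eq_zero.2 stationary.symm))

theorem fderiv_apply_of_eventually_eq_picard (hW : ContDiff ℝ 1 W)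
    {u : D × E → C(unitInterval, E)} {q : D × E} (hu : DifferentiableAt ℝ u q)
    (hfix : ∀ᶠ q in 𝓝 q, u q = picard W (q, u q)) (h : D × E) :
    fderiv ℝ u q h = .const _ h.2 + volterra (pointwiseApply
      (.comp ⟨fderiv ℝ W, hW.continuous_fderiv one_ne_zero⟩ (parametrizedPath (q, u q)))
      (parametrizedPath (h, fderiv ℝ u q h))) := by
  have chain := ((contDiff_picard (n := 1) hW).differentiable one_ne_zero
    (q, u q)).hasFDerivAt.comp q ((hasFDerivAt_id q).prodMk hu.hasFDerivAt)
  exact (congrArg (fun L => L h) (chain.congr_of_eventuallyEq hfix).fderiv).trans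
    (fderiv_picard_apply hW (q, u q) (h, fderiv ℝ u q h))

/-- `γ q` is an integral curve of `W(q.1, ·)` on `[0, 1]` starting at `q.2`, depending smoothly on
`q`, along which the derivative in `q` solves the linearized equation. -/
structure IsSmoothIntegralCurveAt (W : D × E → E) (γ : D × E → ℝ → E) (q : D × E) : Prop where
  apply_zero : γ q 0 = q.2
  contDiffAt (s : ℝ) : ContDiffAt ℝ ∞ (fun q => γ q s) q
  hasDerivWithinAt {s : ℝ} (hs : s ∈ Icc (0 : ℝ) 1) :
    HasDerivWithinAt (γ q) (W (q.1, γ q s)) (Icc 0 1) s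
  hasDerivWithinAt_fderiv {s : ℝ} (hs : s ∈ Icc (0 : ℝ) 1) (h : D × E) :
    HasDerivWithinAt (fun s => fderiv ℝ (fun q => γ q s) q h)
      (fderiv ℝ W (q.1, γ q s) (h.1, fderiv ℝ (fun q => γ q s) q h)) (Icc 0 1) s

theorem isSmoothIntegralCurveAt_IccExtend [CompleteSpace E] (hW : ContDiff ℝ 1 W)
    {u : D × E → C(unitInterval, E)} {q : D × E} (hu : ContDiffAt ℝ ∞ u q)
    (hfix : ∀ᶠ q in 𝓝 q, u q = picard W (q, u q)) :
    IsSmoothIntegralCurveAt W (fun q => IccExtend zero_le_one (u q)) q := by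
  have path_eq := hfix.self_of_nhds
  have eval (s : ℝ) :=
    (ContinuousMap.evalCLM ℝ (projIcc (0 : ℝ) 1 zero_le_one s)).hasFDerivAt.comp q
      (hu.differentiableAt (by simp)).hasFDerivAt
  have fderiv_eval (h : D × E) :
      (fun s => fderiv ℝ (fun q => IccExtend zero_le_one (u q) s) q h) =
        IccExtend zero_le_one (fderiv ℝ u q h) :=
    funext fun s => congrArg (fun L => L h) (eval s).fderiv
  refine ⟨?_, fun s => ?_, fun {s} hs => ?_, fun {s} hs h => ?_⟩
  · rw [path_eq, IccExtend_of_mem _ _ ⟨le_rfl, zero_le_one⟩]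
    simp [picard, volterra_apply]
  · exact (ContinuousMap.evalCLM ℝ (projIcc (0 : ℝ) 1 zero_le_one s)).contDiff.contDiffAt.comp q hu
  · have deriv := hasDerivWithinAt_IccExtend_const_add_volterra q.2
      (W.comp (parametrizedPath (q, u q))) hs
    rw [show .const _ q.2 + volterra _ = u q from path_eq.symm] at deriv
    simpa [IccExtend] using deriv
  · have deriv := hasDerivWithinAt_IccExtend_const_add_volterra h.2 (pointwiseApply
      (.comp ⟨fderiv ℝ W, hW.continuous_fderiv one_ne_zero⟩ (parametrizedPath (q, u q)))
      (parametrizedPath (h, fderiv ℝ u q h))) hs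
    rw [← fderiv_apply_of_eventually_eq_picard hW (hu.differentiableAt (by simp)) hfix h] at deriv
    rw [fderiv_eval, congrFun (fderiv_eval h) s]
    simpa [IccExtend] using deriv

theorem exists_isSmoothIntegralCurveAt [CompleteSpace D] [CompleteSpace E] (hW : ContDiff ℝ ∞ W)
    {p₀ : D} (hW₀ : ∀ y, W (p₀, y) = 0) (x₀ : E) :
    ∃ γ : D × E → ℝ → E, (∀ s, γ (p₀, x₀) s = x₀) ∧
      (∀ O ∈ 𝓝 x₀, ∀ᶠ q in 𝓝 (p₀, x₀), ∀ s, γ q s ∈ O) ∧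
      ∀ᶠ q in 𝓝 (p₀, x₀), IsSmoothIntegralCurveAt W γ q := by
  obtain ⟨u, u_self, hu⟩ := exists_contDiffAt_eq_picard hW hW₀ x₀
  refine ⟨fun q => IccExtend zero_le_one (u q), fun s => by simp [u_self, IccExtend],
    fun O hO => ?_, ?_⟩
  · obtain ⟨ε, hε, ball_subset⟩ := Metric.mem_nhds_iff.1 hO
    have close := hu.self_of_nhds.1.continuousAt.eventually (Metric.ball_mem_nhds _ hε)
    filter_upwards [close] with q hq s
    rw [u_self] at hq
    exact ball_subset ((ContinuousMap.dist_apply_le_dist (projIcc 0 1 zero_le_one s)).trans_lt hq)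
  · filter_upwards [hu.eventually_nhds] with q hq
    exact isSmoothIntegralCurveAt_IccExtend (hW.of_le (by simp)) hq.self_of_nhds.1
      (hq.mono fun _ h => h.2)

end Flow

section Retraction

universe v

variable {E : Type v} [NormedAddCommGroup E] [NormedSpace ℝ E] {F : Type*} [NormedAddCommGroup F]
  [NormedSpace ℝ F] {β : E → E →L[ℝ] E →L[ℝ] ℝ} {P : E →L[ℝ] F} {A : E → E →L[ℝ] E} {O : Set E}

/-- On `O`, the vector fields `y ↦ A y v` with constant `v` take values in the characteristic
distribution of `β`, have `P`-component `P v`, and annihilate `β` under the Lie derivative. -/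
structure IsCharacteristicLift (β : E → E →L[ℝ] E →L[ℝ] ℝ) (P : E →L[ℝ] F) (A : E → E →L[ℝ] E)
    (O : Set E) : Prop where
  apply_left {y : E} (hy : y ∈ O) (v w : E) : β y (A y v) w = 0
  apply_right {y : E} (hy : y ∈ O) (v w : E) : β y w (A y v) = 0
  map_apply {y : E} (hy : y ∈ O) (v : E) : P (A y v) = P v
  lieDeriv_eq_zero {y : E} (hy : y ∈ O) (v a b : E) :
    fderiv ℝ β y (A y v) a b + β y (fderiv ℝ A y a v) b + β y a (fderiv ℝ A y b v) = 0

theorem eq_of_hasDerivWithinAt_zero {f : ℝ → F}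
    (hf : ∀ s ∈ Icc (0 : ℝ) 1, HasDerivWithinAt f 0 (Icc 0 1) s) : f 1 = f 0 :=
  constant_of_derivWithin_zero (fun s hs => (hf s hs).differentiableWithinAt)
    (fun s hs => (hf s (Ico_subset_Icc_self hs)).derivWithin
      (uniqueDiffOn_Icc zero_lt_one s (Ico_subset_Icc_self hs))) 1 ⟨zero_le_one, le_rfl⟩

theorem hasDerivWithinAt_apply_apply {B : ℝ → E →L[ℝ] E →L[ℝ] ℝ} {B' : E →L[ℝ] E →L[ℝ] ℝ}
    {v w : ℝ → E} {v' w' : E} {S : Set ℝ} {s : ℝ} (hB : HasDerivWithinAt B B' S s)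
    (hv : HasDerivWithinAt v v' S s) (hw : HasDerivWithinAt w w' S s) :
    HasDerivWithinAt (fun s => B s (v s) (w s)) (B' (v s) (w s) + B s v' (w s) + B s (v s) w')
      S s := by
  simpa using (hB.clm_apply hv).clm_apply hw

/-- The time-dependent family `(v, y) ↦ -A y v` of vector fields. -/
def liftField (A : E → E →L[ℝ] E) (p : E × E) : E :=
  -A p.2 p.1

theorem fderiv_liftField_apply (hA : Differentiable ℝ A) (p h : E × E) :
    fderiv ℝ (liftField A) p h = -(fderiv ℝ A p.2 h.2 p.1 + A p.2 h.1) := by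
  have deriv := (((hA p.2).hasFDerivAt.comp p hasFDerivAt_snd).clm_apply hasFDerivAt_fst).neg
  rw [show fderiv ℝ (liftField A) p = _ from deriv.fderiv]
  simp [add_comm]

namespace IsCharacteristicLift

variable {γ : E × E → ℝ → E} {q : E × E}

theorem map_curve_one (hlift : IsCharacteristicLift β P A O)
    (hγ : IsSmoothIntegralCurveAt (liftField A) γ q) (hO : ∀ s, γ q s ∈ O) :
    P (γ q 1) = P q.2 - P q.1 := by
  have constant : P (γ q 1) + (1 : ℝ) • P q.1 = P (γ q 0) + (0 : ℝ) • P q.1 := by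
    refine eq_of_hasDerivWithinAt_zero (f := fun s => P (γ q s) + s • P q.1) fun s hs => ?_
    have deriv := (P.hasFDerivAt.comp_hasDerivWithinAt s (hγ.hasDerivWithinAt hs)).add
      ((hasDerivWithinAt_id s _).smul_const (P q.1))
    have velocity : P (liftField A (q.1, γ q s)) + (1 : ℝ) • P q.1 = 0 := by
      simp [liftField, hlift.map_apply (hO s)]
    exact deriv.congr_deriv velocity
  rw [hγ.apply_zero, one_smul, zero_smul, add_zero] at constant
  exact eq_sub_of_add_eq constant

theorem pullback_curve_one (hlift : IsCharacteristicLift β P A O) (hA : Differentiable ℝ A)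
    (hβ : ∀ y ∈ O, DifferentiableAt ℝ β y)
    (hγ : IsSmoothIntegralCurveAt (liftField A) γ q) (hO : ∀ s, γ q s ∈ O) (h k : E × E) :
    β (γ q 1) (fderiv ℝ (fun q => γ q 1) q h) (fderiv ℝ (fun q => γ q 1) q k) =
      β (γ q 0) (fderiv ℝ (fun q => γ q 0) q h) (fderiv ℝ (fun q => γ q 0) q k) := by
  refine eq_of_hasDerivWithinAt_zero (f := fun s => β (γ q s) (fderiv ℝ (fun q => γ q s) q h)
    (fderiv ℝ (fun q => γ q s) q k)) fun s hs => ?_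
  have deriv_β : HasDerivWithinAt (fun s => β (γ q s)) (fderiv ℝ β (γ q s) _) (Icc 0 1) s :=
    (hβ (γ q s) (hO s)).hasFDerivAt.comp_hasDerivWithinAt (l := β) s (hγ.hasDerivWithinAt hs)
  have deriv := hasDerivWithinAt_apply_apply deriv_β (hγ.hasDerivWithinAt_fderiv hs h)
    (hγ.hasDerivWithinAt_fderiv hs k)
  refine deriv.congr_deriv ?_
  simp only [fderiv_liftField_apply hA, liftField, map_neg, map_add,
    _root_.neg_apply, _root_.add_apply, hlift.apply_left (hO s), hlift.apply_right (hO s)]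
  linarith [hlift.lieDeriv_eq_zero (hO s) q.1 (fderiv ℝ (fun q => γ q s) q h)
    (fderiv ℝ (fun q => γ q s) q k)]

theorem exists_pullback_eq [CompleteSpace E] (hlift : IsCharacteristicLift β P A O)
    (hA : ContDiff ℝ ∞ A) (hβ : ∀ y ∈ O, DifferentiableAt ℝ β y) {x₀ : E} (hO : O ∈ 𝓝 x₀) :
    ∃ Φ : E → E, Φ x₀ = x₀ ∧ ∀ᶠ x in 𝓝 x₀, ContDiffAt ℝ ∞ Φ x ∧
      (∀ h, P (fderiv ℝ Φ x h) = 0) ∧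
      ∀ h k, β x h k = β (Φ x) (fderiv ℝ Φ x h) (fderiv ℝ Φ x k) := by
  have hW : ContDiff ℝ ∞ (liftField A) := ((hA.comp contDiff_snd).clm_apply contDiff_fst).neg
  obtain ⟨γ, γ_self, γ_mem, hγ⟩ := exists_isSmoothIntegralCurveAt
    (W := ⟨liftField A, hW.continuous⟩) hW (p₀ := 0) (by simp [liftField]) x₀
  let diagonal (x : E) : E × E := (x - x₀, x)
  have tendsto_diagonal : Tendsto diagonal (𝓝 x₀) (𝓝 (0, x₀)) :=
    Continuous.tendsto' (by fun_prop) _ _ (by simp [diagonal])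
  refine ⟨fun x => γ (diagonal x) 1, by simp [diagonal, γ_self], ?_⟩
  have map_eq : ∀ᶠ x in 𝓝 x₀, P (γ (diagonal x) 1) = P x₀ := by
    filter_upwards [tendsto_diagonal.eventually hγ, tendsto_diagonal.eventually (γ_mem O hO)]
      with x hx hxO
    rw [hlift.map_curve_one hx hxO, ← map_sub]
    simp [diagonal]
  filter_upwards [tendsto_diagonal.eventually hγ.eventually_nhds,
    tendsto_diagonal.eventually (γ_mem O hO), map_eq.eventually_nhds] with x hx hxO hx_map
  have smooth := hx.self_of_nhds.contDiffAt
  have chain (s : ℝ) (h : E) : fderiv ℝ (fun x => γ (diagonal x) s) x h =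
      fderiv ℝ (fun q => γ q s) (diagonal x) (h, h) :=
    congrArg (fun L => L h) (((smooth s).differentiableAt (by simp)).hasFDerivAt.comp x
      (((hasFDerivAt_id x).sub_const x₀).prodMk (hasFDerivAt_id x))).fderiv
  have deriv_zero (h : E) : fderiv ℝ (fun q => γ q 0) (diagonal x) (h, h) = h := by
    have initial : (fun q => γ q 0) =ᶠ[𝓝 (diagonal x)] Prod.snd := hx.mono fun q hq => hq.apply_zero
    rw [initial.fderiv_eq, fderiv_snd, ContinuousLinearMap.coe_snd']
  have smooth_Φ : ContDiffAt ℝ ∞ (fun x => γ (diagonal x) 1) x :=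
    (smooth 1).comp x (by fun_prop)
  refine ⟨smooth_Φ, fun h => ?_, fun h k => ?_⟩
  · have deriv := P.hasFDerivAt.comp x (smooth_Φ.differentiableAt (by simp)).hasFDerivAt
    have constant := (hasFDerivAt_const (𝕜 := ℝ) (P x₀) x).congr_of_eventuallyEq hx_map
    exact congrArg (fun L => L h) (deriv.unique constant)
  · have pullback := hlift.pullback_curve_one (hA.differentiable (by simp)) hβ hx.self_of_nhds hxO
      (h, h) (k, k)
    rw [deriv_zero, deriv_zero, hx.self_of_nhds.apply_zero] at pullback
    rw [chain, chain, pullback]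

end IsCharacteristicLift

end Retraction

section CharacteristicLift

variable {E F : Type*} [NormedAddCommGroup E] [NormedSpace ℝ E] [FiniteDimensional ℝ E]
  [NormedAddCommGroup F] [NormedSpace ℝ F]

theorem isInvertible_of_injective [FiniteDimensional ℝ F] {f : E →L[ℝ] F}
    (hf : Function.Injective f) (hdim : Module.finrank ℝ E = Module.finrank ℝ F) :
    f.IsInvertible :=
  ⟨(LinearEquiv.ofInjectiveOfFinrankEq (f : E →ₗ[ℝ] F) hf hdim).toContinuousLinearEquiv, rfl⟩

theorem apply_inverse_add_apply {B P : E →L[ℝ] F} (hinv : (B + P).IsInvertible)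
    (hrank : Module.finrank ℝ P.range ≤ Module.finrank ℝ B.ker) (v : E) :
    B ((B + P).inverse (P v)) = 0 ∧ P ((B + P).inverse (P v)) = P v := by
  have add_eq_of_mem_ker {k : E} (hk : k ∈ B.ker) : (B + P) k = P k := by
    have apply_eq : B k = 0 := hk
    rw [_root_.add_apply, apply_eq, zero_add]
  have map_le : B.ker.map (B + P : E →L[ℝ] F).toLinearMap ≤ P.range := by
    rintro _ ⟨k, hk, rfl⟩
    exact ⟨k, (add_eq_of_mem_ker hk).symm⟩
  have map_eq : B.ker.map (B + P : E →L[ℝ] F).toLinearMap = P.range := by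
    obtain ⟨e, he⟩ := hinv
    refine Submodule.eq_of_le_of_finrank_le map_le (hrank.trans_eq ?_)
    rw [← he]
    exact (LinearEquiv.finrank_map_eq e.toLinearEquiv B.ker).symm
  obtain ⟨k, hk, hk_eq⟩ : P v ∈ B.ker.map (B + P : E →L[ℝ] F).toLinearMap :=
    map_eq ▸ ⟨v, rfl⟩
  have inverse_eq : (B + P).inverse (P v) = k := hinv.inverse_apply_eq.2 hk_eq.symm
  rw [inverse_eq]
  exact ⟨hk, (add_eq_of_mem_ker hk).symm.trans hk_eq⟩

theorem exists_contDiff_lift {β : E → E →L[ℝ] F} {U : Set E} (hU : IsOpen U)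
    (hβ : ContDiffOn ℝ ∞ β U) {x₀ : E} (hx₀ : x₀ ∈ U) {P : E →L[ℝ] F}
    (hinv : (β x₀ + P).IsInvertible)
    (hrank : ∀ᶠ x in 𝓝 x₀, Module.finrank ℝ P.range ≤ Module.finrank ℝ (β x).ker) :
    ∃ A : E → E →L[ℝ] E, ContDiff ℝ ∞ A ∧ (∀ x v, β x (A x v) = 0) ∧
      ∀ᶠ x in 𝓝 x₀, ∀ v, P (A x v) = P v := by
  have : CompleteSpace E := FiniteDimensional.complete ℝ E
  have smoothAt {x : E} (hx : x ∈ U) : ContDiffAt ℝ ∞ β x := hβ.contDiffAt (hU.mem_nhds hx)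
  have invertible : ∀ᶠ x in 𝓝 x₀, (β x + P).IsInvertible := by
    have continuousAt : ContinuousAt (fun x => β x + P) x₀ :=
      (smoothAt hx₀).continuousAt.add continuousAt_const
    obtain ⟨e, he⟩ := hinv
    refine continuousAt.eventually ?_
    simp only [← he]
    exact e.nhds
  obtain ⟨W, hW, hW_open, hxW⟩ := _root_.eventually_nhds_iff.1
    ((hU.eventually_mem hx₀).and (invertible.and hrank))
  obtain ⟨χ, hχ, hχ_supp, hχ_one⟩ := exists_contDiff_cutoff (hW_open.mem_nhds hxW)
  refine ⟨fun x => χ x • (β x + P).inverse ∘L P,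
    contDiff_smul_of_tsupport_subset hχ hW_open hχ_supp fun x hx => ?_, fun x v => ?_, ?_⟩
  · have smooth_inverse : ContDiffAt ℝ ∞ (fun x => (β x + P).inverse) x :=
      ContDiffAt.comp (g := ContinuousLinearMap.inverse) x (hW x hx).2.1.contDiffAt_map_inverse
        ((smoothAt (hW x hx).1).add contDiffAt_const)
    exact (smooth_inverse.clm_comp contDiffAt_const).contDiffWithinAt
  · by_cases hx : x ∈ W
    · simp [(apply_inverse_add_apply (hW x hx).2.1 (hW x hx).2.2 v).1]
    · simp [image_eq_zero_of_notMem_tsupport fun h => hx (hχ_supp h)]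
  · filter_upwards [hχ_one, hW_open.mem_nhds hxW] with x hx hxW v
    simp [hx, (apply_inverse_add_apply (hW x hxW).2.1 (hW x hxW).2.2 v).2]

end CharacteristicLift

section MatrixForm

variable {n : ℕ} {α : (Fin n → ℝ) → Matrix (Fin n) (Fin n) ℝ} {U : Set (Fin n → ℝ)}
  {x : Fin n → ℝ}

/-- The bilinear form `(v, w) ↦ vᵀ M w`, as a continuous linear function of the matrix `M`. -/
noncomputable def matrixForm :
    (Fin n → Fin n → ℝ) →L[ℝ] (Fin n → ℝ) →L[ℝ] (Fin n → ℝ) →L[ℝ] ℝ :=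
  LinearMap.toContinuousLinearMap (𝕜 := ℝ) (E := Fin n → Fin n → ℝ)
    (F' := (Fin n → ℝ) →L[ℝ] (Fin n → ℝ) →L[ℝ] ℝ)
    { toFun := fun M => (toBilin' (of M)).toContinuousBilinearMap
      map_add' := fun M N => by ext; simp [← of_add_of]
      map_smul' := fun c M => by ext; simp [← smul_of] }

theorem matrixForm_apply (M : Matrix (Fin n) (Fin n) ℝ) (v w : Fin n → ℝ) :
    matrixForm M v w = v ⬝ᵥ M *ᵥ w :=
  toBilin'_apply' M v w

theorem matrixForm_comm {M : Matrix (Fin n) (Fin n) ℝ} (hM : M.IsSymm) (v w : Fin n → ℝ) :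
    matrixForm M v w = matrixForm M w v := by
  simp only [matrixForm_apply]
  rw [dotProduct_mulVec, ← mulVec_transpose, hM.eq, dotProduct_comm]

theorem matrixForm_eq_zero_iff {M : Matrix (Fin n) (Fin n) ℝ} (hM : M.IsSymm) {v : Fin n → ℝ} :
    matrixForm M v = 0 ↔ M *ᵥ v = 0 := by
  rw [← dotProduct_eq_zero_iff, ContinuousLinearMap.ext_iff]
  refine forall_congr' fun w => ?_
  rw [matrixForm_comm hM, matrixForm_apply, dotProduct_comm, _root_.zero_apply]

theorem finrank_ker_matrixForm {M : Matrix (Fin n) (Fin n) ℝ} (hM : M.IsSymm) :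
    Module.finrank ℝ (matrixForm M).ker = n - M.rank := by
  have ker_eq : (matrixForm M).ker = M.mulVecLin.ker :=
    Submodule.ext fun v => matrixForm_eq_zero_iff hM
  have rank_nullity := M.mulVecLin.finrank_range_add_finrank_ker
  rw [Module.finrank_fin_fun] at rank_nullity
  rw [ker_eq]
  exact Nat.eq_sub_of_add_eq' rank_nullity

theorem finrank_range_matrixForm {M : Matrix (Fin n) (Fin n) ℝ} (hM : M.IsSymm) :
    Module.finrank ℝ (matrixForm M).range = M.rank := by
  have rank_nullity := (matrixForm M).toLinearMap.finrank_range_add_finrank_ker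
  rw [Module.finrank_fin_fun, finrank_ker_matrixForm hM] at rank_nullity
  have := M.rank_le_width
  omega

theorem isInvertible_matrixForm {M : Matrix (Fin n) (Fin n) ℝ} (hM : M.PosDef) :
    (matrixForm M).IsInvertible := by
  refine isInvertible_of_injective ((injective_iff_map_eq_zero (matrixForm M)).2 fun v hv => ?_) ?_
  · by_contra v_ne
    have pos := hM.dotProduct_mulVec_pos v_ne
    rw [star_trivial, ← matrixForm_apply, hv, _root_.zero_apply] at pos
    exact pos.false
  · rw [← LinearMap.toContinuousLinearMap.finrank_eq]
    exact Subspace.dual_finrank_eq.symm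

set_option maxSynthPendingDepth 3 in
theorem contDiffOn_matrixForm (hα : ∀ i j, ContDiffOn ℝ ∞ (fun x => α x i j) U) :
    ContDiffOn ℝ ∞ (fun x => matrixForm (α x)) U := by
  have entries : ContDiffOn ℝ ∞ (fun x i j => α x i j) U :=
    contDiffOn_pi.2 fun i => contDiffOn_pi.2 (hα i)
  exact ContDiff.comp_contDiffOn (g := matrixForm) matrixForm.contDiff entries

set_option maxSynthPendingDepth 3 in
theorem fderiv_matrixForm_apply (hα : ∀ i j, DifferentiableAt ℝ (fun x => α x i j) x)
    (u : Fin n → ℝ) : fderiv ℝ (fun x => matrixForm (α x)) x u =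
      matrixForm (of fun i j => fderiv ℝ (fun x => α x i j) x u) := by
  have entries : HasFDerivAt (fun x i j => α x i j) _ x :=
    hasFDerivAt_pi.2 fun i => hasFDerivAt_pi.2 fun j => (hα i j).hasFDerivAt
  have deriv := HasFDerivAt.comp (g := matrixForm) x matrixForm.hasFDerivAt entries
  exact congrArg (fun L => L u) deriv.fderiv

theorem jacobianWithin_mulVec (hU : IsOpen U) (hx : x ∈ U) {X : (Fin n → ℝ) → Fin n → ℝ}
    (hX : DifferentiableAt ℝ X x) (v : Fin n → ℝ) :
    jacobianWithin U X x *ᵥ v = fderiv ℝ X x v := by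
  have eq_toMatrix : jacobianWithin U X x = LinearMap.toMatrix' (fderiv ℝ X x).toLinearMap := by
    ext i j
    rw [LinearMap.toMatrix'_apply, jacobianWithin, of_apply, fderivWithin_of_isOpen hU hx,
      (hasFDerivAt_pi'.1 hX.hasFDerivAt i).fderiv]
    rfl
  rw [eq_toMatrix, LinearMap.toMatrix'_mulVec]
  rfl

theorem matrixForm_lieDerivMat_apply (hU : IsOpen U) (hx : x ∈ U)
    (hα : ∀ i j, DifferentiableAt ℝ (fun x => α x i j) x) {X : (Fin n → ℝ) → Fin n → ℝ}
    (hX : DifferentiableAt ℝ X x) (v w : Fin n → ℝ) :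
    matrixForm (lieDerivMat U α X x) v w = fderiv ℝ (fun x => matrixForm (α x)) x (X x) v w +
      matrixForm (α x) (fderiv ℝ X x v) w + matrixForm (α x) v (fderiv ℝ X x w) := by
  rw [fderiv_matrixForm_apply hα]
  simp only [matrixForm_apply, lieDerivMat, add_mulVec, dotProduct_add, ← mulVec_mulVec,
    jacobianWithin_mulVec hU hx hX, fderivWithin_of_isOpen hU hx, dotProduct_mulVec,
    vecMul_transpose]

theorem exists_posDef_add {A : Matrix (Fin n) (Fin n) ℝ} (hA : A.PosSemidef) :
    ∃ Q : Matrix (Fin n) (Fin n) ℝ, Q.IsSymm ∧ (A + Q).PosDef ∧ Q.rank = n - A.rank := by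
  have hermitian := hA.isHermitian
  let kernelIndicator (i : Fin n) : ℝ := if hermitian.eigenvalues i = 0 then 1 else 0
  let conjugate := Unitary.conjStarAlgAut ℝ (Matrix (Fin n) (Fin n) ℝ) hermitian.eigenvectorUnitary
  have isUnit : IsUnit (hermitian.eigenvectorUnitary : Matrix (Fin n) (Fin n) ℝ) :=
    Unitary.isUnit_coe
  have isUnit_det := (isUnit_iff_isUnit_det _).1 isUnit
  have isUnit_star_det := (isUnit_iff_isUnit_det _).1 isUnit.star
  have diagonalize : A = conjugate (diagonal hermitian.eigenvalues) := hermitian.spectral_theorem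
  refine ⟨conjugate (diagonal kernelIndicator), ?_, ?_, ?_⟩
  · exact ((isHermitian_diagonal kernelIndicator).isSelfAdjoint.map conjugate)
  · nth_rw 1 [diagonalize]
    rw [← map_add, diagonal_add, Unitary.conjStarAlgAut_apply,
      IsUnit.posDef_star_right_conjugate_iff isUnit, posDef_diagonal_iff]
    intro i
    by_cases hi : hermitian.eigenvalues i = 0
    · simp [kernelIndicator, hi]
    · simpa [kernelIndicator, hi] using (hA.eigenvalues_nonneg i).lt_of_ne' hi
  · rw [Unitary.conjStarAlgAut_apply, rank_mul_eq_left_of_isUnit_det _ _ isUnit_star_det,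
      rank_mul_eq_right_of_isUnit_det _ _ isUnit_det, rank_diagonal,
      hermitian.rank_eq_card_non_zero_eigs]
    simpa [kernelIndicator] using
      Fintype.card_subtype_compl fun i => hermitian.eigenvalues i ≠ 0

end MatrixForm

section ConstantRank

variable {n : ℕ} {α : (Fin n → ℝ) → Matrix (Fin n) (Fin n) ℝ} {U : Set (Fin n → ℝ)}
  {x₀ : Fin n → ℝ}

theorem isCharacteristicLift_matrixForm (hU : IsOpen U)
    (hα : ∀ i j, ContDiffOn ℝ ∞ (fun x => α x i j) U) (hsymm : ∀ x ∈ U, (α x).IsSymm)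
    (hLie : ∀ X : (Fin n → ℝ) → Fin n → ℝ, ContDiffOn ℝ ∞ X U →
      (∀ x ∈ U, α x *ᵥ X x = 0) → ∀ x ∈ U, lieDerivMat U α X x = 0)
    {F : Type*} [NormedAddCommGroup F] [NormedSpace ℝ F] {P : (Fin n → ℝ) →L[ℝ] F}
    {A : (Fin n → ℝ) → (Fin n → ℝ) →L[ℝ] Fin n → ℝ} (hA : ContDiff ℝ ∞ A)
    (hker : ∀ x v, matrixForm (α x) (A x v) = 0) :
    IsCharacteristicLift (fun x => matrixForm (α x)) P A {x ∈ U | ∀ v, P (A x v) = P v} where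
  apply_left _ v w := by rw [hker, _root_.zero_apply]
  apply_right hy v w := by rw [matrixForm_comm (hsymm _ hy.1), hker, _root_.zero_apply]
  map_apply hy := hy.2
  lieDeriv_eq_zero {y} hy v a b := by
    have smooth : ContDiff ℝ ∞ fun x => A x v := hA.clm_apply contDiff_const
    have deriv (c : Fin n → ℝ) : fderiv ℝ (fun x => A x v) y c = fderiv ℝ A y c v := by
      rw [fderiv_clm_apply (hA.differentiable (by simp) y) (differentiableAt_const v)]
      simp
    have lie_eq_zero := hLie (fun x => A x v) smooth.contDiffOn
      (fun x hx => (matrixForm_eq_zero_iff (hsymm x hx)).1 (hker x v)) y hy.1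
    have expand := matrixForm_lieDerivMat_apply hU hy.1
      (fun i j => ((hα i j).contDiffAt (hU.mem_nhds hy.1)).differentiableAt (by simp))
      (smooth.differentiable (by simp) y) a b
    rw [lie_eq_zero, deriv, deriv] at expand
    rw [← expand]
    exact congrArg (fun L => L a b) (map_zero matrixForm)

theorem exists_pullback_add_eq (hU : IsOpen U) (hx₀ : x₀ ∈ U)
    (hα : ∀ i j, ContDiffOn ℝ ∞ (fun x => α x i j) U) (hsymm : ∀ x ∈ U, (α x).IsSymm)
    (hpos : (α x₀).PosSemidef) (hrank : ∀ᶠ x in 𝓝 x₀, (α x).rank ≤ (α x₀).rank)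
    (hLie : ∀ X : (Fin n → ℝ) → Fin n → ℝ, ContDiffOn ℝ ∞ X U →
      (∀ x ∈ U, α x *ᵥ X x = 0) → ∀ x ∈ U, lieDerivMat U α X x = 0) :
    ∃ (Q : Matrix (Fin n) (Fin n) ℝ) (Φ : (Fin n → ℝ) → Fin n → ℝ),
      Q.IsSymm ∧ (α x₀ + Q).PosDef ∧ Φ x₀ = x₀ ∧ ∀ᶠ x in 𝓝 x₀, ContDiffAt ℝ ∞ Φ x ∧
        ∀ v w, v ⬝ᵥ α x *ᵥ w = fderiv ℝ Φ x v ⬝ᵥ (α (Φ x) + Q) *ᵥ fderiv ℝ Φ x w := by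
  obtain ⟨Q, hQ, hpos_add, hQ_rank⟩ := exists_posDef_add hpos
  have smooth : ContDiffOn ℝ ∞ (fun x => matrixForm (α x)) U := contDiffOn_matrixForm hα
  have invertible : (matrixForm (α x₀) + matrixForm Q).IsInvertible := by
    have map_add_eq : matrixForm (α x₀ + Q) = matrixForm (α x₀) + matrixForm Q :=
      map_add matrixForm _ _
    exact map_add_eq ▸ isInvertible_matrixForm hpos_add
  have complementary : ∀ᶠ x in 𝓝 x₀, Module.finrank ℝ (matrixForm Q).range ≤
      Module.finrank ℝ (matrixForm (α x)).ker := by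
    filter_upwards [hrank, hU.mem_nhds hx₀] with x hx hxU
    rw [finrank_range_matrixForm hQ, finrank_ker_matrixForm (hsymm x hxU), hQ_rank]
    exact Nat.sub_le_sub_left hx n
  obtain ⟨A, hA, hker, hlift⟩ := exists_contDiff_lift hU smooth hx₀ invertible complementary
  obtain ⟨Φ, Φ_self, hΦ⟩ :=
    (isCharacteristicLift_matrixForm hU hα hsymm hLie hA hker).exists_pullback_eq hA
      (fun y hy => (smooth.contDiffAt (hU.mem_nhds hy.1)).differentiableAt (by simp))
      ((hU.eventually_mem hx₀).and hlift)
  refine ⟨Q, Φ, hQ, hpos_add, Φ_self, hΦ.mono fun x hx => ⟨hx.1, fun v w => ?_⟩⟩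
  have killed : fderiv ℝ Φ x v ⬝ᵥ Q *ᵥ fderiv ℝ Φ x w = 0 := by
    rw [← matrixForm_apply, hx.2.1, _root_.zero_apply]
  rw [add_mulVec, dotProduct_add, killed, add_zero, ← matrixForm_apply, ← matrixForm_apply, hx.2.2]

end ConstantRank

end KernelPrimitive

open KernelPrimitive Filter
open scoped Topology

/-- **Theorem 2 (local sufficiency, in the local model).**
Let `U ⊆ ℝⁿ` be open and `α : U → Sym(n,ℝ)` smooth with: (i) `α(x)` positive
semi-definite for all `x ∈ U`; (ii) locally constant rank; (iii) `L_X α = 0` for every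
smooth vector field `X` taking values in the characteristic distribution of `α`.
Then every `x₀ ∈ U` has an open neighborhood `V ⊆ U` on which `α` admits a reproducing
kernel primitive: there are finitely many smooth functions `φ₁, …, φ_M` on `V` with
`α = ∑ᵢ ∇φᵢ ∇φᵢᵀ` on `V`. -/
theorem exists_local_reproducing_kernel_primitive {n : ℕ}
    (U : Set (Fin n → ℝ)) (hU : IsOpen U)
    (α : (Fin n → ℝ) → Matrix (Fin n) (Fin n) ℝ)
    (hαsmooth : ∀ i j, ContDiffOn ℝ (⊤ : ℕ∞) (fun x => α x i j) U)
    (hPSD : ∀ x ∈ U, (α x).PosSemidef)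
    (hrank : ∀ x ∈ U, ∃ W : Set (Fin n → ℝ), IsOpen W ∧ x ∈ W ∧
      ∀ y ∈ W ∩ U, (α y).rank = (α x).rank)
    (hLie : ∀ X : (Fin n → ℝ) → (Fin n → ℝ), ContDiffOn ℝ (⊤ : ℕ∞) X U →
      (∀ x ∈ U, (α x).mulVec (X x) = 0) →
      ∀ x ∈ U, lieDerivMat U α X x = 0) :
    ∀ x₀ ∈ U, ∃ V : Set (Fin n → ℝ), IsOpen V ∧ x₀ ∈ V ∧ V ⊆ U ∧
      ∃ (M : ℕ) (φ : Fin M → (Fin n → ℝ) → ℝ),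
        (∀ i, ContDiffOn ℝ (⊤ : ℕ∞) (φ i) V) ∧
        ∀ x ∈ V, ∀ a b : Fin n,
          α x a b = ∑ i, fderivWithin ℝ (φ i) V x (Pi.single a 1) *
            fderivWithin ℝ (φ i) V x (Pi.single b 1) := by
  intro x₀ hx₀
  have hsymm (x : Fin n → ℝ) (hx : x ∈ U) : (α x).IsSymm := (hPSD x hx).isHermitian
  have rank_le : ∀ᶠ x in 𝓝 x₀, (α x).rank ≤ (α x₀).rank := by
    obtain ⟨W, hW, hxW, hrank_eq⟩ := hrank x₀ hx₀
    filter_upwards [(hW.inter hU).mem_nhds ⟨hxW, hx₀⟩] with x hx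
    exact (hrank_eq x hx).le
  obtain ⟨Q, Φ, hQ, hpos, Φ_self, hΦ⟩ :=
    exists_pullback_add_eq hU hx₀ hαsmooth hsymm (hPSD x₀ hx₀) rank_le hLie
  have primitive_add : HasLocalPrimitive (fun x v w => v ⬝ᵥ (α x + Q) *ᵥ w) (Φ x₀) := by
    rw [Φ_self]
    exact hasLocalPrimitive_of_posDef hU hx₀ (fun i j => (hαsmooth i j).add contDiffOn_const)
      (fun x hx => (hsymm x hx).add hQ) hpos
  have primitive : HasLocalPrimitive (fun x v w => v ⬝ᵥ α x *ᵥ w) x₀ :=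
    (primitive_add.pullback (hΦ.mono fun _ hx => hx.1)).congr (hΦ.mono fun _ hx => hx.2)
  obtain ⟨V, hV, hxV, hVU, M, φ, hφ, hφ_eq⟩ := primitive.exists_isOpen (hU.mem_nhds hx₀)
  refine ⟨V, hV, hxV, hVU, M, φ, hφ, fun x hx a b => ?_⟩
  rw [← hφ_eq x hx, mulVec_single_one, single_one_dotProduct, col_apply]
end
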